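/- arXiv:math/0603636 — 6 statements merged into one kernel-verified Lean document; each statement's English description precedes it below -/
import Mathlib

section
/- Let α ∈ (0,1/2), let f ∈ Λ^α_T with representative φ_f, and let g : [0,T] → ℝ be Hölder continuous with exponent β > α. Then the function s ↦ g(s)φ_f(s) + (α s^α / Γ(1-α)) ∫_s^T u^{-α} f(u) (g(s) - g(u)) (u-s)^{-1-α} du belongs to L²([0,T]) and is the representative φ_{gf} of g·f ∈ Λ^α_T. -/
open MeasureTheory Real Set

/-- The right-sided fractional integral of order `α` on `[0,T]`. -/
noncomputable def fracInt (T α : ℝ) (f : ℝ → ℝ) (x : ℝ) : ℝ :=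
  (1 / Real.Gamma α) * ∫ u in Set.Ioo x T, f u * (u - x) ^ (α - 1)

/-- `f ∈ Λ^α_T` with representative `φ`. -/
def memLambda (T α : ℝ) (f φ : ℝ → ℝ) : Prop :=
  MemLp φ 2 (volume.restrict (Set.Icc 0 T)) ∧
  ∀ᵐ u ∂(volume.restrict (Set.Icc 0 T)),
    f u = u ^ α * fracInt T α (fun s => s ^ (-α) * φ s) u

/-!
Write `κ_a(t) = t₊ ^ (a - 1) / Γ(a)`, `I_a` for the Weyl integral with kernel `κ_a`, and `ψ` for
`s ^ (-α) φ(s)` extended by zero outside `(0, T)`, so that `f = u ^ α I_α ψ`. Since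
`α / Γ(1 - α) = -1 / Γ(-α)`, the integral in the new representative is `s ^ α` times the commutator
`[D_α, g] (I_α ψ)`, where the fractional derivative `D_α` has the non-integrable kernel `κ_{-α}`,
made integrable by the Hölder continuity of `g`. Because `D_α I_α ψ = ψ`, the claim amounts to
`I_α (g ψ + [D_α, g] (I_α ψ)) = g I_α ψ`. As `I_{1-α}` is injective and `I_{1-α} I_α = I_1`, this is
`I_1 (g ψ + [D_α, g] (I_α ψ)) = I_{1-α} (g I_α ψ)`, and by Fubini only the case where `ψ` is a point
mass at `r` remains. There `u = r - μ (r - s)` turns the commutator into a superposition of scaled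
differences `(H(μ d) - H(d)) / d`, with `H(d) = g(r - d) - g(r)`, whose integrals collapse as in
Frullani's theorem.

Square integrability comes from `|[D_α, g] (I_α ψ)| ≤ C I_β |ψ|`: since `s ^ α ≤ r ^ α` for `s ≤ r`,
multiplying by `s ^ α` turns the right-hand side into at most `C I_β |φ|`.
-/

open ProbabilityTheory
open scoped NNReal

/-- The kernel `t₊ ^ (a - 1) / Γ(a)` of the fractional integral of order `a`; for `-1 < a < 0` it is
the (non-integrable) kernel of the fractional derivative of order `-a`. -/
noncomputable def fracKernel (a t : ℝ) : ℝ :=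
  if 0 < t then t ^ (a - 1) / Real.Gamma a else 0

theorem fracKernel_of_pos {a t : ℝ} (ht : 0 < t) : fracKernel a t = t ^ (a - 1) / Real.Gamma a :=
  if_pos ht

theorem fracKernel_of_nonpos {a t : ℝ} (ht : t ≤ 0) : fracKernel a t = 0 :=
  if_neg ht.not_gt

theorem fracKernel_nonneg {a : ℝ} (ha : 0 < a) (t : ℝ) : 0 ≤ fracKernel a t := by
  have := Gamma_pos_of_pos ha
  unfold fracKernel
  split_ifs <;> positivity

theorem fracKernel_one (t : ℝ) : fracKernel 1 t = (Ioi 0).indicator 1 t := by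
  simp [fracKernel, indicator_apply]

@[fun_prop]
theorem measurable_fracKernel (a : ℝ) : Measurable (fracKernel a) :=
  Measurable.ite measurableSet_Ioi (by fun_prop) measurable_const

theorem monotone_fracKernel {a : ℝ} (ha : 1 ≤ a) : Monotone (fracKernel a) := fun t t' h ↦ by
  have ha' := zero_lt_one.trans_le ha
  rcases le_or_gt t 0 with ht | ht
  · exact (fracKernel_of_nonpos ht).trans_le (fracKernel_nonneg ha' _)
  · have := Gamma_pos_of_pos ha'
    rw [fracKernel_of_pos ht, fracKernel_of_pos (ht.trans_le h)]
    gcongr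

theorem fracKernel_mul {a d : ℝ} (hd : 0 < d) (t : ℝ) :
    fracKernel a (d * t) = d ^ (a - 1) * fracKernel a t := by
  by_cases ht : 0 < t
  · rw [fracKernel_of_pos ht, fracKernel_of_pos (mul_pos hd ht), mul_rpow hd.le ht.le,
      mul_div_assoc]
  · rw [fracKernel_of_nonpos (not_lt.1 ht), mul_zero,
      fracKernel_of_nonpos (mul_nonpos_of_nonneg_of_nonpos hd.le (not_lt.1 ht))]

theorem fracKernel_mul_abs_rpow {a c : ℝ} (hac : 0 < a + c) (t : ℝ) :
    fracKernel a t * |t| ^ c = Real.Gamma (a + c) / Real.Gamma a * fracKernel (a + c) t := by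
  rcases le_or_gt t 0 with ht | ht
  · simp [fracKernel_of_nonpos ht]
  · have := (Gamma_pos_of_pos hac).ne'
    rw [fracKernel_of_pos ht, fracKernel_of_pos ht, abs_of_pos ht, add_sub_right_comm,
      rpow_add ht]
    field_simp

theorem fracKernel_mul_fracKernel_eq_zero {a b x r s : ℝ} (hs : s ∉ Ioo x r) :
    fracKernel a (r - s) * fracKernel b (s - x) = 0 := by
  by_cases hx : x < s
  · rw [fracKernel_of_nonpos (sub_nonpos.2 (not_lt.1 fun hr ↦ hs ⟨hx, hr⟩)), zero_mul]
  · rw [fracKernel_of_nonpos (sub_nonpos.2 (not_lt.1 hx)), mul_zero]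

section Beta

variable {a b : ℝ} (ha : 0 < a) (hb : 0 < b)
include ha hb

theorem betaPDFReal_nonneg (t : ℝ) : 0 ≤ betaPDFReal a b t := by
  have := beta_pos ha hb
  unfold betaPDFReal
  split_ifs with h
  · have := h.1
    have := sub_pos.2 h.2
    positivity
  · rfl

theorem integrable_betaPDFReal : Integrable (betaPDFReal a b) := by
  refine ⟨(measurable_betaPDFReal a b).aestronglyMeasurable, ?_⟩
  rw [hasFiniteIntegral_iff_ofReal (ae_of_all _ (betaPDFReal_nonneg ha hb))]
  exact (lintegral_betaPDF_eq_one ha hb).trans_lt ENNReal.one_lt_top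

theorem integral_betaPDFReal : ∫ t, betaPDFReal a b t = 1 := by
  rw [integral_eq_lintegral_of_nonneg_ae (ae_of_all _ (betaPDFReal_nonneg ha hb))
    (measurable_betaPDFReal a b).aestronglyMeasurable]
  exact congrArg ENNReal.toReal (lintegral_betaPDF_eq_one ha hb)

theorem fracKernel_one_sub_mul_fracKernel (t : ℝ) :
    fracKernel a (1 - t) * fracKernel b t = (Real.Gamma (a + b))⁻¹ * betaPDFReal b a t := by
  have hab := (Gamma_pos_of_pos (add_pos ha hb)).ne'
  by_cases h : 0 < t ∧ t < 1
  · rw [betaPDFReal, if_pos h, fracKernel_of_pos h.1, fracKernel_of_pos (sub_pos.2 h.2), beta,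
      add_comm b a]
    field_simp
  · rw [betaPDFReal, if_neg h, mul_zero]
    simpa using fracKernel_mul_fracKernel_eq_zero (x := 0) (r := 1) (s := t) h

omit ha hb in
theorem fracKernel_sub_mul_fracKernel_sub {x r : ℝ} (hxr : x < r) (s : ℝ) :
    fracKernel a (r - s) * fracKernel b (s - x) = (r - x) ^ (a + b - 2) *
      (fracKernel a (1 - (r - x)⁻¹ * (s - x)) * fracKernel b ((r - x)⁻¹ * (s - x))) := by
  have hd := sub_pos.2 hxr
  have hr : r - s = (r - x) * (1 - (r - x)⁻¹ * (s - x)) := by field_simp; ring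
  have hs : s - x = (r - x) * ((r - x)⁻¹ * (s - x)) := by field_simp
  rw [hr, hs, fracKernel_mul hd, fracKernel_mul hd, ← hs, mul_mul_mul_comm, ← rpow_add hd]
  ring_nf

theorem integrable_fracKernel_mul_fracKernel (x r : ℝ) :
    Integrable fun s ↦ fracKernel a (r - s) * fracKernel b (s - x) := by
  rcases lt_or_ge x r with hxr | hrx
  · simp only [fracKernel_sub_mul_fracKernel_sub hxr, fracKernel_one_sub_mul_fracKernel ha hb]
    exact ((((integrable_betaPDFReal hb ha).comp_mul_left'
      (inv_ne_zero (sub_pos.2 hxr).ne')).comp_sub_right x).const_mul _).const_mul _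
  · simp [fracKernel_mul_fracKernel_eq_zero, Ioo_eq_empty hrx.not_gt]

theorem integral_fracKernel_mul_fracKernel (x r : ℝ) :
    ∫ s, fracKernel a (r - s) * fracKernel b (s - x) = fracKernel (a + b) (r - x) := by
  rcases lt_or_ge x r with hxr | hrx
  · have hd := sub_pos.2 hxr
    simp only [fracKernel_sub_mul_fracKernel_sub hxr, fracKernel_one_sub_mul_fracKernel ha hb,
      integral_const_mul]
    rw [integral_sub_right_eq_self fun s ↦ betaPDFReal b a ((r - x)⁻¹ * s),
      Measure.integral_comp_mul_left, integral_betaPDFReal hb ha, fracKernel_of_pos hd, inv_inv,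
      abs_of_pos hd, smul_eq_mul, ← sub_add_cancel (a + b - 1) 1, rpow_add_one hd.ne']
    ring_nf
  · simp [fracKernel_mul_fracKernel_eq_zero, Ioo_eq_empty hrx.not_gt,
      fracKernel_of_nonpos (sub_nonpos.2 hrx)]

theorem integrable_continuous_mul_fracKernel_mul_fracKernel {G : ℝ → ℝ} (hG : Continuous G)
    (x r : ℝ) : Integrable fun s ↦ G s * (fracKernel a (r - s) * fracKernel b (s - x)) := by
  refine (integrableOn_iff_integrable_of_support_subset (s := Icc x r) fun s hs ↦ ?_).1
    ((integrable_fracKernel_mul_fracKernel ha hb x r).integrableOn.continuousOn_mul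
      hG.continuousOn isCompact_Icc)
  by_contra hmem
  refine hs (mul_eq_zero_of_right _ (fracKernel_mul_fracKernel_eq_zero fun h ↦ hmem ?_))
  exact Ioo_subset_Icc_self h

end Beta

theorem integrable_prod_mul_of_integral_norm_le {X Y : Type*} [MeasurableSpace X]
    [MeasurableSpace Y] {μ : Measure X} {ν : Measure Y} [SFinite μ] [SFinite ν] {ψ m : Y → ℝ}
    {k : X → Y → ℝ} (hψ : AEStronglyMeasurable ψ ν)
    (hk : AEStronglyMeasurable (Function.uncurry k) (μ.prod ν))
    (hki : ∀ᵐ y ∂ν, Integrable (fun x ↦ k x y) μ) (hkm : ∀ᵐ y ∂ν, ∫ x, ‖k x y‖ ∂μ ≤ m y)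
    (hm : Integrable (fun y ↦ ψ y * m y) ν) :
    Integrable (fun p : X × Y ↦ ψ p.2 * k p.1 p.2) (μ.prod ν) := by
  have hmeas : AEStronglyMeasurable (fun p : X × Y ↦ ψ p.2 * k p.1 p.2) (μ.prod ν) :=
    hψ.comp_snd.mul hk
  refine (integrable_prod_iff' hmeas).2 ⟨?_, hm.mono hmeas.norm.prod_swap.integral_prod_right' ?_⟩
  · filter_upwards [hki] with y hy using hy.const_mul _
  · filter_upwards [hkm] with y hy
    simp only [norm_mul, integral_const_mul]
    rw [norm_norm, norm_of_nonneg (integral_nonneg fun _ ↦ norm_nonneg _)]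
    exact mul_le_mul_of_nonneg_left (hy.trans (le_abs_self _)) (norm_nonneg _)

/-- The right-sided fractional integral of order `a` on the whole line (Weyl's fractional
integral). -/
noncomputable def weylInt (a : ℝ) (ψ : ℝ → ℝ) (x : ℝ) : ℝ :=
  ∫ r, ψ r * fracKernel a (r - x)

section WeylInt

variable {a b x T : ℝ} {ψ : ℝ → ℝ}

theorem weylInt_eq_zero_of_le (hT : ∀ r, T ≤ r → ψ r = 0) (hx : T ≤ x) : weylInt a ψ x = 0 := by
  refine integral_eq_zero_of_ae (ae_of_all _ fun r ↦ ?_)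
  rcases le_or_gt T r with hr | hr
  · simp [hT r hr]
  · simp [fracKernel_of_nonpos (sub_nonpos.2 (hr.le.trans hx))]

theorem weylInt_congr {χ : ℝ → ℝ} (h : EqOn ψ χ (Ioi x)) : weylInt a ψ x = weylInt a χ x := by
  refine integral_congr_ae (ae_of_all _ fun r ↦ ?_)
  rcases le_or_gt r x with hrx | hxr
  · simp [fracKernel_of_nonpos (sub_nonpos.2 hrx)]
  · simp only [h hxr]

theorem mul_fracKernel_one_sub_eq_indicator (ψ : ℝ → ℝ) (x : ℝ) :
    (fun r ↦ ψ r * fracKernel 1 (r - x)) = (Ioi x).indicator ψ := by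
  ext r
  simp [fracKernel_one, indicator_apply]

theorem weylInt_one (ψ : ℝ → ℝ) (x : ℝ) : weylInt 1 ψ x = ∫ r in Ioi x, ψ r := by
  rw [weylInt, mul_fracKernel_one_sub_eq_indicator, integral_indicator measurableSet_Ioi]

theorem integrable_mul_fracKernel_one_iff :
    Integrable (fun r ↦ ψ r * fracKernel 1 (r - x)) ↔ IntegrableOn ψ (Ioi x) := by
  rw [mul_fracKernel_one_sub_eq_indicator, integrable_indicator_iff measurableSet_Ioi]

theorem integrable_mul_fracKernel (hψ : LocallyIntegrable ψ) (hT : ∀ r, T ≤ r → ψ r = 0)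
    (hb : 1 ≤ b) (x : ℝ) : Integrable fun r ↦ ψ r * fracKernel b (r - x) := by
  have hint : Integrable ((Icc x T).indicator ψ) :=
    (hψ.integrableOn_isCompact isCompact_Icc).integrable_indicator measurableSet_Icc
  have hmeas : Measurable fun r ↦ fracKernel b (r - x) := by fun_prop
  refine (hint.norm.mul_const (fracKernel b (T - x))).mono'
    (hψ.aestronglyMeasurable.mul hmeas.aestronglyMeasurable) (ae_of_all _ fun r ↦ ?_)
  have hb' := zero_lt_one.trans_le hb
  rw [norm_mul, norm_of_nonneg (fracKernel_nonneg hb' _)]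
  by_cases hr : r ∈ Icc x T
  · rw [indicator_of_mem hr]
    gcongr
    exact monotone_fracKernel hb (sub_le_sub_right hr.2 x)
  · have hzero : ‖ψ r‖ * fracKernel b (r - x) = 0 := by
      rcases le_or_gt r x with h | h
      · rw [fracKernel_of_nonpos (sub_nonpos.2 h), mul_zero]
      · rw [hT r (not_le.1 fun h' ↦ hr ⟨h.le, h'⟩).le, norm_zero, zero_mul]
    rw [hzero]
    exact mul_nonneg (norm_nonneg _) (fracKernel_nonneg hb' _)

theorem integrable_prod_mul_fracKernel_mul_fracKernel (ha : 0 < a) (hb : 0 < b)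
    (hψ : AEStronglyMeasurable ψ) (hint : Integrable fun r ↦ ψ r * fracKernel (a + b) (r - x)) :
    Integrable fun p : ℝ × ℝ ↦ ψ p.2 * (fracKernel a (p.2 - p.1) * fracKernel b (p.1 - x)) := by
  refine integrable_prod_mul_of_integral_norm_le
    (k := fun s r ↦ fracKernel a (r - s) * fracKernel b (s - x)) hψ (by fun_prop)
    (ae_of_all _ fun r ↦ integrable_fracKernel_mul_fracKernel ha hb x r)
    (ae_of_all _ fun r ↦ ?_) hint
  simp only [norm_of_nonneg (mul_nonneg (fracKernel_nonneg ha _) (fracKernel_nonneg hb _))]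
  exact (integral_fracKernel_mul_fracKernel ha hb x r).le

theorem integrable_weylInt_mul_fracKernel (ha : 0 < a) (hb : 0 < b)
    (hψ : AEStronglyMeasurable ψ) (hint : Integrable fun r ↦ ψ r * fracKernel (a + b) (r - x)) :
    Integrable fun s ↦ weylInt a ψ s * fracKernel b (s - x) := by
  simpa only [weylInt, ← integral_mul_const, mul_assoc] using
    (integrable_prod_mul_fracKernel_mul_fracKernel ha hb hψ hint).integral_prod_left

theorem weylInt_weylInt (ha : 0 < a) (hb : 0 < b)
    (hψ : AEStronglyMeasurable ψ) (hint : Integrable fun r ↦ ψ r * fracKernel (a + b) (r - x)) :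
    weylInt b (weylInt a ψ) x = weylInt (a + b) ψ x := by
  simp only [weylInt, ← integral_mul_const, mul_assoc]
  rw [integral_integral_swap (integrable_prod_mul_fracKernel_mul_fracKernel ha hb hψ hint)]
  simp only [integral_const_mul, integral_fracKernel_mul_fracKernel ha hb]

theorem ae_integrable_mul_fracKernel (hψ : LocallyIntegrable ψ) (hT : ∀ r, T ≤ r → ψ r = 0)
    (ha : 0 < a) : ∀ᵐ s, Integrable fun r ↦ ψ r * fracKernel a (r - s) := by
  have hslice (n : ℕ) := (integrable_prod_mul_fracKernel_mul_fracKernel ha one_pos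
    hψ.aestronglyMeasurable (integrable_mul_fracKernel hψ hT (by linarith) (-n))).prod_right_ae
  filter_upwards [ae_all_iff.2 hslice] with s hs
  obtain ⟨n, hn⟩ := exists_nat_gt (-s)
  have hmem : s - -n ∈ Ioi (0 : ℝ) := mem_Ioi.2 (by linarith)
  simpa only [fracKernel_one, indicator_of_mem hmem, Pi.one_apply, mul_one] using hs n

theorem locallyIntegrable_of_integrableOn_Ioi (h : ∀ x, IntegrableOn ψ (Ioi x)) :
    LocallyIntegrable ψ := fun x ↦
  ⟨Ioi (x - 1), Ioi_mem_nhds (sub_one_lt x), h (x - 1)⟩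

theorem locallyIntegrable_weylInt (hψ : LocallyIntegrable ψ) (hT : ∀ r, T ≤ r → ψ r = 0)
    (ha : 0 < a) : LocallyIntegrable (weylInt a ψ) :=
  locallyIntegrable_of_integrableOn_Ioi fun x ↦ integrable_mul_fracKernel_one_iff.1 <|
    integrable_weylInt_mul_fracKernel ha one_pos hψ.aestronglyMeasurable
      (integrable_mul_fracKernel hψ hT (by linarith) x)

theorem integrableOn_Ioi_of_locallyIntegrable (hψ : LocallyIntegrable ψ)
    (hT : ∀ r, T ≤ r → ψ r = 0) (x : ℝ) : IntegrableOn ψ (Ioi x) :=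
  integrable_mul_fracKernel_one_iff.1 (integrable_mul_fracKernel hψ hT le_rfl x)

theorem ae_eq_zero_of_integral_Ioi_eq_zero (hψ : ∀ x, IntegrableOn ψ (Ioi x))
    (h : ∀ x, ∫ r in Ioi x, ψ r = 0) : ψ =ᵐ[volume] 0 := by
  have hloc := locallyIntegrable_of_integrableOn_Ioi hψ
  filter_upwards [LocallyIntegrable.ae_hasDerivAt_integral hloc] with x hx
  have hzero (y : ℝ) : ∫ t in (0 : ℝ)..y, ψ t = 0 := by
    rw [← intervalIntegral.integral_Ioi_sub_Ioi' (hψ 0) (hψ y), h, h, sub_zero]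
  have hderiv := hx 0
  simp only [hzero] at hderiv
  exact hderiv.unique (hasDerivAt_const x 0)

theorem weylInt_one_sub_weylInt (ha : a ∈ Ioo 0 1) (hψ : ∀ x, IntegrableOn ψ (Ioi x)) :
    weylInt (1 - a) (weylInt a ψ) x = ∫ r in Ioi x, ψ r := by
  rw [weylInt_weylInt ha.1 (sub_pos.2 ha.2)
    (locallyIntegrable_of_integrableOn_Ioi hψ).aestronglyMeasurable, add_sub_cancel, weylInt_one]
  simpa only [add_sub_cancel, integrable_mul_fracKernel_one_iff] using hψ x

theorem ae_eq_of_weylInt_eq {χ : ℝ → ℝ} (ha : a ∈ Ioo 0 1) (hψ : ∀ x, IntegrableOn ψ (Ioi x))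
    (hχ : ∀ x, IntegrableOn χ (Ioi x)) (h : ∀ x, weylInt a ψ x = weylInt a χ x) :
    ψ =ᵐ[volume] χ := by
  refine (sub_ae_eq_zero _ _).1 (ae_eq_zero_of_integral_Ioi_eq_zero (fun x ↦ (hψ x).sub (hχ x))
    fun x ↦ ?_)
  rw [integral_sub' (hψ x) (hχ x), ← weylInt_one_sub_weylInt ha hψ, ← weylInt_one_sub_weylInt ha hχ,
    funext h, sub_self]

end WeylInt

theorem integral_mul_comp_mul_left_sub {F : ℝ → ℝ} {L μ : ℝ} (hL : 0 ≤ L)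
    (hF : IntervalIntegrable F volume 0 L) (hμ : μ ∈ Ioo 0 1) :
    ∫ d in 0..L, (μ * F (μ * d) - F d) = -∫ d in μ * L..L, F d := by
  have hmem : μ * L ∈ uIcc 0 L := by
    rw [uIcc_of_le hL]
    exact ⟨mul_nonneg hμ.1.le hL, mul_le_of_le_one_left hL hμ.2.le⟩
  have hleft : IntervalIntegrable F volume 0 (μ * L) :=
    hF.mono_set (uIcc_subset_uIcc left_mem_uIcc hmem)
  have hright : IntervalIntegrable F volume (μ * L) L :=
    hF.mono_set (uIcc_subset_uIcc hmem right_mem_uIcc)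
  have hscale : IntervalIntegrable (fun d ↦ μ * F (μ * d)) volume 0 L := by
    simpa [hμ.1.ne'] using (hleft.comp_mul_left (c := μ)).const_mul μ
  rw [intervalIntegral.integral_sub hscale hF, intervalIntegral.integral_const_mul,
    intervalIntegral.mul_integral_comp_mul_left, mul_zero,
    ← intervalIntegral.integral_add_adjacent_intervals hleft hright]
  ring

section DerivativeKernel

variable {a : ℝ} (ha : a ∈ Ioo 0 1)
include ha

theorem Gamma_one_sub_eq : Real.Gamma (1 - a) = -a * Real.Gamma (-a) := by
  rw [sub_eq_neg_add, Gamma_add_one (neg_ne_zero.2 ha.1.ne')]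

theorem Gamma_neg_lt_zero : Real.Gamma (-a) < 0 := by
  have h := Gamma_pos_of_pos (sub_pos.2 ha.2)
  rw [Gamma_one_sub_eq ha] at h
  nlinarith [ha.1]

theorem fracKernel_mul_fracKernel_neg_nonpos (μ : ℝ) :
    fracKernel a μ * fracKernel (-a) (1 - μ) ≤ 0 := by
  refine mul_nonpos_of_nonneg_of_nonpos (fracKernel_nonneg ha.1 _) ?_
  rcases le_or_gt (1 - μ) 0 with h | h
  · rw [fracKernel_of_nonpos h]
  · rw [fracKernel_of_pos h]
    exact div_nonpos_of_nonneg_of_nonpos (rpow_nonneg h.le _) (Gamma_neg_lt_zero ha).le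

omit ha in
theorem mul_fracKernel_mul_fracKernel_one_sub {y : ℝ} (ha : a ≠ 0) (hy : y ∈ Ico 0 1) :
    y * (fracKernel a y * fracKernel (1 - a) (1 - y)) =
      y ^ a * (1 - y) ^ (-a) / (Real.Gamma a * Real.Gamma (1 - a)) := by
  rcases hy.1.eq_or_lt with rfl | hpos
  · simp [ha]
  · rw [fracKernel_of_pos hpos, fracKernel_of_pos (sub_pos.2 hy.2), sub_sub_cancel_left,
      rpow_sub_one hpos.ne']
    field_simp

theorem hasDerivAt_mul_fracKernel_mul_fracKernel {y : ℝ} (hy : y ∈ Ioo 0 1) :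
    HasDerivAt (fun y ↦ y * (fracKernel a y * fracKernel (1 - a) (1 - y)))
      (-(fracKernel a y * fracKernel (-a) (1 - y))) y := by
  have hpos := hy.1
  have hpos' := sub_pos.2 hy.2
  have hΓ := (Gamma_neg_lt_zero ha).ne
  have hΓ' := (Gamma_pos_of_pos ha.1).ne'
  have ha' := ha.1.ne'
  have hquot : HasDerivAt
      (fun y ↦ y ^ a * (1 - y) ^ (-a) / (Real.Gamma a * Real.Gamma (1 - a))) _ y :=
    ((hasDerivAt_rpow_const (Or.inl hpos.ne')).mul
      (((hasDerivAt_id' y).const_sub 1).rpow_const (p := -a) (Or.inl hpos'.ne'))).div_const _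
  refine (hquot.congr_of_eventuallyEq ?_).congr_deriv ?_
  · filter_upwards [Ioo_mem_nhds hy.1 hy.2] with z hz
    exact mul_fracKernel_mul_fracKernel_one_sub ha' ⟨hz.1.le, hz.2⟩
  · rw [fracKernel_of_pos hpos, fracKernel_of_pos hpos', Gamma_one_sub_eq ha,
      rpow_sub_one hpos.ne', rpow_sub_one hpos'.ne']
    field_simp
    ring

theorem continuousOn_mul_fracKernel_mul_fracKernel {y : ℝ} (hy : y < 1) :
    ContinuousOn (fun y ↦ y * (fracKernel a y * fracKernel (1 - a) (1 - y))) (Icc 0 y) := by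
  refine ContinuousOn.congr ?_ fun z hz ↦
    mul_fracKernel_mul_fracKernel_one_sub ha.1.ne' ⟨hz.1, hz.2.trans_lt hy⟩
  refine ((continuousOn_id.rpow_const fun _ _ ↦ Or.inr ha.1.le).mul
    ((continuousOn_const.sub continuousOn_id).rpow_const fun z hz ↦ Or.inl ?_)).div_const _
  exact (sub_pos.2 (hz.2.trans_lt hy)).ne'

theorem integrableOn_Iic_fracKernel_mul_fracKernel_neg {y : ℝ} (hy : y < 1) :
    IntegrableOn (fun μ ↦ fracKernel a μ * fracKernel (-a) (1 - μ)) (Iic y) := by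
  have hint := intervalIntegral.integrableOn_deriv_of_nonneg
    (continuousOn_mul_fracKernel_mul_fracKernel ha hy)
    (fun z hz ↦ hasDerivAt_mul_fracKernel_mul_fracKernel ha ⟨hz.1, hz.2.trans hy⟩)
    fun z _ ↦ neg_nonneg.2 (fracKernel_mul_fracKernel_neg_nonpos ha z)
  refine IntegrableOn.of_forall_sdiff_eq_zero (by simpa using hint.neg) measurableSet_Iic
    fun z hz ↦ ?_
  rw [fracKernel_of_nonpos (not_lt.1 fun h ↦ hz.2 ⟨h, hz.1⟩), zero_mul]

theorem integral_Iio_fracKernel_mul_fracKernel_neg {y : ℝ} (hy : y ∈ Ico 0 1) :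
    ∫ μ in Iio y, fracKernel a μ * fracKernel (-a) (1 - μ) =
      -(y * (fracKernel a y * fracKernel (1 - a) (1 - y))) := by
  have hint := (integrableOn_Iic_fracKernel_mul_fracKernel_neg ha hy.2).mono_set
    (Ioc_subset_Iic_self : Ioc 0 y ⊆ Iic y)
  have hftc := intervalIntegral.integral_eq_sub_of_hasDerivAt_of_le hy.1
    (continuousOn_mul_fracKernel_mul_fracKernel ha hy.2)
    (fun z hz ↦ hasDerivAt_mul_fracKernel_mul_fracKernel ha ⟨hz.1, hz.2.trans hy.2⟩)
    ((intervalIntegrable_iff_integrableOn_Ioc_of_le hy.1).2 hint.neg)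
  rw [intervalIntegral.integral_of_le hy.1, zero_mul, sub_zero, integral_neg] at hftc
  rw [← hftc, neg_neg, ← integral_Iic_eq_integral_Iio]
  refine setIntegral_eq_of_subset_of_forall_sdiff_eq_zero measurableSet_Iic Ioc_subset_Iic_self
    fun z hz ↦ ?_
  rw [fracKernel_of_nonpos (not_lt.1 fun h ↦ hz.2 ⟨h, hz.1⟩), zero_mul]

end DerivativeKernel

section Frullani

theorem abs_sub_le_of_holderWith {C β : ℝ≥0} {H : ℝ → ℝ} (hH : HolderWith C β H) (y z : ℝ) :
    |H y - H z| ≤ C * |y - z| ^ (β : ℝ) := by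
  simpa only [Real.dist_eq] using hH.dist_le y z

variable {a L : ℝ} {C β : ℝ≥0} {H : ℝ → ℝ}

theorem abs_fracKernel_neg_mul_abs_rpow {b : ℝ} (hb : a < b) (t : ℝ) :
    |fracKernel (-a) t| * |t| ^ b =
      Real.Gamma (b - a) / |Real.Gamma (-a)| * fracKernel (b - a) t := by
  have hb' : 0 < -a + b := by linarith
  rw [← abs_of_nonneg (rpow_nonneg (abs_nonneg t) b), ← abs_mul, fracKernel_mul_abs_rpow hb',
    abs_mul, abs_div, abs_of_nonneg (fracKernel_nonneg hb' t), abs_of_pos (Gamma_pos_of_pos hb'),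
    neg_add_eq_sub]

theorem integrable_abs_fracKernel_mul_fracKernel_neg_mul_abs_rpow {b : ℝ} (ha : 0 < a)
    (hb : a < b) :
    Integrable fun μ ↦ |fracKernel a μ * fracKernel (-a) (1 - μ)| * |1 - μ| ^ b := by
  have h := (integrable_fracKernel_mul_fracKernel (sub_pos.2 hb) ha 0 1).const_mul
    (Real.Gamma (b - a) / |Real.Gamma (-a)|)
  refine h.congr (ae_of_all _ fun μ ↦ ?_)
  simp only [abs_mul, mul_assoc, abs_fracKernel_neg_mul_abs_rpow hb, sub_zero,
    abs_of_nonneg (fracKernel_nonneg ha μ)]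
  ring

theorem integrableOn_Ioo_abs_rpow_div_abs {b : ℝ} (hb : 0 < b) (hL : 0 < L) :
    IntegrableOn (fun d : ℝ ↦ |d| ^ b / |d|) (Ioo 0 L) := by
  have hpow : IntegrableOn (fun d : ℝ ↦ d ^ (b - 1)) (Ioo 0 L) :=
    (intervalIntegral.integrableOn_Ioo_rpow_iff hL).2 (by linarith)
  refine hpow.congr_fun (fun d hd ↦ ?_) measurableSet_Ioo
  simp only [abs_of_pos hd.1, rpow_sub_one hd.1.ne']

theorem intervalIntegrable_div_of_holderWith (hβ : 0 < β) (hH : HolderWith C β H) (hH0 : H 0 = 0)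
    (hL : 0 < L) : IntervalIntegrable (fun d ↦ H d / d) volume 0 L := by
  rw [intervalIntegrable_iff_integrableOn_Ioo_of_le hL.le]
  have hcont := hH.continuous hβ
  refine ((integrableOn_Ioo_abs_rpow_div_abs hβ hL).const_mul (C : ℝ)).mono'
    (Measurable.aestronglyMeasurable (by fun_prop)) (ae_of_all _ fun d ↦ ?_)
  have hd := abs_sub_le_of_holderWith hH d 0
  rw [hH0, sub_zero, sub_zero] at hd
  rw [norm_div, norm_eq_abs, norm_eq_abs, ← mul_div_assoc]
  gcongr
  exact hd

theorem integrable_prod_scaled_difference (ha : 0 < a) (haβ : a < β) (hH : HolderWith C β H)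
    (hL : 0 < L) :
    Integrable (fun p : ℝ × ℝ ↦ fracKernel a p.1 * fracKernel (-a) (1 - p.1) *
        ((H (p.1 * p.2) - H p.2) / p.2)) (volume.prod (volume.restrict (Ioo 0 L))) := by
  have hβ : 0 < β := by exact_mod_cast ha.trans haβ
  have hcont := hH.continuous hβ
  refine (((integrable_abs_fracKernel_mul_fracKernel_neg_mul_abs_rpow ha haβ).mul_prod
    (integrableOn_Ioo_abs_rpow_div_abs hβ hL)).const_mul (C : ℝ)).mono'
    (Measurable.aestronglyMeasurable (by fun_prop)) (ae_of_all _ fun ⟨μ, d⟩ ↦ ?_)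
  have hd := abs_sub_le_of_holderWith hH (μ * d) d
  rw [show μ * d - d = -((1 - μ) * d) by ring, abs_neg, abs_mul,
    mul_rpow (abs_nonneg _) (abs_nonneg _)] at hd
  rw [norm_mul, norm_div, norm_eq_abs, norm_eq_abs, norm_eq_abs]
  calc |fracKernel a μ * fracKernel (-a) (1 - μ)| * (|H (μ * d) - H d| / |d|)
      ≤ |fracKernel a μ * fracKernel (-a) (1 - μ)| *
            (C * (|1 - μ| ^ (β : ℝ) * |d| ^ (β : ℝ)) / |d|) := by gcongr
    _ = C * (|fracKernel a μ * fracKernel (-a) (1 - μ)| * |1 - μ| ^ (β : ℝ) *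
          (|d| ^ (β : ℝ) / |d|)) := by ring

theorem div_mul_fracKernel_mul_fracKernel_one_sub_div (hL : 0 < L) (d : ℝ) :
    d / L * (fracKernel a (d / L) * fracKernel (1 - a) (1 - d / L)) =
      d * (fracKernel a d * fracKernel (1 - a) (L - d)) := by
  have h := fracKernel_sub_mul_fracKernel_sub (a := 1 - a) (b := a) hL d
  rw [sub_zero, sub_zero, inv_mul_eq_div, show 1 - a + a - 2 = -1 by ring, rpow_neg_one] at h
  rw [mul_comm (fracKernel a d), h]
  ring

theorem integrable_prod_div_mul_indicator_fracKernel (ha : a ∈ Ioo 0 1) (hH : Continuous H)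
    (hL : 0 < L) :
    Integrable (fun p : ℝ × ℝ ↦ H p.2 / p.2 * (Iio (p.2 / L)).indicator
      (fun μ ↦ fracKernel a μ * fracKernel (-a) (1 - μ)) p.1)
      (volume.prod (volume.restrict (Ioo 0 L))) := by
  have hmem {d : ℝ} (hd : d ∈ Ioo 0 L) : d / L ∈ Ico 0 1 :=
    ⟨(div_pos hd.1 hL).le, (div_lt_one hL).2 hd.2⟩
  refine integrable_prod_mul_of_integral_norm_le (ψ := fun d ↦ H d / d)
    (k := fun μ d ↦ (Iio (d / L)).indicator
      (fun μ ↦ fracKernel a μ * fracKernel (-a) (1 - μ)) μ)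
    (m := fun d ↦ d * (fracKernel a d * fracKernel (1 - a) (L - d)))
    (Measurable.aestronglyMeasurable (by fun_prop)) ?_ ?_ ?_ ?_
  · have hker : Measurable fun p : ℝ × ℝ ↦ fracKernel a p.1 * fracKernel (-a) (1 - p.1) := by
      fun_prop
    exact (hker.indicator (measurableSet_lt measurable_fst
      (measurable_snd.div_const L))).aestronglyMeasurable
  · filter_upwards [ae_restrict_mem measurableSet_Ioo] with d hd
    exact ((integrableOn_Iic_fracKernel_mul_fracKernel_neg ha (hmem hd).2).mono_set
      Iio_subset_Iic_self).integrable_indicator measurableSet_Iio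
  · filter_upwards [ae_restrict_mem measurableSet_Ioo] with d hd
    simp only [norm_indicator_eq_indicator_norm, integral_indicator measurableSet_Iio,
      norm_of_nonpos (fracKernel_mul_fracKernel_neg_nonpos ha _), integral_neg,
      integral_Iio_fracKernel_mul_fracKernel_neg ha (hmem hd), neg_neg,
      div_mul_fracKernel_mul_fracKernel_one_sub_div hL, le_rfl]
  · have hint := (integrable_continuous_mul_fracKernel_mul_fracKernel (sub_pos.2 ha.2) ha.1 hH 0 L
      ).integrableOn (s := Ioo 0 L)
    refine IntegrableOn.congr_fun hint (fun d hd ↦ ?_) measurableSet_Ioo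
    have := hd.1.ne'
    simp only [sub_zero]
    field_simp

theorem integral_Ioo_scaled_difference_div (hβ : 0 < β) (hH : HolderWith C β H)
    (hH0 : H 0 = 0) (hL : 0 < L) {μ : ℝ} (hμ : μ ∈ Ioo 0 1) :
    ∫ d in Ioo 0 L, (H (μ * d) - H d) / d = -∫ d in Ioo (μ * L) L, H d / d := by
  have h := integral_mul_comp_mul_left_sub hL.le
    (intervalIntegrable_div_of_holderWith hβ hH hH0 hL) hμ
  rw [intervalIntegral.integral_of_le hL.le, integral_Ioc_eq_integral_Ioo,
    intervalIntegral.integral_of_le (mul_le_of_le_one_left hL.le hμ.2.le),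
    integral_Ioc_eq_integral_Ioo] at h
  rw [← h]
  refine setIntegral_congr_fun measurableSet_Ioo fun d hd ↦ ?_
  have := hd.1.ne'
  have := hμ.1.ne'
  field_simp

theorem mul_integral_scaled_difference_div (hβ : 0 < β)
    (hH : HolderWith C β H) (hH0 : H 0 = 0) (hL : 0 < L) (μ : ℝ) :
    ∫ d in Ioo 0 L, fracKernel a μ * fracKernel (-a) (1 - μ) * ((H (μ * d) - H d) / d) =
      -∫ d in Ioo 0 L, H d / d * (Iio (d / L)).indicator
        (fun μ ↦ fracKernel a μ * fracKernel (-a) (1 - μ)) μ := by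
  by_cases hμ : μ ∈ Ioo 0 1
  · have hind (d : ℝ) : H d / d * (Iio (d / L)).indicator
        (fun μ ↦ fracKernel a μ * fracKernel (-a) (1 - μ)) μ =
        fracKernel a μ * fracKernel (-a) (1 - μ) * (Ioi (μ * L)).indicator (fun d ↦ H d / d) d := by
      simp only [indicator_apply, mem_Iio, mem_Ioi, lt_div_iff₀ hL]
      split_ifs <;> ring
    have hset : Ioo 0 L ∩ Ioi (μ * L) = Ioo (μ * L) L := by
      rw [Ioo_inter_Ioi, max_eq_right (mul_nonneg hμ.1.le hL.le)]
    simp only [hind, integral_const_mul, setIntegral_indicator measurableSet_Ioi]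
    rw [integral_Ioo_scaled_difference_div hβ hH hH0 hL hμ, hset, mul_neg]
  · have hzero : fracKernel a μ * fracKernel (-a) (1 - μ) = 0 := by
      simpa [mul_comm] using fracKernel_mul_fracKernel_eq_zero (a := -a) (b := a) hμ
    simp [indicator_apply, hzero]

theorem integral_scaled_difference (ha : a ∈ Ioo 0 1) (haβ : a < β)
    (hH : HolderWith C β H) (hH0 : H 0 = 0) (hL : 0 < L) :
    ∫ d in Ioo 0 L, ∫ μ, fracKernel a μ * fracKernel (-a) (1 - μ) * ((H (μ * d) - H d) / d) =
      ∫ d in Ioo 0 L, H d * (fracKernel a d * fracKernel (1 - a) (L - d)) := by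
  have hβ : 0 < β := by exact_mod_cast ha.1.trans haβ
  -- For fixed `μ` only the strip `d ∈ (μ L, L)` survives, where `μ < d / L`; integrating over `μ`
  -- first again leaves the explicit primitive of `fracKernel a μ * fracKernel (-a) (1 - μ)`.
  rw [← integral_integral_swap (integrable_prod_scaled_difference ha.1 haβ hH hL)]
  simp only [mul_integral_scaled_difference_div hβ hH hH0 hL]
  rw [integral_neg, integral_integral_swap
    (integrable_prod_div_mul_indicator_fracKernel ha (hH.continuous hβ) hL), ← integral_neg]
  refine setIntegral_congr_fun measurableSet_Ioo fun d hd ↦ ?_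
  have hmem : d / L ∈ Ico 0 1 := ⟨(div_pos hd.1 hL).le, (div_lt_one hL).2 hd.2⟩
  have := hd.1.ne'
  simp only [integral_const_mul, integral_indicator measurableSet_Iio]
  rw [integral_Iio_fracKernel_mul_fracKernel_neg ha hmem,
    div_mul_fracKernel_mul_fracKernel_one_sub_div hL]
  field_simp

end Frullani

/-- The commutator of the fractional derivative of order `a` with the multiplication by `G`, applied
to `h`. -/
noncomputable def weylCommutator (a : ℝ) (G h : ℝ → ℝ) (s : ℝ) : ℝ :=
  ∫ u, h u * (G u - G s) * fracKernel (-a) (u - s)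

section Commutator

variable {a b r s T : ℝ} {C β : ℝ≥0} {G h ψ : ℝ → ℝ}

theorem weylCommutator_eq_zero_of_le (hh : ∀ u, T ≤ u → h u = 0) (hs : T ≤ s) :
    weylCommutator a G h s = 0 := by
  refine integral_eq_zero_of_ae (ae_of_all _ fun u ↦ ?_)
  rcases le_or_gt T u with hu | hu
  · simp [hh u hu]
  · simp [fracKernel_of_nonpos (sub_nonpos.2 (hu.le.trans hs))]

theorem weylCommutator_fracKernel_eq_zero (hs : r ≤ s) :
    weylCommutator a G (fun u ↦ fracKernel a (r - u)) s = 0 :=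
  weylCommutator_eq_zero_of_le (fun _ hu ↦ fracKernel_of_nonpos (sub_nonpos.2 hu)) hs

theorem weylCommutator_fracKernel (hs : s < r) :
    weylCommutator a G (fun u ↦ fracKernel a (r - u)) s =
      ∫ μ, fracKernel a μ * fracKernel (-a) (1 - μ) *
        ((G (r - μ * (r - s)) - G s) / (r - s)) := by
  have hd := sub_pos.2 hs
  have hscale (μ : ℝ) : fracKernel a (r - (r - (r - s) * μ)) * (G (r - (r - s) * μ) - G s) *
      fracKernel (-a) (r - (r - s) * μ - s) = (r - s)⁻¹ * (fracKernel a μ *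
        fracKernel (-a) (1 - μ) * ((G (r - μ * (r - s)) - G s) / (r - s))) := by
    have hpow : (r - s) ^ (a - 1) * (r - s) ^ (-a - 1) = (r - s)⁻¹ * (r - s)⁻¹ := by
      rw [← rpow_add hd, ← rpow_neg_one, ← rpow_add hd]
      ring_nf
    rw [sub_sub_cancel, show r - (r - s) * μ - s = (r - s) * (1 - μ) by ring, fracKernel_mul hd,
      fracKernel_mul hd, mul_comm μ]
    linear_combination fracKernel a μ * fracKernel (-a) (1 - μ) * (G (r - (r - s) * μ) - G s) * hpow
  have hsubst := Measure.integral_comp_mul_left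
    (fun t ↦ fracKernel a (r - (r - t)) * (G (r - t) - G s) * fracKernel (-a) (r - t - s)) (r - s)
  simp only [hscale, integral_const_mul, abs_of_pos (inv_pos.2 hd), smul_eq_mul] at hsubst
  rw [weylCommutator, ← integral_sub_left_eq_self _ volume r]
  exact (mul_left_cancel₀ (inv_ne_zero hd.ne') hsubst).symm

theorem measurable_weylCommutator_fracKernel (a : ℝ) (hG : Continuous G) :
    Measurable fun p : ℝ × ℝ ↦ weylCommutator a G (fun u ↦ fracKernel a (p.2 - u)) p.1 := by
  unfold weylCommutator
  have : Measurable fun q : (ℝ × ℝ) × ℝ ↦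
    fracKernel a (q.1.2 - q.2) * (G q.2 - G q.1.1) * fracKernel (-a) (q.2 - q.1.1) := by fun_prop
  exact this.stronglyMeasurable.integral_prod_right'.measurable

theorem weylInt_one_weylCommutator_fracKernel (a : ℝ) (G : ℝ → ℝ) (x r : ℝ) :
    weylInt 1 (weylCommutator a G fun u ↦ fracKernel a (r - u)) x =
      ∫ d in Ioo 0 (r - x), ∫ μ, fracKernel a μ * fracKernel (-a) (1 - μ) *
        ((G (r - μ * d) - G (r - d)) / d) := by
  have hreflect := integral_sub_left_eq_self ((Ioo x r).indicator
    (weylCommutator a G fun u ↦ fracKernel a (r - u))) volume r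
  rw [weylInt_one, setIntegral_eq_of_subset_of_forall_sdiff_eq_zero measurableSet_Ioi
    Ioo_subset_Ioi_self fun s hs ↦ weylCommutator_fracKernel_eq_zero
      (not_lt.1 fun h ↦ hs.2 ⟨hs.1, h⟩), ← integral_indicator measurableSet_Ioo, ← hreflect,
    ← integral_indicator measurableSet_Ioo]
  congr 1 with d
  by_cases hd : d ∈ Ioo 0 (r - x)
  · rw [indicator_of_mem hd, indicator_of_mem (mem_Ioo.2 ⟨lt_sub_comm.1 hd.2, sub_lt_self r hd.1⟩),
      weylCommutator_fracKernel (sub_lt_self r hd.1), sub_sub_cancel]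
  · rw [indicator_of_notMem hd, indicator_of_notMem fun h ↦
      hd ⟨sub_lt_self_iff r |>.1 h.2, lt_sub_comm.1 h.1⟩]

theorem integral_mul_fracKernel_mul_fracKernel_one_sub (ha : a ∈ Ioo 0 1) (hG : Continuous G)
    (x r : ℝ) :
    ∫ u, G u * (fracKernel a (r - u) * fracKernel (1 - a) (u - x)) =
      G r * fracKernel 1 (r - x) + ∫ d in Ioo 0 (r - x),
        (G (r - d) - G r) * (fracKernel a d * fracKernel (1 - a) (r - x - d)) := by
  have hint (F : ℝ → ℝ) (hF : Continuous F) := integrable_continuous_mul_fracKernel_mul_fracKernel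
    ha.1 (sub_pos.2 ha.2) hF x r
  have hsplit (u : ℝ) : G u * (fracKernel a (r - u) * fracKernel (1 - a) (u - x)) =
      G r * (fracKernel a (r - u) * fracKernel (1 - a) (u - x)) +
        (G u - G r) * (fracKernel a (r - u) * fracKernel (1 - a) (u - x)) := by ring
  simp only [hsplit]
  rw [integral_add (hint (fun _ ↦ G r) continuous_const)
    (hint (fun u ↦ G u - G r) (by fun_prop)),
    integral_const_mul, integral_fracKernel_mul_fracKernel ha.1 (sub_pos.2 ha.2), add_sub_cancel,
    ← integral_sub_left_eq_self _ volume r]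
  simp only [sub_sub_cancel, sub_right_comm r _ x]
  rw [setIntegral_eq_integral_of_forall_compl_eq_zero fun d hd ↦ ?_]
  simpa [mul_comm] using Or.inr
    (fracKernel_mul_fracKernel_eq_zero (a := 1 - a) (b := a) (x := 0) hd)

theorem integral_mul_fracKernel_eq_add_weylInt_weylCommutator (ha : a ∈ Ioo 0 1) (haβ : a < β)
    (hG : HolderWith C β G) (x r : ℝ) :
    ∫ u, G u * (fracKernel a (r - u) * fracKernel (1 - a) (u - x)) = G r * fracKernel 1 (r - x) +
      weylInt 1 (weylCommutator a G fun u ↦ fracKernel a (r - u)) x := by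
  rw [integral_mul_fracKernel_mul_fracKernel_one_sub ha
    (hG.continuous (show 0 < β by exact_mod_cast ha.1.trans haβ)),
    weylInt_one_weylCommutator_fracKernel]
  congr 1
  rcases le_or_gt r x with hrx | hxr
  · simp [Ioo_eq_empty (sub_nonpos.2 hrx).not_gt]
  · have hH : HolderWith C β fun t ↦ G (r - t) - G r := fun y z ↦ by
      simpa [edist_sub_left] using hG (r - y) (r - z)
    have hcore := integral_scaled_difference ha haβ hH (by simp) (sub_pos.2 hxr)
    simpa only [sub_sub_sub_cancel_right] using hcore.symm

theorem abs_sub_mul_fracKernel_neg_le (haβ : a < β) (hG : HolderWith C β G) (s u : ℝ) :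
    |(G u - G s) * fracKernel (-a) (u - s)| ≤
      C * (Real.Gamma (β - a) / |Real.Gamma (-a)|) * fracKernel (β - a) (u - s) := by
  rw [mul_assoc, ← abs_fracKernel_neg_mul_abs_rpow haβ, abs_mul, mul_left_comm (C : ℝ), mul_comm]
  gcongr
  exact abs_sub_le_of_holderWith hG u s

theorem norm_mul_sub_mul_fracKernel_neg_le (haβ : a < β) (hG : HolderWith C β G) (s u : ℝ) :
    ‖h u * (G u - G s) * fracKernel (-a) (u - s)‖ ≤
      C * (Real.Gamma (β - a) / |Real.Gamma (-a)|) * (|h u| * fracKernel (β - a) (u - s)) := by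
  rw [mul_assoc, norm_mul, norm_eq_abs, norm_eq_abs, mul_left_comm]
  gcongr
  exact abs_sub_mul_fracKernel_neg_le haβ hG s u

theorem integrable_abs_mul_fracKernel (hb : 0 < b)
    (hh : Integrable fun u ↦ h u * fracKernel b (u - s)) :
    Integrable fun u ↦ |h u| * fracKernel b (u - s) := by
  simpa [norm_mul, abs_of_nonneg (fracKernel_nonneg hb _)] using hh.norm

theorem integrable_mul_sub_mul_fracKernel_neg (hβ : 0 < β) (haβ : a < β)
    (hG : HolderWith C β G) (hmeas : AEStronglyMeasurable h)
    (hh : Integrable fun u ↦ h u * fracKernel (β - a) (u - s)) :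
    Integrable fun u ↦ h u * (G u - G s) * fracKernel (-a) (u - s) := by
  have hcont := hG.continuous hβ
  have hker : Measurable fun u ↦ fracKernel (-a) (u - s) := by fun_prop
  exact ((integrable_abs_mul_fracKernel (sub_pos.2 haβ) hh).const_mul _).mono'
    ((hmeas.mul (by fun_prop)).mul hker.aestronglyMeasurable)
    (ae_of_all _ (norm_mul_sub_mul_fracKernel_neg_le haβ hG s))

theorem integral_norm_mul_sub_mul_fracKernel_neg_le (haβ : a < β) (hG : HolderWith C β G)
    (hh : Integrable fun u ↦ h u * fracKernel (β - a) (u - s)) :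
    ∫ u, ‖h u * (G u - G s) * fracKernel (-a) (u - s)‖ ≤
      C * (Real.Gamma (β - a) / |Real.Gamma (-a)|) * weylInt (β - a) (fun u ↦ |h u|) s := by
  rw [weylInt, ← integral_const_mul]
  exact integral_mono_of_nonneg (ae_of_all _ fun _ ↦ norm_nonneg _)
    ((integrable_abs_mul_fracKernel (sub_pos.2 haβ) hh).const_mul _)
    (ae_of_all _ (norm_mul_sub_mul_fracKernel_neg_le haβ hG s))

theorem integral_norm_fracKernel_mul_sub_mul_fracKernel_neg_le (ha : 0 < a) (haβ : a < β)
    (hG : HolderWith C β G) (r s : ℝ) :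
    ∫ u, ‖fracKernel a (r - u) * (G u - G s) * fracKernel (-a) (u - s)‖ ≤
      C * (Real.Gamma (β - a) / |Real.Gamma (-a)|) * fracKernel β (r - s) := by
  have h := integral_norm_mul_sub_mul_fracKernel_neg_le haβ hG
    (integrable_fracKernel_mul_fracKernel ha (sub_pos.2 haβ) s r)
  simpa only [weylInt, abs_of_nonneg (fracKernel_nonneg ha _),
    integral_fracKernel_mul_fracKernel ha (sub_pos.2 haβ), add_sub_cancel] using h

theorem weylCommutator_weylInt (ha : 0 < a) (haβ : a < β) (hG : HolderWith C β G)
    (hψ : AEStronglyMeasurable ψ) (hint : Integrable fun r ↦ ψ r * fracKernel β (r - s)) :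
    weylCommutator a G (weylInt a ψ) s =
      ∫ r, ψ r * weylCommutator a G (fun u ↦ fracKernel a (r - u)) s := by
  have hβ : 0 < β := by exact_mod_cast ha.trans haβ
  have hcont := hG.continuous hβ
  have hkernel : Measurable fun p : ℝ × ℝ ↦
    fracKernel a (p.2 - p.1) * (G p.1 - G s) * fracKernel (-a) (p.1 - s) := by fun_prop
  have hprod : Integrable fun p : ℝ × ℝ ↦
      ψ p.2 * (fracKernel a (p.2 - p.1) * (G p.1 - G s) * fracKernel (-a) (p.1 - s)) := by
    refine integrable_prod_mul_of_integral_norm_le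
      (k := fun u r ↦ fracKernel a (r - u) * (G u - G s) * fracKernel (-a) (u - s)) hψ
      hkernel.aestronglyMeasurable
      (ae_of_all _ fun r ↦ integrable_mul_sub_mul_fracKernel_neg hβ haβ hG ?_
        (integrable_fracKernel_mul_fracKernel ha (sub_pos.2 haβ) s r))
      (ae_of_all _ fun r ↦ integral_norm_fracKernel_mul_sub_mul_fracKernel_neg_le ha haβ hG r s) ?_
    · exact Measurable.aestronglyMeasurable (by fun_prop)
    · simpa only [mul_left_comm] using hint.const_mul
        (C * (Real.Gamma (β - a) / |Real.Gamma (-a)|))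
  simp only [weylCommutator, weylInt, ← integral_mul_const, mul_assoc] at hprod ⊢
  rw [integral_integral_swap hprod]
  simp only [integral_const_mul]

end Commutator

section ProductRule

variable {a s T : ℝ} {C β : ℝ≥0} {G ψ : ℝ → ℝ}

theorem abs_weylCommutator_fracKernel_le (ha : 0 < a) (haβ : a < β) (hG : HolderWith C β G)
    (r s : ℝ) :
    |weylCommutator a G (fun u ↦ fracKernel a (r - u)) s| ≤
      C * (Real.Gamma (β - a) / |Real.Gamma (-a)|) * fracKernel β (r - s) :=
  (norm_integral_le_integral_norm _).trans
    (integral_norm_fracKernel_mul_sub_mul_fracKernel_neg_le ha haβ hG r s)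

theorem integrable_prod_mul_weylCommutator_fracKernel (ha : 0 < a) (haβ : a < β)
    (hG : HolderWith C β G) (hψ : LocallyIntegrable ψ) (hT : ∀ r, T ≤ r → ψ r = 0) (x : ℝ) :
    Integrable fun p : ℝ × ℝ ↦ ψ p.2 *
      (weylCommutator a G (fun u ↦ fracKernel a (p.2 - u)) p.1 * fracKernel 1 (p.1 - x)) := by
  have hβ : 0 < (β : ℝ) := ha.trans haβ
  have hcomm := measurable_weylCommutator_fracKernel a (hG.continuous (by exact_mod_cast hβ))
  set M := C * (Real.Gamma (β - a) / |Real.Gamma (-a)|)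
  have hbound (r s : ℝ) :
      ‖weylCommutator a G (fun u ↦ fracKernel a (r - u)) s * fracKernel 1 (s - x)‖ ≤
        M * (fracKernel β (r - s) * fracKernel 1 (s - x)) := by
    rw [norm_mul, norm_of_nonneg (fracKernel_nonneg one_pos _), ← mul_assoc]
    exact mul_le_mul_of_nonneg_right (abs_weylCommutator_fracKernel_le ha haβ hG r s)
      (fracKernel_nonneg one_pos _)
  have hdom (r : ℝ) := (integrable_fracKernel_mul_fracKernel hβ one_pos x r).const_mul M
  refine integrable_prod_mul_of_integral_norm_le
    (k := fun s r ↦ weylCommutator a G (fun u ↦ fracKernel a (r - u)) s * fracKernel 1 (s - x))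
    (m := fun r ↦ M * fracKernel (β + 1) (r - x)) hψ.aestronglyMeasurable
    (hcomm.mul (by fun_prop)).aestronglyMeasurable (ae_of_all _ fun r ↦ ?_)
    (ae_of_all _ fun r ↦ ?_) ?_
  · exact (hdom r).mono' ((hcomm.comp measurable_prodMk_right).mul
      (by fun_prop)).aestronglyMeasurable (ae_of_all _ (hbound r))
  · rw [← integral_fracKernel_mul_fracKernel hβ one_pos, ← integral_const_mul]
    exact integral_mono_of_nonneg (ae_of_all _ fun _ ↦ norm_nonneg _) (hdom r)
      (ae_of_all _ (hbound r))
  · simpa only [mul_left_comm] using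
      (integrable_mul_fracKernel hψ hT (by linarith : 1 ≤ (β : ℝ) + 1) x).const_mul M

theorem ae_weylCommutator_weylInt (ha : 0 < a) (haβ : a < β) (hG : HolderWith C β G)
    (hψ : LocallyIntegrable ψ) (hT : ∀ r, T ≤ r → ψ r = 0) :
    ∀ᵐ s, weylCommutator a G (weylInt a ψ) s =
      ∫ r, ψ r * weylCommutator a G (fun u ↦ fracKernel a (r - u)) s := by
  filter_upwards [ae_integrable_mul_fracKernel hψ hT (ha.trans haβ)] with s hs
  exact weylCommutator_weylInt ha haβ hG hψ.aestronglyMeasurable hs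

theorem integrableOn_Ioi_weylCommutator_weylInt (ha : 0 < a) (haβ : a < β)
    (hG : HolderWith C β G) (hψ : LocallyIntegrable ψ) (hT : ∀ r, T ≤ r → ψ r = 0) (x : ℝ) :
    IntegrableOn (weylCommutator a G (weylInt a ψ)) (Ioi x) := by
  rw [← integrable_mul_fracKernel_one_iff]
  refine (integrable_prod_mul_weylCommutator_fracKernel ha haβ hG hψ hT
    x).integral_prod_left.congr ?_
  filter_upwards [ae_weylCommutator_weylInt ha haβ hG hψ hT] with s hs
  simp only [hs, ← integral_mul_const, mul_assoc]

theorem weylInt_one_weylCommutator_weylInt (ha : 0 < a) (haβ : a < β)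
    (hG : HolderWith C β G) (hψ : LocallyIntegrable ψ) (hT : ∀ r, T ≤ r → ψ r = 0) (x : ℝ) :
    weylInt 1 (weylCommutator a G (weylInt a ψ)) x =
      ∫ r, ψ r * weylInt 1 (weylCommutator a G fun u ↦ fracKernel a (r - u)) x := by
  have hswap := integral_integral_swap (f := fun s r ↦ ψ r *
    (weylCommutator a G (fun u ↦ fracKernel a (r - u)) s * fracKernel 1 (s - x)))
    (integrable_prod_mul_weylCommutator_fracKernel ha haβ hG hψ hT x)
  simp only [integral_const_mul] at hswap
  simp only [weylInt.eq_1 1]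
  rw [← hswap]
  refine integral_congr_ae ?_
  filter_upwards [ae_weylCommutator_weylInt ha haβ hG hψ hT] with s hs
  simp only [hs, ← integral_mul_const, mul_assoc]

theorem integrable_prod_continuous_mul_fracKernel_mul_fracKernel (ha : a ∈ Ioo 0 1)
    (hG : Continuous G) (hψ : LocallyIntegrable ψ) (hT : ∀ r, T ≤ r → ψ r = 0) (x : ℝ) :
    Integrable fun p : ℝ × ℝ ↦
      ψ p.2 * (G p.1 * (fracKernel a (p.2 - p.1) * fracKernel (1 - a) (p.1 - x))) := by
  have hint := integrable_prod_mul_fracKernel_mul_fracKernel (x := x) ha.1 (sub_pos.2 ha.2)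
    hψ.aestronglyMeasurable (by simpa using integrable_mul_fracKernel hψ hT le_rfl x)
  obtain ⟨B, hB⟩ := isCompact_Icc.exists_bound_of_continuousOn (hG.continuousOn (s := Icc x T))
  have hmeas : AEStronglyMeasurable (fun p : ℝ × ℝ ↦ G p.1) (volume.prod volume) :=
    (hG.comp continuous_fst).aestronglyMeasurable
  refine ((hint.norm.const_mul B).mono' (hmeas.mul hint.aestronglyMeasurable)
    (ae_of_all _ fun ⟨u, r⟩ ↦ ?_)).congr (ae_of_all _ fun p ↦ by simp only [Pi.mul_apply]; ring)
  by_cases hu : u ∈ Icc x T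
  · rw [Pi.mul_apply, norm_mul]
    exact mul_le_mul_of_nonneg_right (hB u hu) (norm_nonneg _)
  · have hzero : ψ r * (fracKernel a (r - u) * fracKernel (1 - a) (u - x)) = 0 := by
      rcases le_or_gt T r with hr | hr
      · rw [hT r hr, zero_mul]
      · rw [fracKernel_mul_fracKernel_eq_zero fun h ↦ hu ⟨h.1.le, (h.2.trans hr).le⟩, mul_zero]
    simp [hzero]

theorem mul_weylInt_mul_fracKernel (G ψ : ℝ → ℝ) (a b u x : ℝ) :
    G u * weylInt a ψ u * fracKernel b (u - x) =
      ∫ r, ψ r * (G u * (fracKernel a (r - u) * fracKernel b (u - x))) := by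
  rw [weylInt, mul_right_comm, ← integral_const_mul]
  exact integral_congr_ae (ae_of_all _ fun r ↦ by ring)

theorem weylInt_one_sub_mul_weylInt (ha : a ∈ Ioo 0 1) (hG : Continuous G)
    (hψ : LocallyIntegrable ψ) (hT : ∀ r, T ≤ r → ψ r = 0) (x : ℝ) :
    weylInt (1 - a) (fun u ↦ G u * weylInt a ψ u) x =
      ∫ r, ψ r * ∫ u, G u * (fracKernel a (r - u) * fracKernel (1 - a) (u - x)) := by
  rw [weylInt]
  simp only [mul_weylInt_mul_fracKernel]
  rw [integral_integral_swap
    (integrable_prod_continuous_mul_fracKernel_mul_fracKernel ha hG hψ hT x)]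
  simp only [integral_const_mul]

theorem locallyIntegrable_mul_add_weylCommutator (ha : 0 < a) (haβ : a < β)
    (hG : HolderWith C β G) (hψ : LocallyIntegrable ψ) (hT : ∀ r, T ≤ r → ψ r = 0) :
    LocallyIntegrable fun s ↦ G s * ψ s + weylCommutator a G (weylInt a ψ) s :=
  (hψ.continuous_mul (hG.continuous (by exact_mod_cast ha.trans haβ))).add <|
    locallyIntegrable_of_integrableOn_Ioi
      (integrableOn_Ioi_weylCommutator_weylInt ha haβ hG hψ hT)

theorem mul_add_weylCommutator_eq_zero_of_le (hT : ∀ r, T ≤ r → ψ r = 0) (hs : T ≤ s) :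
    G s * ψ s + weylCommutator a G (weylInt a ψ) s = 0 := by
  rw [hT s hs, weylCommutator_eq_zero_of_le (fun u ↦ weylInt_eq_zero_of_le hT) hs, mul_zero,
    add_zero]

theorem weylInt_one_mul_add_weylCommutator (ha : a ∈ Ioo 0 1) (haβ : a < β)
    (hG : HolderWith C β G) (hψ : LocallyIntegrable ψ) (hT : ∀ r, T ≤ r → ψ r = 0) (x : ℝ) :
    weylInt 1 (fun s ↦ G s * ψ s + weylCommutator a G (weylInt a ψ) s) x =
      weylInt (1 - a) (fun u ↦ G u * weylInt a ψ u) x := by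
  have hcont : Continuous G := hG.continuous (by exact_mod_cast ha.1.trans haβ)
  have hmul : Integrable fun r ↦ G r * ψ r * fracKernel 1 (r - x) :=
    integrable_mul_fracKernel (hψ.continuous_mul hcont)
      (fun r hr ↦ mul_eq_zero_of_right _ (hT r hr)) le_rfl x
  have hcomm : Integrable fun s ↦
      weylCommutator a G (weylInt a ψ) s * fracKernel 1 (s - x) :=
    integrable_mul_fracKernel_one_iff.2
      (integrableOn_Ioi_weylCommutator_weylInt ha.1 haβ hG hψ hT x)
  have hkernel : Integrable fun r ↦
      ψ r * weylInt 1 (weylCommutator a G fun u ↦ fracKernel a (r - u)) x := by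
    simpa only [integral_const_mul, ← weylInt.eq_1 1] using
      (integrable_prod_mul_weylCommutator_fracKernel ha.1 haβ hG hψ hT x).integral_prod_right
  rw [weylInt_one_sub_mul_weylInt ha hcont hψ hT]
  simp only [integral_mul_fracKernel_eq_add_weylInt_weylCommutator ha haβ hG, mul_add]
  rw [integral_add (by simpa only [mul_left_comm, mul_assoc] using hmul) hkernel,
    ← weylInt_one_weylCommutator_weylInt ha.1 haβ hG hψ hT, weylInt, weylInt,
    ← integral_add (by simpa only [mul_left_comm, mul_assoc] using hmul) hcomm]
  simp only [add_mul, mul_left_comm, mul_assoc]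

theorem weylInt_mul_add_weylCommutator (ha : a ∈ Ioo 0 1) (haβ : a < β)
    (hG : HolderWith C β G) (hψ : LocallyIntegrable ψ) (hT : ∀ r, T ≤ r → ψ r = 0) :
    ∀ᵐ x, weylInt a (fun s ↦ G s * ψ s + weylCommutator a G (weylInt a ψ) s) x =
      G x * weylInt a ψ x := by
  have hcont : Continuous G := hG.continuous (by exact_mod_cast ha.1.trans haβ)
  set χ := fun s ↦ G s * ψ s + weylCommutator a G (weylInt a ψ) s
  have hχ : LocallyIntegrable χ := locallyIntegrable_mul_add_weylCommutator ha.1 haβ hG hψ hT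
  have hχT (s : ℝ) (hs : T ≤ s) : χ s = 0 := mul_add_weylCommutator_eq_zero_of_le hT hs
  have hχint := integrableOn_Ioi_of_locallyIntegrable hχ hχT
  refine ae_eq_of_weylInt_eq (a := 1 - a) ⟨sub_pos.2 ha.2, sub_lt_self 1 ha.1⟩
    (integrableOn_Ioi_of_locallyIntegrable (locallyIntegrable_weylInt hχ hχT ha.1)
      fun r ↦ weylInt_eq_zero_of_le hχT)
    (integrableOn_Ioi_of_locallyIntegrable ((locallyIntegrable_weylInt hψ hT ha.1).continuous_mul
      hcont) fun r hr ↦ mul_eq_zero_of_right _ (weylInt_eq_zero_of_le hT hr)) fun x ↦ ?_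
  rw [weylInt_one_sub_weylInt ha hχint, ← weylInt_one,
    weylInt_one_mul_add_weylCommutator ha haβ hG hψ hT]

end ProductRule

section SquareIntegrable

theorem sq_integral_mul_le {X : Type*} [MeasurableSpace X] {μ : Measure X} {p w : X → ℝ}
    (hw : 0 ≤ w) (hwi : Integrable w μ) (hpw : Integrable (fun x ↦ p x * w x) μ)
    (hppw : Integrable (fun x ↦ p x ^ 2 * w x) μ) :
    (∫ x, p x * w x ∂μ) ^ 2 ≤ (∫ x, w x ∂μ) * ∫ x, p x ^ 2 * w x ∂μ := by
  -- Discriminant of the nonnegative quadratic `t ↦ ∫ (p - t) ^ 2 w`.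
  have hquad (t : ℝ) : 0 ≤ (∫ x, w x ∂μ) * (t * t) + (-2 * ∫ x, p x * w x ∂μ) * t +
      ∫ x, p x ^ 2 * w x ∂μ := by
    have hexp : ∫ x, (p x - t) ^ 2 * w x ∂μ =
        ∫ x, (t * t * w x + -2 * t * (p x * w x) + p x ^ 2 * w x) ∂μ :=
      integral_congr_ae (ae_of_all _ fun x ↦ by ring)
    have hlow : Integrable (fun x ↦ t * t * w x + -2 * t * (p x * w x)) μ :=
      (hwi.const_mul _).add (hpw.const_mul _)
    rw [integral_add hlow hppw,
      integral_add (hwi.const_mul _) (hpw.const_mul _), integral_const_mul,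
      integral_const_mul] at hexp
    have hnonneg : 0 ≤ ∫ x, (p x - t) ^ 2 * w x ∂μ :=
      integral_nonneg fun x ↦ mul_nonneg (sq_nonneg _) (hw x)
    linarith
  have hdiscrim := discrim_le_zero hquad
  unfold discrim at hdiscrim
  linarith

variable {a b s T : ℝ} {C β : ℝ≥0} {G p ψ : ℝ → ℝ}

theorem mul_fracKernel_one_sub_mul_fracKernel (hT : ∀ r, T ≤ r → ψ r = 0) (s r : ℝ) :
    ψ r * (fracKernel 1 (T - r) * fracKernel b (r - s)) = ψ r * fracKernel b (r - s) := by
  rcases lt_or_ge r T with hr | hr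
  · simp [fracKernel_one, hr]
  · simp [hT r hr]

theorem sq_weylInt_le (hb : 0 < b) (hT : ∀ r, T ≤ r → p r = 0)
    (hp : Integrable fun r ↦ p r * fracKernel b (r - s))
    (hp2 : Integrable fun r ↦ p r ^ 2 * fracKernel b (r - s)) :
    weylInt b p s ^ 2 ≤ fracKernel (1 + b) (T - s) * weylInt b (fun r ↦ p r ^ 2) s := by
  have hT2 (r : ℝ) (hr : T ≤ r) : p r ^ 2 = 0 := by simp [hT r hr]
  -- The factor `fracKernel 1 (T - r)` cuts the weight off at `T` and so makes it integrable.
  have h := sq_integral_mul_le (p := p) (w := fun r ↦ fracKernel 1 (T - r) * fracKernel b (r - s))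
    (fun r ↦ mul_nonneg (fracKernel_nonneg one_pos _) (fracKernel_nonneg hb _))
    (integrable_fracKernel_mul_fracKernel one_pos hb s T)
    (by simpa only [mul_fracKernel_one_sub_mul_fracKernel hT] using hp)
    (by simpa only [mul_fracKernel_one_sub_mul_fracKernel hT2] using hp2)
  simpa only [mul_fracKernel_one_sub_mul_fracKernel hT, mul_fracKernel_one_sub_mul_fracKernel hT2,
    integral_fracKernel_mul_fracKernel one_pos hb, ← weylInt.eq_1] using h

theorem memLp_two_weylInt (hb : 0 < b) (hp : MemLp p 2) (hT : ∀ r, T ≤ r → p r = 0) (x : ℝ) :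
    MemLp (weylInt b p) 2 (volume.restrict (Ioi x)) := by
  have hploc : LocallyIntegrable p := hp.locallyIntegrable (by norm_num)
  have hp2loc : LocallyIntegrable fun r ↦ p r ^ 2 := hp.integrable_sq.locallyIntegrable
  have hT2 (r : ℝ) (hr : T ≤ r) : p r ^ 2 = 0 := by simp [hT r hr]
  have hmeas := (locallyIntegrable_weylInt hploc hT hb).aestronglyMeasurable.restrict (s := Ioi x)
  refine (memLp_two_iff_integrable_sq hmeas).2 <|
    ((integrableOn_Ioi_of_locallyIntegrable (locallyIntegrable_weylInt hp2loc hT2 hb)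
      (fun r ↦ weylInt_eq_zero_of_le hT2) x).const_mul (fracKernel (1 + b) (T - x))).mono'
      (hmeas.pow 2) ?_
  filter_upwards [ae_restrict_mem measurableSet_Ioi,
    ae_restrict_of_ae (ae_integrable_mul_fracKernel hploc hT hb),
    ae_restrict_of_ae (ae_integrable_mul_fracKernel hp2loc hT2 hb)] with s hs hint hint2
  rw [norm_of_nonneg (sq_nonneg _)]
  refine (sq_weylInt_le hb hT hint hint2).trans ?_
  gcongr
  · exact integral_nonneg fun r ↦ mul_nonneg (sq_nonneg _) (fracKernel_nonneg hb _)
  · exact monotone_fracKernel (by linarith) (by linarith [mem_Ioi.1 hs])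

theorem abs_weylCommutator_weylInt_le (ha : 0 < a) (haβ : a < β) (hG : HolderWith C β G)
    (hψ : AEStronglyMeasurable ψ) (hint : Integrable fun r ↦ ψ r * fracKernel β (r - s)) :
    |weylCommutator a G (weylInt a ψ) s| ≤
      C * (Real.Gamma (β - a) / |Real.Gamma (-a)|) * weylInt β (fun r ↦ |ψ r|) s := by
  rw [weylCommutator_weylInt ha haβ hG hψ hint, weylInt, ← integral_const_mul]
  refine norm_integral_le_of_norm_le (G := ℝ)
    ((integrable_abs_mul_fracKernel (ha.trans haβ) hint).const_mul _) (ae_of_all _ fun r ↦ ?_)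
  rw [norm_mul, norm_eq_abs, norm_eq_abs, mul_left_comm]
  gcongr
  exact abs_weylCommutator_fracKernel_le ha haβ hG r s

end SquareIntegrable

theorem exists_holderWith_eqOn_Icc {C β : ℝ≥0} {g : ℝ → ℝ} {x y : ℝ} (hxy : x ≤ y)
    (hg : HolderOnWith C β g (Icc x y)) :
    ∃ G, HolderWith C β G ∧ EqOn G g (Icc x y) := by
  refine ⟨IccExtend hxy ((Icc x y).domRestrict g), ?_, fun s hs ↦ IccExtend_of_mem hxy _ hs⟩
  have hext := (HolderWith.restrict_iff.2 hg).comp (holderWith_one.2 (LipschitzWith.projIcc hxy))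
  simpa [IccExtend] using hext

theorem holderOnWith_of_abs_sub_le {β : ℝ≥0} {K : ℝ} {g : ℝ → ℝ} {S : Set ℝ}
    (hg : ∀ s ∈ S, ∀ t ∈ S, |g s - g t| ≤ K * |s - t| ^ (β : ℝ)) :
    HolderOnWith K.toNNReal β g S := fun s hs t ht ↦ by
  change _ ≤ ENNReal.ofReal K * _
  rw [edist_dist, edist_dist, ENNReal.ofReal_rpow_of_nonneg dist_nonneg β.coe_nonneg,
    ← ENNReal.ofReal_mul' (rpow_nonneg dist_nonneg _)]
  exact ENNReal.ofReal_le_ofReal (hg s hs t ht)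

/-- The function `s ↦ s ^ (-a) φ(s)` on `(0, T)`, extended by zero to the line: on `(0, T)`, a
function `f` with representative `φ` is `u ^ a` times the fractional integral of it. -/
noncomputable def lambdaDensity (T a : ℝ) (φ : ℝ → ℝ) : ℝ → ℝ :=
  (Ioo 0 T).indicator fun s ↦ s ^ (-a) * φ s

section Lambda

variable {a b s x T : ℝ} {C β : ℝ≥0} {G φ χ f h k : ℝ → ℝ}

theorem lambdaDensity_of_le {r : ℝ} (hr : T ≤ r) : lambdaDensity T a φ r = 0 :=
  indicator_of_notMem (fun h ↦ h.2.not_ge hr) _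

theorem rpow_mul_lambdaDensity (hs : s ∈ Ioo 0 T) : s ^ a * lambdaDensity T a φ s = φ s := by
  rw [lambdaDensity, indicator_of_mem hs, ← mul_assoc, ← rpow_add hs.1, add_neg_cancel, rpow_zero,
    one_mul]

theorem rpow_mul_abs_lambdaDensity_le (ha : 0 ≤ a) {r : ℝ} (hs : 0 ≤ s) (hsr : s < r) :
    s ^ a * |lambdaDensity T a φ r| ≤ |(Ioo 0 T).indicator φ r| := by
  by_cases hr : r ∈ Ioo 0 T
  · rw [indicator_of_mem hr, ← rpow_mul_lambdaDensity (a := a) (φ := φ) hr, abs_mul,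
      abs_of_nonneg (rpow_nonneg hr.1.le a)]
    gcongr
  · simp [lambdaDensity, indicator_of_notMem hr]

theorem integrable_lambdaDensity (ha : a < 1 / 2) (hT : 0 < T)
    (hφ : MemLp φ 2 (volume.restrict (Ioo 0 T))) : Integrable (lambdaDensity T a φ) := by
  suffices hrpow : MemLp (fun s : ℝ ↦ s ^ (-a)) 2 (volume.restrict (Ioo 0 T)) from
    (integrable_indicator_iff measurableSet_Ioo).2 (hrpow.integrable_mul hφ)
  refine (memLp_two_iff_integrable_sq (Measurable.aestronglyMeasurable (by fun_prop))).2 ?_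
  have hpow : IntegrableOn (fun s : ℝ ↦ s ^ (-a * 2)) (Ioo 0 T) :=
    (intervalIntegral.integrableOn_Ioo_rpow_iff hT).2 (by linarith)
  refine hpow.congr_fun (fun s hs ↦ ?_) measurableSet_Ioo
  simp only [rpow_mul hs.1.le, rpow_two]

theorem lambdaDensity_mul_add {r : ℝ} (hk : ∀ s, T ≤ s → k s = 0) (hr : 0 < r) :
    lambdaDensity T a (fun s ↦ G s * φ s + s ^ a * k s) r =
      G r * lambdaDensity T a φ r + k r := by
  rcases lt_or_ge r T with hrT | hrT
  · have hpow : r ^ (-a) * r ^ a = 1 := by rw [← rpow_add hr, neg_add_cancel, rpow_zero]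
    rw [lambdaDensity, lambdaDensity, indicator_of_mem (mem_Ioo.2 ⟨hr, hrT⟩),
      indicator_of_mem (mem_Ioo.2 ⟨hr, hrT⟩)]
    linear_combination k r * hpow
  · simp [lambdaDensity_of_le hrT, hk r hrT]

theorem rpow_mul_weylInt_abs_lambdaDensity_le (ha : 0 ≤ a) (hb : 0 < b) (hs : 0 ≤ s)
    (hφ : Integrable fun r ↦ |(Ioo 0 T).indicator φ r| * fracKernel b (r - s)) :
    s ^ a * weylInt b (fun r ↦ |lambdaDensity T a φ r|) s ≤
      weylInt b (fun r ↦ |(Ioo 0 T).indicator φ r|) s := by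
  rw [weylInt, ← integral_const_mul]
  refine integral_mono_of_nonneg (ae_of_all _ fun r ↦ mul_nonneg (rpow_nonneg hs a)
    (mul_nonneg (abs_nonneg _) (fracKernel_nonneg hb _))) hφ (ae_of_all _ fun r ↦ ?_)
  rcases le_or_gt r s with hrs | hsr
  · simp [fracKernel_of_nonpos (sub_nonpos.2 hrs)]
  · simp only [← mul_assoc]
    exact mul_le_mul_of_nonneg_right (rpow_mul_abs_lambdaDensity_le ha hs hsr)
      (fracKernel_nonneg hb _)

theorem memLp_two_rpow_mul_weylCommutator (ha : a ∈ Ioo 0 (1 / 2)) (haβ : a < β)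
    (hG : HolderWith C β G) (hT : 0 < T) (hφ : MemLp φ 2 (volume.restrict (Ioo 0 T))) :
    MemLp (fun s ↦ s ^ a * weylCommutator a G (weylInt a (lambdaDensity T a φ)) s) 2
      (volume.restrict (Ioo 0 T)) := by
  have hβ := ha.1.trans haβ
  have hψ := (integrable_lambdaDensity ha.2 hT hφ).locallyIntegrable
  have hψT (r : ℝ) (hr : T ≤ r) : lambdaDensity T a φ r = 0 := lambdaDensity_of_le hr
  set p := fun r ↦ |(Ioo 0 T).indicator φ r|
  have hp : MemLp p 2 := ((memLp_indicator_iff_restrict measurableSet_Ioo).2 hφ).norm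
  have hpT (r : ℝ) (hr : T ≤ r) : p r = 0 := by
    simp [p, indicator_of_notMem fun h : r ∈ Ioo 0 T ↦ h.2.not_ge hr]
  have hmajorant : MemLp (weylInt β p) 2 (volume.restrict (Ioo 0 T)) :=
    (memLp_two_weylInt hβ hp hpT 0).mono_measure
      (Measure.restrict_mono_set volume Ioo_subset_Ioi_self)
  have hcomm := (locallyIntegrable_of_integrableOn_Ioi
    (integrableOn_Ioi_weylCommutator_weylInt ha.1 haβ hG hψ hψT)).aestronglyMeasurable
  have hrpow : Measurable fun s : ℝ ↦ s ^ a := by fun_prop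
  refine (hmajorant.const_mul (C * (Real.Gamma (β - a) / |Real.Gamma (-a)|))).mono'
    (hrpow.aestronglyMeasurable.mul hcomm.restrict) ?_
  filter_upwards [ae_restrict_mem measurableSet_Ioo,
    ae_restrict_of_ae (ae_integrable_mul_fracKernel hψ hψT hβ),
    ae_restrict_of_ae (ae_integrable_mul_fracKernel (hp.locallyIntegrable (by norm_num)) hpT hβ)]
    with s hs hint hpint
  rw [norm_mul, norm_of_nonneg (rpow_nonneg hs.1.le a)]
  calc s ^ a * |weylCommutator a G (weylInt a (lambdaDensity T a φ)) s|
      ≤ s ^ a * (C * (Real.Gamma (β - a) / |Real.Gamma (-a)|) *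
          weylInt β (fun r ↦ |lambdaDensity T a φ r|) s) := by
        have := hs.1
        gcongr
        exact abs_weylCommutator_weylInt_le ha.1 haβ hG hψ.aestronglyMeasurable hint
    _ ≤ C * (Real.Gamma (β - a) / |Real.Gamma (-a)|) * weylInt β p s := by
        have := Gamma_pos_of_pos (sub_pos.2 haβ)
        rw [mul_left_comm]
        gcongr
        exact rpow_mul_weylInt_abs_lambdaDensity_le ha.1.le hβ hs.1.le hpint

theorem mul_fracKernel_sub_eq_indicator (hT : ∀ u, T ≤ u → h u = 0) (a s : ℝ) :
    (fun u ↦ h u * fracKernel a (u - s)) =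
      (Ioo s T).indicator fun u ↦ 1 / Real.Gamma a * (h u * (u - s) ^ (a - 1)) := by
  ext u
  by_cases hu : u ∈ Ioo s T
  · rw [indicator_of_mem hu, fracKernel_of_pos (sub_pos.2 hu.1)]
    ring
  · rw [indicator_of_notMem hu]
    rcases le_or_gt u s with hus | hsu
    · rw [fracKernel_of_nonpos (sub_nonpos.2 hus), mul_zero]
    · rw [hT u (not_lt.1 fun huT ↦ hu ⟨hsu, huT⟩), zero_mul]

theorem integral_mul_fracKernel_sub (hT : ∀ u, T ≤ u → h u = 0) (a s : ℝ) :
    ∫ u, h u * fracKernel a (u - s) =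
      1 / Real.Gamma a * ∫ u in Ioo s T, h u * (u - s) ^ (a - 1) := by
  rw [mul_fracKernel_sub_eq_indicator hT, integral_indicator measurableSet_Ioo, integral_const_mul]

theorem fracInt_eq_weylInt (hx : 0 ≤ x) :
    fracInt T a f x = weylInt a ((Ioo 0 T).indicator f) x := by
  rw [fracInt, weylInt, integral_mul_fracKernel_sub fun u hu ↦
    indicator_of_notMem (fun h ↦ h.2.not_ge hu) f]
  congr 1
  refine setIntegral_congr_fun measurableSet_Ioo fun u hu ↦ ?_
  simp only [indicator_of_mem (mem_Ioo.2 ⟨hx.trans_lt hu.1, hu.2⟩)]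

theorem weylCommutator_eq_setIntegral (ha : a ∈ Ioo 0 1) (hT : ∀ u, T ≤ u → h u = 0) (s : ℝ) :
    weylCommutator a G h s = a / Real.Gamma (1 - a) *
      ∫ u in Ioo s T, h u * (G s - G u) * (u - s) ^ (-1 - a) := by
  have ha' := ha.1.ne'
  have hΓ := (Gamma_neg_lt_zero ha).ne
  rw [weylCommutator, integral_mul_fracKernel_sub fun u hu ↦ by rw [hT u hu, zero_mul],
    Gamma_one_sub_eq ha, neg_mul, div_neg, neg_mul, ← mul_neg, ← integral_neg]
  congr 1
  · field_simp
  · congr 1 with u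
    ring_nf

theorem memLambda_iff : memLambda T a f φ ↔ MemLp φ 2 (volume.restrict (Ioo 0 T)) ∧
    ∀ᵐ u ∂volume.restrict (Ioo 0 T), f u = u ^ a * weylInt a (lambdaDensity T a φ) u := by
  rw [memLambda, ← restrict_Ioo_eq_restrict_Icc]
  refine and_congr_right fun _ ↦ Filter.eventually_congr ?_
  filter_upwards [ae_restrict_mem measurableSet_Ioo] with u hu
  rw [fracInt_eq_weylInt hu.1.le, lambdaDensity]

theorem memLambda_congr (hf : EqOn f h (Ioo 0 T)) (hφ : EqOn φ χ (Ioo 0 T)) :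
    memLambda T a f φ ↔ memLambda T a h χ := by
  have hae : φ =ᵐ[volume.restrict (Ioo 0 T)] χ :=
    (ae_restrict_mem measurableSet_Ioo).mono hφ
  have hdens : lambdaDensity T a φ = lambdaDensity T a χ :=
    indicator_congr fun s hs ↦ by rw [hφ hs]
  rw [memLambda_iff, memLambda_iff, memLp_congr_ae hae, hdens]
  refine and_congr_right fun _ ↦ Filter.eventually_congr ?_
  filter_upwards [ae_restrict_mem measurableSet_Ioo] with u hu
  rw [hf hu]

theorem memLambda_mul_of_holderWith (ha : a ∈ Ioo 0 (1 / 2)) (haβ : a < β)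
    (hG : HolderWith C β G) (hT : 0 < T) (hf : memLambda T a f φ) :
    memLambda T a (fun u ↦ G u * f u)
      fun s ↦ G s * φ s + s ^ a * weylCommutator a G (weylInt a (lambdaDensity T a φ)) s := by
  obtain ⟨hφ, hrep⟩ := memLambda_iff.1 hf
  have hψT (r : ℝ) (hr : T ≤ r) : lambdaDensity T a φ r = 0 := lambdaDensity_of_le hr
  have hψ := (integrable_lambdaDensity ha.2 hT hφ).locallyIntegrable
  have hcont : Continuous G := hG.continuous (by exact_mod_cast ha.1.trans haβ)
  obtain ⟨B, hB⟩ := isCompact_Icc.exists_bound_of_continuousOn (hcont.continuousOn (s := Icc 0 T))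
  have hGφ : MemLp (fun s ↦ G s * φ s) 2 (volume.restrict (Ioo 0 T)) := by
    refine hφ.of_le_mul (c := B) (hcont.aestronglyMeasurable.mul hφ.aestronglyMeasurable) ?_
    filter_upwards [ae_restrict_mem measurableSet_Ioo] with s hs
    rw [norm_mul]
    gcongr
    exact hB s (Ioo_subset_Icc_self hs)
  refine memLambda_iff.2 ⟨hGφ.add (memLp_two_rpow_mul_weylCommutator ha haβ hG hT hφ), ?_⟩
  filter_upwards [ae_restrict_mem measurableSet_Ioo, hrep, ae_restrict_of_ae
    (weylInt_mul_add_weylCommutator ⟨ha.1, by linarith [ha.2]⟩ haβ hG hψ hψT)] with u hu hfu hmul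
  rw [hfu, mul_left_comm, ← hmul]
  congr 1
  exact (weylInt_congr fun r hr ↦ lambdaDensity_mul_add (fun s hs ↦
    weylCommutator_eq_zero_of_le (fun v ↦ weylInt_eq_zero_of_le hψT) hs) (hu.1.trans hr)).symm

theorem mul_setIntegral_eq_rpow_mul_weylCommutator (ha : a ∈ Ioo 0 1)
    (hf : memLambda T a f φ) (hs : s ∈ Ioo 0 T) :
    a * s ^ a / Real.Gamma (1 - a) *
        ∫ u in Ioo s T, u ^ (-a) * f u * (G s - G u) * (u - s) ^ (-1 - a) =
      s ^ a * weylCommutator a G (weylInt a (lambdaDensity T a φ)) s := by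
  have hrep : ∀ᵐ u ∂volume.restrict (Ioo s T),
      f u = u ^ a * weylInt a (lambdaDensity T a φ) u :=
    ae_restrict_of_ae_restrict_of_subset (Ioo_subset_Ioo_left hs.1.le) (memLambda_iff.1 hf).2
  have hint : ∫ u in Ioo s T, u ^ (-a) * f u * (G s - G u) * (u - s) ^ (-1 - a) =
      ∫ u in Ioo s T, weylInt a (lambdaDensity T a φ) u * (G s - G u) * (u - s) ^ (-1 - a) := by
    refine integral_congr_ae ?_
    filter_upwards [hrep, ae_restrict_mem measurableSet_Ioo] with u hfu hu
    rw [hfu, ← mul_assoc, ← rpow_add (hs.1.trans hu.1), neg_add_cancel, rpow_zero, one_mul]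
  rw [hint, weylCommutator_eq_setIntegral ha fun u ↦ weylInt_eq_zero_of_le fun _ ↦
    lambdaDensity_of_le]
  ring

end Lambda

/-- Lemma 2.4 (explicit representative): if `f ∈ Λ^α_T` with representative `φ_f` and `g`
is Hölder continuous with exponent `β > α`, then
`s ↦ g(s)φ_f(s) + (α s^α/Γ(1-α)) ∫_s^T u^{-α} f(u)(g(s)-g(u))(u-s)^{-1-α} du`
belongs to `L²([0,T])` and is the representative of `g·f ∈ Λ^α_T`. -/
theorem holder_mul_memLambda_rep (T α β : ℝ) (hT : 0 < T)
    (hα : α ∈ Set.Ioo (0 : ℝ) (1 / 2)) (hβ : α < β)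
    (f φ : ℝ → ℝ) (hf : memLambda T α f φ)
    (g : ℝ → ℝ) (K : ℝ)
    (hg : ∀ s ∈ Set.Icc (0 : ℝ) T, ∀ t ∈ Set.Icc (0 : ℝ) T, |g s - g t| ≤ K * |s - t| ^ β) :
    memLambda T α (fun u => g u * f u)
      (fun s => g s * φ s + (α * s ^ α / Real.Gamma (1 - α)) *
        ∫ u in Set.Ioo s T, u ^ (-α) * f u * (g s - g u) * (u - s) ^ (-1 - α)) := by
  have hα1 : α ∈ Ioo 0 1 := ⟨hα.1, by linarith [hα.2]⟩
  lift β to ℝ≥0 using (hα.1.trans hβ).le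
  obtain ⟨G, hG, hGg⟩ := exists_holderWith_eqOn_Icc hT.le (holderOnWith_of_abs_sub_le hg)
  refine (memLambda_congr (fun u hu ↦ ?_) fun s hs ↦ ?_).1
    (memLambda_mul_of_holderWith hα hβ hG hT hf)
  · rw [hGg (Ioo_subset_Icc_self hu)]
  · have hcorrection := mul_setIntegral_eq_rpow_mul_weylCommutator (G := G) hα1 hf hs
    rw [← hcorrection, hGg (Ioo_subset_Icc_self hs)]
    congr 2
    refine setIntegral_congr_fun measurableSet_Ioo fun u hu ↦ ?_
    simp only [hGg ⟨hs.1.le.trans hu.1.le, hu.2.le⟩]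
end

section
/- Let a ∈ L²([0,T]) and e(t) = exp(∫_0^t a(s) ds). Let n ≥ 2, s = (s_1,…,s_n) ∈ [0,T]^n, 1 ≤ j ≤ n, let i_1 < ⋯ < i_j be indices in {1,…,n}, and let u_{i_k} ∈ [s_{i_k}, T] for k = 1,…,j. For each subset S ⊆ {i_1,…,i_j} define v^S ∈ [0,T]^n by v^S_i = u_i if i ∈ S and v^S_i = s_i otherwise. Then Σ_{S ⊆ {i_1,…,i_j}} (-1)^{|S|} e(max_{1≤i≤n} v^S_i) equals e(max_{1≤i≤n} s_i) − e(min_{1≤k≤j} u_{i_k}) if u_{i_k} ≥ max_{1≤i≤n} s_i for every k = 1,…,j, and equals 0 otherwise. -/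
open MeasureTheory Real Set
open scoped Classical

/-!
Write `M` for the maximum of `s` and let `u m` be the smallest of the `u i`. Pairing each `S` not
containing `m` with `insert m S` turns the sum into `∑ (-1)^|S| (e (max v^S) - e (max v^S ⊔ u m))`
over `S ⊆ J \ {m}`. A nonempty such `S` contains some `k`, so that `u m ≤ u k ≤ max v^S` and its
term vanishes. Only `S = ∅` survives, so the sum is `e M - e (M ⊔ u m)` in every case, and this is
`0` as soon as `u m ≤ M`.
-/

section AlternatingSum

variable {ι α G : Type*} [DecidableEq ι]

theorem sup'_update_of_le [SemilatticeSup α] {t : Finset ι} {f : ι → α} {m : ι} {a : α}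
    (hm : m ∈ t) (ha : f m ≤ a) :
    t.sup' ⟨m, hm⟩ (Function.update f m a) = t.sup' ⟨m, hm⟩ f ⊔ a := by
  apply le_antisymm
  · refine Finset.sup'_le _ _ fun i hi => ?_
    rcases eq_or_ne i m with rfl | him
    · simp
    · simpa [him] using le_sup_of_le_left (Finset.le_sup' f hi)
  · refine sup_le (Finset.sup'_mono_fun fun i _ => le_update_self_iff.mpr ha i) ?_
    exact Finset.le_sup'_of_le _ hm (Function.update_self m a f).ge

theorem sup'_piecewise_insert [SemilatticeSup α] {s u : ι → α} {t S : Finset ι} {m : ι}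
    (hmt : m ∈ t) (hmS : m ∉ S) (hsu : s m ≤ u m) :
    t.sup' ⟨m, hmt⟩ ((insert m S).piecewise u s) =
      t.sup' ⟨m, hmt⟩ (S.piecewise u s) ⊔ u m := by
  rw [Finset.piecewise_insert]
  exact sup'_update_of_le hmt ((Finset.piecewise_eq_of_notMem S u s hmS).trans_le hsu)

theorem inf'_le_sup'_piecewise [Lattice α] {s u : ι → α} {t J S : Finset ι} (hS : S.Nonempty)
    (hSJ : S ⊆ J) (hSt : S ⊆ t) :
    J.inf' (hS.mono hSJ) u ≤ t.sup' (hS.mono hSt) (S.piecewise u s) := by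
  obtain ⟨k, hk⟩ := hS
  calc J.inf' _ u ≤ u k := Finset.inf'_le u (hSJ hk)
    _ = S.piecewise u s k := (Finset.piecewise_eq_of_mem S u s hk).symm
    _ ≤ t.sup' _ (S.piecewise u s) := Finset.le_sup' (S.piecewise u s) (hSt hk)

theorem sum_powerset_insert_neg_one_pow_card_smul [AddCommGroup G] {J : Finset ι} {m : ι}
    (hm : m ∉ J) (F : Finset ι → G) :
    ∑ S ∈ (insert m J).powerset, (-1 : ℤ) ^ S.card • F S =
      ∑ S ∈ J.powerset, (-1 : ℤ) ^ S.card • (F S - F (insert m S)) := by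
  rw [Finset.sum_powerset_insert hm, ← Finset.sum_add_distrib]
  refine Finset.sum_congr rfl fun S hS => ?_
  have hmS : m ∉ S := Finset.notMem_of_mem_powerset_of_notMem hS hm
  rw [Finset.card_insert_of_notMem hmS, pow_succ, mul_neg_one, neg_smul, smul_sub, sub_eq_add_neg]

theorem sum_neg_one_pow_card_smul_sup'_piecewise [LinearOrder α] [AddCommGroup G] (f : α → G)
    {s u : ι → α} {t J : Finset ι} (hJ : J.Nonempty) (hJt : J ⊆ t) (hsu : ∀ i ∈ J, s i ≤ u i) :
    ∑ S ∈ J.powerset, (-1 : ℤ) ^ S.card • f (t.sup' (hJ.mono hJt) (S.piecewise u s)) =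
      f (t.sup' (hJ.mono hJt) s) - f (t.sup' (hJ.mono hJt) s ⊔ J.inf' hJ u) := by
  obtain ⟨m, hmJ, hm⟩ := J.exists_mem_eq_inf' hJ u
  have hm_erase : m ∉ J.erase m := Finset.notMem_erase m J
  let V (S : Finset ι) : α := t.sup' (hJ.mono hJt) (S.piecewise u s)
  have V_insert {S : Finset ι} (hS : S ∈ (J.erase m).powerset) : V (insert m S) = V S ⊔ u m :=
    sup'_piecewise_insert (hJt hmJ) (Finset.notMem_of_mem_powerset_of_notMem hS hm_erase)
      (hsu m hmJ)
  have le_V {S : Finset ι} (hS : S ∈ (J.erase m).powerset) (hne : S ≠ ∅) : u m ≤ V S := by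
    have hSJ : S ⊆ J := (Finset.mem_powerset.mp hS).trans (Finset.erase_subset m J)
    rw [← hm]
    exact inf'_le_sup'_piecewise (Finset.nonempty_iff_ne_empty.mpr hne) hSJ (hSJ.trans hJt)
  calc ∑ S ∈ J.powerset, (-1 : ℤ) ^ S.card • f (V S)
      = ∑ S ∈ (J.erase m).powerset, (-1 : ℤ) ^ S.card • (f (V S) - f (V (insert m S))) := by
        rw [← sum_powerset_insert_neg_one_pow_card_smul hm_erase (fun S => f (V S)),
          Finset.insert_erase hmJ]
    _ = ∑ S ∈ (J.erase m).powerset, (-1 : ℤ) ^ S.card • (f (V S) - f (V S ⊔ u m)) :=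
        Finset.sum_congr rfl fun S hS => by rw [V_insert hS]
    _ = (-1 : ℤ) ^ (∅ : Finset ι).card • (f (V ∅) - f (V ∅ ⊔ u m)) :=
        Finset.sum_eq_single_of_mem ∅ (Finset.empty_mem_powerset _) fun S hS hne => by
          rw [sup_of_le_left (le_V hS hne), sub_self, smul_zero]
    _ = f (t.sup' (hJ.mono hJt) s) - f (t.sup' (hJ.mono hJt) s ⊔ J.inf' hJ u) := by
        simp only [V, hm, Finset.card_empty, pow_zero, one_smul, Finset.piecewise_empty]

theorem alternating_sum_exp_general [LinearOrder α] [AddCommGroup G] (f : α → G)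
    {s u : ι → α} {t J : Finset ι} (hJ : J.Nonempty) (hJt : J ⊆ t) (hsu : ∀ i ∈ J, s i ≤ u i) :
    ∑ S ∈ J.powerset, (-1 : ℤ) ^ S.card •
        f (t.sup' (hJ.mono hJt) (fun i => if i ∈ S then u i else s i)) =
      if ∀ i ∈ J, t.sup' (hJ.mono hJt) s ≤ u i then
        f (t.sup' (hJ.mono hJt) s) - f (J.inf' hJ u)
      else 0 := by
  refine (sum_neg_one_pow_card_smul_sup'_piecewise f hJ hJt hsu).trans ?_
  simp only [← Finset.le_inf'_iff hJ]
  split_ifs with h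
  · rw [sup_of_le_right h]
  · rw [sup_of_le_left (not_le.mp h).le, sub_self]

end AlternatingSum

/-- Lemma 4.4.1: alternating-sum identity for `e(t) = exp(∫_0^t a(s) ds)`.
For `s ∈ [0,T]^n`, a nonempty index set `J` and `u_i ∈ [s_i,T]` for `i ∈ J`, the sum over
subsets `S ⊆ J` of `(-1)^{|S|} e(max_i v^S_i)` (where `v^S` replaces `s_i` by `u_i` for
`i ∈ S`) equals `e(max s) - e(min_{i∈J} u_i)` if all `u_i ≥ max s`, and `0` otherwise. -/
theorem alternating_sum_exp (T : ℝ) (hT : 0 < T) (a : ℝ → ℝ)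
    (ha : MemLp a 2 (volume.restrict (Set.Icc 0 T)))
    (e : ℝ → ℝ) (he : ∀ t, e t = Real.exp (∫ s in Set.Ioc 0 t, a s))
    (n : ℕ) (hn : 2 ≤ n) (s u : Fin n → ℝ)
    (hs : ∀ i, s i ∈ Set.Icc 0 T)
    (J : Finset (Fin n)) (hJ : J.Nonempty)
    (hu : ∀ i ∈ J, u i ∈ Set.Icc (s i) T) :
    ∑ S ∈ J.powerset, (-1 : ℝ) ^ S.card *
        e (Finset.univ.sup' (Finset.univ_nonempty_iff.mpr (Fin.pos_iff_nonempty.mp (by omega)))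
            (fun i => if i ∈ S then u i else s i)) =
      if ∀ i ∈ J,
          Finset.univ.sup' (Finset.univ_nonempty_iff.mpr (Fin.pos_iff_nonempty.mp (by omega))) s
            ≤ u i then
        e (Finset.univ.sup' (Finset.univ_nonempty_iff.mpr (Fin.pos_iff_nonempty.mp (by omega))) s)
          - e (J.inf' hJ u)
      else 0 := by
  convert alternating_sum_exp_general e hJ J.subset_univ fun i hi => (hu i hi).1 using 2
  simp only [zsmul_eq_mul, Int.cast_pow, Int.cast_neg, Int.cast_one]
end

section
/- Let (a_k)_{k≥0} be a sequence of nonnegative real numbers and let c ≥ 0. Then Σ_{n=0}^∞ (n+1)! · [ Σ_{k=0}^n a_k c^{n+1-k} / (n+1-k)! ]² ≤ exp(1 + c²) · Σ_{k=0}^∞ k! a_k² (1 + c²)^k, as an inequality in [0, +∞]. -/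
open MeasureTheory Real Set

/-!
Write `N = n + 1`. Splitting off the binomial weight `N.choose k * (c ^ 2) ^ (N - k)` in the
Cauchy–Schwarz inequality bounds the `n`-th term on the left by
`(1 + c ^ 2) ^ N * ∑ k < N, k! * a k ^ 2 / (N - k)!`, because the weights add up to at most
`(1 + c ^ 2) ^ N`. Since `(1 + c ^ 2) ^ N = (1 + c ^ 2) ^ k * (1 + c ^ 2) ^ (N - k)`, this bound is
the `n`-th term of the Cauchy product of the series `∑ k! * a k ^ 2 * (1 + c ^ 2) ^ k` and
`∑ (1 + c ^ 2) ^ (j + 1) / (j + 1)! = exp (1 + c ^ 2) - 1`.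
-/

section FiniteSums

variable {N : ℕ} {s : Finset ℕ}

theorem sum_pow_mul_pow_mul_choose_le {R : Type*} [CommSemiring R] [PartialOrder R]
    [IsOrderedRing R] {x y : R} (hx : 0 ≤ x) (hy : 0 ≤ y) (hs : s ⊆ Finset.range (N + 1)) :
    ∑ k ∈ s, x ^ k * y ^ (N - k) * N.choose k ≤ (x + y) ^ N := by
  rw [add_pow]
  exact Finset.sum_le_sum_of_subset_of_nonneg hs fun k _ _ ↦ by positivity

variable {K : Type*} [Field K] [LinearOrder K] [IsStrictOrderedRing K]

theorem factorial_mul_sq_sum_mul_pow_div_factorial_le (hs : s ⊆ Finset.range (N + 1))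
    (a : ℕ → K) (c : K) :
    (N.factorial : K) * (∑ k ∈ s, a k * c ^ (N - k) / ((N - k).factorial : K)) ^ 2 ≤
      (1 + c ^ 2) ^ N * ∑ k ∈ s, (k.factorial : K) * a k ^ 2 / ((N - k).factorial : K) := by
  have cauchy_schwarz : (∑ k ∈ s, a k * c ^ (N - k) / ((N - k).factorial : K)) ^ 2 ≤
      (∑ k ∈ s, 1 ^ k * (c ^ 2) ^ (N - k) * (N.choose k : K)) *
        ∑ k ∈ s, (k.factorial : K) * a k ^ 2 / ((N - k).factorial : K) / N.factorial := by
    refine Finset.sum_sq_le_sum_mul_sum_of_sq_le_mul s (fun k _ ↦ by positivity)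
      (fun k _ ↦ by positivity) fun k hk ↦ le_of_eq ?_
    rw [Nat.cast_choose K (Finset.mem_range_succ_iff.mp (hs hk))]
    field
  calc
    _ ≤ (N.factorial : K) * ((1 + c ^ 2) ^ N *
          ∑ k ∈ s, (k.factorial : K) * a k ^ 2 / ((N - k).factorial : K) / N.factorial) := by
      grw [cauchy_schwarz, sum_pow_mul_pow_mul_choose_le zero_le_one (sq_nonneg c) hs]
    _ = _ := by
      rw [← Finset.sum_div]
      field

theorem factorial_mul_sq_sum_range_le_sum_range_mul (a : ℕ → K) (c : K) (n : ℕ) :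
    ((n + 1).factorial : K) *
        (∑ k ∈ Finset.range (n + 1), a k * c ^ (n + 1 - k) / ((n + 1 - k).factorial : K)) ^ 2 ≤
      ∑ k ∈ Finset.range (n + 1), (k.factorial : K) * a k ^ 2 * (1 + c ^ 2) ^ k *
        ((1 + c ^ 2) ^ (n - k + 1) / ((n - k + 1).factorial : K)) := by
  refine (factorial_mul_sq_sum_mul_pow_div_factorial_le
    (Finset.range_subset_range.mpr (n + 1).le_succ) a c).trans_eq ?_
  rw [Finset.mul_sum]
  refine Finset.sum_congr rfl fun k hk ↦ ?_
  have hkn : k ≤ n := Finset.mem_range_succ_iff.mp hk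
  rw [← pow_mul_pow_sub (1 + c ^ 2) (Nat.le_add_right_of_le hkn), Nat.sub_add_comm hkn]
  ring

end FiniteSums

section Series

open scoped ENNReal

theorem ennreal_tsum_mul_tsum_eq_tsum_sum_antidiagonal {A : Type*} [AddMonoid A]
    [Finset.HasAntidiagonal A] (f g : A → ℝ≥0∞) :
    (∑' i, f i) * ∑' j, g j = ∑' n, ∑ p ∈ Finset.HasAntidiagonal.antidiagonal n, f p.1 * g p.2 := by
  calc
    (∑' i, f i) * ∑' j, g j = ∑' p : A × A, f p.1 * g p.2 := by
      simp_rw [ENNReal.tsum_prod', ENNReal.tsum_mul_left, ENNReal.tsum_mul_right]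
    _ = ∑' n, ∑' p : Finset.HasAntidiagonal.antidiagonal n, f p.1.1 * g p.1.2 := by
      rw [← Finset.HasAntidiagonal.sigmaAntidiagonalEquivProd.tsum_eq, ENNReal.tsum_sigma']
      rfl
    _ = ∑' n, ∑ p ∈ Finset.HasAntidiagonal.antidiagonal n, f p.1 * g p.2 :=
      tsum_congr fun n ↦ Finset.tsum_subtype _ fun p : A × A ↦ f p.1 * g p.2

theorem ennreal_tsum_mul_tsum_eq_tsum_sum_range (f g : ℕ → ℝ≥0∞) :
    (∑' i, f i) * ∑' j, g j = ∑' n, ∑ k ∈ Finset.range (n + 1), f k * g (n - k) := by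
  simp_rw [← Finset.Nat.sum_antidiagonal_eq_sum_range_succ fun i j ↦ f i * g j]
  exact ennreal_tsum_mul_tsum_eq_tsum_sum_antidiagonal f g

theorem hasSum_pow_succ_div_factorial_succ (x : ℝ) :
    HasSum (fun j : ℕ ↦ x ^ (j + 1) / ((j + 1).factorial : ℝ)) (exp x - 1) := by
  rw [Real.exp_eq_exp_ℝ]
  simpa using (hasSum_nat_add_iff' 1).mpr (NormedSpace.expSeries_div_hasSum_exp x)

theorem ofReal_exp_sub_one_eq_tsum {x : ℝ} (hx : 0 ≤ x) :
    ENNReal.ofReal (exp x - 1) =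
      ∑' j : ℕ, ENNReal.ofReal (x ^ (j + 1) / ((j + 1).factorial : ℝ)) := by
  have h := hasSum_pow_succ_div_factorial_succ x
  rw [← h.tsum_eq, ENNReal.ofReal_tsum_of_nonneg (fun j ↦ by positivity) h.summable]

end Series

theorem series_bound_exp_general (a : ℕ → ℝ) (c : ℝ) :
    ∑' n : ℕ, ENNReal.ofReal (((n + 1).factorial : ℝ) *
        (∑ k ∈ Finset.range (n + 1), a k * c ^ (n + 1 - k) / ((n + 1 - k).factorial : ℝ)) ^ 2) ≤
      ENNReal.ofReal (Real.exp (1 + c ^ 2) - 1) *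
        ∑' k : ℕ, ENNReal.ofReal ((k.factorial : ℝ) * a k ^ 2 * (1 + c ^ 2) ^ k) := by
  rw [mul_comm, ofReal_exp_sub_one_eq_tsum (by positivity),
    ennreal_tsum_mul_tsum_eq_tsum_sum_range]
  refine ENNReal.tsum_le_tsum fun n ↦ ?_
  grw [factorial_mul_sq_sum_range_le_sum_range_mul a c n]
  rw [ENNReal.ofReal_sum_of_nonneg fun k _ ↦ by positivity]
  exact Finset.sum_le_sum fun k _ ↦ (ENNReal.ofReal_mul (by positivity)).le

/-- Lemma 4.7.1 (abstract form): for nonnegative `a_k` and `c ≥ 0`,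
`Σ_n (n+1)! [Σ_{k=0}^n a_k c^{n+1-k}/(n+1-k)!]² ≤ exp(1+c²) Σ_k k! a_k² (1+c²)^k`
as an inequality in `[0,∞]`. -/
theorem series_bound_exp (a : ℕ → ℝ) (ha : ∀ k, 0 ≤ a k) (c : ℝ) (hc : 0 ≤ c) :
    ∑' n : ℕ, ENNReal.ofReal (((n + 1).factorial : ℝ) *
        (∑ k ∈ Finset.range (n + 1), a k * c ^ (n + 1 - k) / ((n + 1 - k).factorial : ℝ)) ^ 2) ≤
      ENNReal.ofReal (Real.exp (1 + c ^ 2)) *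
        ∑' k : ℕ, ENNReal.ofReal ((k.factorial : ℝ) * a k ^ 2 * (1 + c ^ 2) ^ k) := by
  grw [series_bound_exp_general a c, sub_le_self _ zero_le_one]
end

section
/- Let (a_k)_{k≥0} be a sequence of nonnegative real numbers, let C > 0 and d ≥ 0, and set B = 1 + C d². Then Σ_{n=0}^∞ (n+1)! · [ Σ_{k=0}^n C^{(n+1-k)/2} a_k d^{n-k} / (n-k)! ]² ≤ C · e^{B} · ( Σ_{k=0}^∞ (k+1)! a_k² B^k + Σ_{k=0}^∞ k! a_k² B^{k+1} ), as an inequality in [0, +∞]. -/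
open MeasureTheory Real Set

/-!
After absorbing `√C` into the sequence and putting `c = √C d`, the inner sum is the `n`-th Cauchy
product coefficient of `a` with the exponential series of `c`. Cauchy–Schwarz with the binomial
weights `n.choose k * c ^ (2 * (n - k))`, whose sum is `B ^ n` for `B = 1 + c ^ 2`, bounds its
square by `B ^ n / n!` times `∑ k! a_k ^ 2 / (n - k)!`. Everything is nonnegative, so the sum over
`n = k + m` may be taken over `m` first, and `∑ (k + 1 + m) B ^ m / m! = (k + 1 + B) e ^ B`.
-/

open Finset.HasAntidiagonal (antidiagonal mem_antidiagonal)
open scoped Nat ENNReal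

theorem hasSum_natCast_mul_pow_div_factorial {𝔸 : Type*} [NormedDivisionRing 𝔸]
    [NormedAlgebra ℚ 𝔸] [CompleteSpace 𝔸] (x : 𝔸) :
    HasSum (fun n : ℕ ↦ (n : 𝔸) * (x ^ n / n !)) (x * NormedSpace.exp x) := by
  have : CharZero 𝔸 := algebraRat.charZero 𝔸
  have shift (n : ℕ) :
      ((n + 1 : ℕ) : 𝔸) * (x ^ (n + 1) / ((n + 1)! : ℕ)) = x * (x ^ n / n !) := by
    have hn : ((n + 1 : ℕ) : 𝔸) ≠ 0 := Nat.cast_ne_zero.mpr n.succ_ne_zero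
    rw [← mul_div_assoc, (Nat.cast_commute (n + 1) (x ^ (n + 1))).eq, Nat.factorial_succ,
      Nat.mul_comm, Nat.cast_mul, mul_div_mul_right _ _ hn, pow_succ', mul_div_assoc]
  rw [← hasSum_nat_add_iff' 1]
  simpa only [shift, Finset.sum_range_one, Nat.cast_zero, zero_mul, sub_zero] using
    (NormedSpace.expSeries_div_hasSum_exp x).mul_left x

theorem hasSum_add_natCast_mul_pow_div_factorial {𝔸 : Type*} [NormedDivisionRing 𝔸]
    [NormedAlgebra ℚ 𝔸] [CompleteSpace 𝔸] (x y : 𝔸) :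
    HasSum (fun n : ℕ ↦ (y + n) * (x ^ n / n !)) ((y + x) * NormedSpace.exp x) := by
  simpa only [add_mul] using ((NormedSpace.expSeries_div_hasSum_exp x).mul_left y).add
    (hasSum_natCast_mul_pow_div_factorial x)

theorem sq_sum_antidiagonal_mul_pow_div_factorial_le {K : Type*} [Field K] [LinearOrder K]
    [IsStrictOrderedRing K] (a : ℕ → K) (c : K) (n : ℕ) :
    (∑ p ∈ antidiagonal n, a p.1 * c ^ p.2 / p.2 !) ^ 2 ≤
      (1 + c ^ 2) ^ n / n ! * ∑ p ∈ antidiagonal n, p.1 ! * a p.1 ^ 2 / p.2 ! := by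
  have binomial : ∑ p ∈ antidiagonal n, (n.choose p.1 : K) * (c ^ 2) ^ p.2 / n ! =
      (1 + c ^ 2) ^ n / n ! := by
    simp only [(Commute.one_left (c ^ 2)).add_pow', one_pow, one_mul, nsmul_eq_mul,
      Finset.sum_div]
  rw [← binomial]
  refine Finset.sum_sq_le_sum_mul_sum_of_sq_le_mul _ (fun p _ ↦ by positivity)
    (fun p _ ↦ by positivity) fun p hp ↦ le_of_eq ?_
  rw [← mem_antidiagonal.mp hp, Nat.cast_add_choose, pow_right_comm c 2]
  field_simp

theorem tsum_sum_antidiagonal_eq_tsum_tsum {A : Type*} [AddMonoid A] [Finset.HasAntidiagonal A]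
    (f : A → A → ℝ≥0∞) :
    ∑' n, ∑ p ∈ antidiagonal n, f p.1 p.2 = ∑' k, ∑' m, f k m := by
  rw [← ENNReal.tsum_prod, ← Finset.HasAntidiagonal.sigmaAntidiagonalEquivProd.tsum_eq,
    ENNReal.tsum_sigma']
  exact tsum_congr fun n ↦ (Finset.tsum_subtype _ fun p : A × A ↦ f p.1 p.2).symm

theorem tsum_factorial_mul_sq_sum_antidiagonal_le (a : ℕ → ℝ) (c : ℝ) :
    ∑' n : ℕ, ENNReal.ofReal
        ((n + 1)! * (∑ p ∈ antidiagonal n, a p.1 * c ^ p.2 / p.2 !) ^ 2) ≤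
      ∑' k : ℕ, ENNReal.ofReal
        (k ! * a k ^ 2 * (1 + c ^ 2) ^ k * ((k + 1 + (1 + c ^ 2)) * exp (1 + c ^ 2))) := by
  set B := 1 + c ^ 2 with hB
  have : 0 ≤ B := by positivity
  let F (k m : ℕ) : ℝ := k ! * a k ^ 2 * B ^ k * ((k + 1 + m) * (B ^ m / m !))
  have F_nonneg (k m : ℕ) : 0 ≤ F k m := by positivity
  have sq_le (n : ℕ) :
      (n + 1)! * (∑ p ∈ antidiagonal n, a p.1 * c ^ p.2 / p.2 !) ^ 2 ≤
        ∑ p ∈ antidiagonal n, F p.1 p.2 := by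
    refine (mul_le_mul_of_nonneg_left (sq_sum_antidiagonal_mul_pow_div_factorial_le a c n)
      (by positivity)).trans_eq ?_
    rw [Finset.mul_sum, Finset.mul_sum]
    refine Finset.sum_congr rfl fun p hp ↦ ?_
    simp only [F, ← hB, ← mem_antidiagonal.mp hp, Nat.factorial_succ, pow_add]
    push_cast
    field_simp
    ring
  have hasSum_F (k : ℕ) :
      HasSum (F k) (k ! * a k ^ 2 * B ^ k * ((k + 1 + B) * exp B)) := by
    rw [exp_eq_exp_ℝ]
    exact (hasSum_add_natCast_mul_pow_div_factorial B (k + 1 : ℝ)).mul_left _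
  calc
    _ ≤ ∑' n, ∑ p ∈ antidiagonal n, ENNReal.ofReal (F p.1 p.2) := by
      refine ENNReal.tsum_le_tsum fun n ↦ ?_
      rw [← ENNReal.ofReal_sum_of_nonneg fun p _ ↦ F_nonneg p.1 p.2]
      exact ENNReal.ofReal_le_ofReal (sq_le n)
    _ = ∑' k, ∑' m, ENNReal.ofReal (F k m) :=
      tsum_sum_antidiagonal_eq_tsum_tsum fun k m ↦ ENNReal.ofReal (F k m)
    _ = _ := tsum_congr fun k ↦ by
      rw [← ENNReal.ofReal_tsum_of_nonneg (F_nonneg k) (hasSum_F k).summable, (hasSum_F k).tsum_eq]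

theorem sum_range_rpow_half_mul_eq_sum_antidiagonal (a : ℕ → ℝ) {C : ℝ} (hC : 0 ≤ C) (d : ℝ)
    (n : ℕ) :
    ∑ k ∈ Finset.range (n + 1),
        C ^ (((n + 1 - k : ℕ) : ℝ) / 2) * a k * d ^ (n - k) / ((n - k)! : ℝ) =
      ∑ p ∈ antidiagonal n, √C * a p.1 * (√C * d) ^ p.2 / p.2 ! := by
  rw [Finset.Nat.sum_antidiagonal_eq_sum_range_succ_mk]
  refine Finset.sum_congr rfl fun k hk ↦ ?_
  rw [rpow_div_two_eq_sqrt _ hC, rpow_natCast, Nat.sub_add_comm (Finset.mem_range_succ_iff.mp hk)]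
  ring

theorem series_bound_exp'_general (a : ℕ → ℝ) {C : ℝ} (hC : 0 ≤ C) (d : ℝ) :
    ∑' n : ℕ, ENNReal.ofReal (((n + 1).factorial : ℝ) *
        (∑ k ∈ Finset.range (n + 1),
          C ^ (((n + 1 - k : ℕ) : ℝ) / 2) * a k * d ^ (n - k) / ((n - k).factorial : ℝ)) ^ 2) ≤
      ENNReal.ofReal (C * Real.exp (1 + C * d ^ 2)) *
        (∑' k : ℕ, ENNReal.ofReal (((k + 1).factorial : ℝ) * a k ^ 2 * (1 + C * d ^ 2) ^ k) +
         ∑' k : ℕ, ENNReal.ofReal ((k.factorial : ℝ) * a k ^ 2 * (1 + C * d ^ 2) ^ (k + 1))) := by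
  simp only [sum_range_rpow_half_mul_eq_sum_antidiagonal a hC]
  refine (tsum_factorial_mul_sq_sum_antidiagonal_le (fun k ↦ √C * a k) (√C * d)).trans_eq ?_
  rw [← ENNReal.tsum_add, ← ENNReal.tsum_mul_left]
  refine tsum_congr fun k ↦ ?_
  rw [← ENNReal.ofReal_add (by positivity) (by positivity), ← ENNReal.ofReal_mul (by positivity),
    mul_pow, mul_pow, sq_sqrt hC, Nat.factorial_succ]
  congr 1
  push_cast
  ring

/-- Lemma 4.8.1 (abstract form): for nonnegative `a_k`, `C > 0`, `d ≥ 0` and `B = 1 + Cd²`,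
`Σ_n (n+1)! [Σ_{k=0}^n C^{(n+1-k)/2} a_k d^{n-k}/(n-k)!]²
  ≤ C e^B (Σ_k (k+1)! a_k² B^k + Σ_k k! a_k² B^{k+1})` in `[0,∞]`. -/
theorem series_bound_exp' (a : ℕ → ℝ) (ha : ∀ k, 0 ≤ a k) (C d : ℝ) (hC : 0 < C)
    (hd : 0 ≤ d) :
    ∑' n : ℕ, ENNReal.ofReal (((n + 1).factorial : ℝ) *
        (∑ k ∈ Finset.range (n + 1),
          C ^ (((n + 1 - k : ℕ) : ℝ) / 2) * a k * d ^ (n - k) / ((n - k).factorial : ℝ)) ^ 2) ≤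
      ENNReal.ofReal (C * Real.exp (1 + C * d ^ 2)) *
        (∑' k : ℕ, ENNReal.ofReal (((k + 1).factorial : ℝ) * a k ^ 2 * (1 + C * d ^ 2) ^ k) +
         ∑' k : ℕ, ENNReal.ofReal ((k.factorial : ℝ) * a k ^ 2 * (1 + C * d ^ 2) ^ (k + 1))) :=
  series_bound_exp'_general a hC.le d
end

section
/- Let (a_k)_{k≥0} be a sequence of nonnegative real numbers, let c ≥ 0 and θ ∈ ℝ. Then Σ_{n=1}^∞ e^{nθ} √(n!) · Σ_{j=1}^n a_{n-j} c^j / j! ≤ ( Σ_{n=1}^∞ (e^{θ + 1/2} c)^n / √(n!) ) · ( Σ_{k=0}^∞ e^{kθ} k^{k/2} a_k ), as an inequality in [0, +∞], with the convention 0^0 = 1 in the k = 0 term. -/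
open MeasureTheory Real Set

/-!
Writing `n = k + j`, the left-hand side is a double series over `k ≥ 0`, `j ≥ 1`, and the right-hand
side is a product of a series in `j` and a series in `k`, so it suffices to compare the terms. This
comes down to `(k + j)! / j! ≤ (k + j) ^ k = k ^ k * (1 + j / k) ^ k ≤ k ^ k * e ^ j`.
-/

open scoped ENNReal Nat

theorem ennreal_tsum_sum_antidiagonal {A : Type*} [AddMonoid A] [Finset.HasAntidiagonal A]
    (f : A × A → ℝ≥0∞) : ∑' n, ∑ p ∈ Finset.HasAntidiagonal.antidiagonal n, f p = ∑' p, f p := by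
  rw [← Finset.HasAntidiagonal.sigmaAntidiagonalEquivProd.tsum_eq f, ENNReal.tsum_sigma']
  exact tsum_congr fun n => (Finset.tsum_subtype (Finset.HasAntidiagonal.antidiagonal n) f).symm

theorem sum_Icc_add_eq_sum_antidiagonal {M : Type*} [AddCommMonoid M] (F : ℕ → ℕ → M) (d m : ℕ) :
    ∑ j ∈ Finset.Icc d (m + d), F (m + d - j) j =
      ∑ p ∈ Finset.HasAntidiagonal.antidiagonal m, F p.1 (p.2 + d) := by
  have hIcc : Finset.Icc d (m + d) = (Finset.range (m + 1)).map (addRightEmbedding d) := by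
    rw [Nat.range_succ_eq_Icc_zero, Finset.map_add_right_Icc, zero_add]
  rw [hIcc, Finset.sum_map, ← Finset.Nat.sum_antidiagonal_swap,
    Finset.Nat.sum_antidiagonal_eq_sum_range_succ_mk]
  simp only [addRightEmbedding_apply, Nat.add_sub_add_right, Prod.fst_swap, Prod.snd_swap]

theorem ennreal_tsum_sum_Icc (F : ℕ → ℕ → ℝ≥0∞) (d : ℕ) :
    ∑' n, ∑ j ∈ Finset.Icc d n, F (n - j) j = ∑' k, ∑' j, F k (j + d) := by
  have hinitial : ∑ n ∈ Finset.range d, ∑ j ∈ Finset.Icc d n, F (n - j) j = 0 :=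
    Finset.sum_eq_zero fun n hn => by
      rw [Finset.Icc_eq_empty_of_lt (Finset.mem_range.mp hn), Finset.sum_empty]
  calc ∑' n, ∑ j ∈ Finset.Icc d n, F (n - j) j
      = ∑' m, ∑ j ∈ Finset.Icc d (m + d), F (m + d - j) j := by
        rw [← ENNReal.summable.sum_add_tsum_nat_add' (k := d), hinitial, zero_add]
    _ = ∑' m, ∑ p ∈ Finset.HasAntidiagonal.antidiagonal m, F p.1 (p.2 + d) :=
        tsum_congr (sum_Icc_add_eq_sum_antidiagonal F d)
    _ = ∑' p : ℕ × ℕ, F p.1 (p.2 + d) := ennreal_tsum_sum_antidiagonal _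
    _ = ∑' k, ∑' j, F k (j + d) := ENNReal.tsum_prod (f := fun k j => F k (j + d))

theorem add_natCast_pow_le_exp_mul_pow {n : ℕ} {x : ℝ} (hx : -(n : ℝ) ≤ x) :
    (x + n) ^ n ≤ exp x * (n : ℝ) ^ n := by
  rcases eq_or_ne n 0 with rfl | hn
  · simpa using hx
  have hn' : (n : ℝ) ≠ 0 := Nat.cast_ne_zero.mpr hn
  calc (x + n) ^ n = (1 - -x / n) ^ n * (n : ℝ) ^ n := by
        rw [← mul_pow]
        congr 1
        field_simp
        ring
    _ ≤ exp x * (n : ℝ) ^ n := by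
        gcongr
        simpa only [neg_neg] using one_sub_div_pow_le_exp_neg (neg_le.mp hx)

theorem factorial_add_le_exp_mul_pow_mul_factorial (k j : ℕ) :
    ((k + j)! : ℝ) ≤ exp j * (k : ℝ) ^ k * j ! := by
  have hfactorial : (k + j)! ≤ (j + k) ^ k * j ! := by
    rw [add_comm k j, ← Nat.factorial_mul_ascFactorial, mul_comm]
    gcongr
    exact Nat.ascFactorial_le_pow_add j k
  have hpow : ((j : ℝ) + k) ^ k ≤ exp j * (k : ℝ) ^ k :=
    add_natCast_pow_le_exp_mul_pow (by linarith [j.cast_nonneg (α := ℝ), k.cast_nonneg (α := ℝ)])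
  calc ((k + j)! : ℝ) ≤ ((j : ℝ) + k) ^ k * j ! := by exact_mod_cast hfactorial
    _ ≤ exp j * (k : ℝ) ^ k * j ! := by gcongr

theorem sqrt_factorial_add_le (k j : ℕ) :
    √((k + j)! : ℝ) ≤ exp (1 / 2) ^ j * (k : ℝ) ^ ((k : ℝ) / 2) * √(j ! : ℝ) := by
  have hexp : √(exp j) = exp (1 / 2) ^ j := by
    rw [← exp_half, ← exp_nat_mul, mul_one_div]
  have hpow : √((k : ℝ) ^ k) = (k : ℝ) ^ ((k : ℝ) / 2) := by
    rw [sqrt_eq_rpow, ← rpow_natCast, ← rpow_mul k.cast_nonneg, mul_one_div]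
  calc √((k + j)! : ℝ) ≤ √(exp j * (k : ℝ) ^ k * j !) :=
        sqrt_le_sqrt (factorial_add_le_exp_mul_pow_mul_factorial k j)
    _ = exp (1 / 2) ^ j * (k : ℝ) ^ ((k : ℝ) / 2) * √(j ! : ℝ) := by
        rw [sqrt_mul (by positivity), sqrt_mul (exp_nonneg _), hexp, hpow]

theorem exp_mul_sqrt_factorial_add_mul_le {c : ℝ} (hc : 0 ≤ c) (θ : ℝ) (k j : ℕ) :
    exp ((k + j : ℕ) * θ) * √((k + j)! : ℝ) * (c ^ j / j !) ≤
      (exp (θ + 1 / 2) * c) ^ j / √(j ! : ℝ) * (exp (k * θ) * (k : ℝ) ^ ((k : ℝ) / 2)) := by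
  have hexp : exp ((k + j : ℕ) * θ) = exp (k * θ) * exp θ ^ j := by
    rw [Nat.cast_add, add_mul, exp_add, exp_nat_mul θ j]
  have hsqrt : √(j ! : ℝ) / j ! = 1 / √(j ! : ℝ) := sqrt_div_self'
  calc exp ((k + j : ℕ) * θ) * √((k + j)! : ℝ) * (c ^ j / j !)
      ≤ exp ((k + j : ℕ) * θ) * (exp (1 / 2) ^ j * (k : ℝ) ^ ((k : ℝ) / 2) * √(j ! : ℝ)) *
          (c ^ j / j !) := by
        gcongr
        exact sqrt_factorial_add_le k j
    _ = exp (k * θ) * (exp θ * exp (1 / 2) * c) ^ j * (k : ℝ) ^ ((k : ℝ) / 2) *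
          (√(j ! : ℝ) / j !) := by
        rw [hexp]
        ring
    _ = (exp (θ + 1 / 2) * c) ^ j / √(j ! : ℝ) * (exp (k * θ) * (k : ℝ) ^ ((k : ℝ) / 2)) := by
        rw [hsqrt, exp_add]
        ring

/-- Estimate (3.9.1) (abstract form): for nonnegative `a_k`, `c ≥ 0` and `θ ∈ ℝ`,
`Σ_{n≥1} e^{nθ} √(n!) Σ_{j=1}^n a_{n-j} c^j/j!
  ≤ (Σ_{n≥1} (e^{θ+1/2}c)^n/√(n!)) · (Σ_k e^{kθ} k^{k/2} a_k)` in `[0,∞]`,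
with the convention `0^0 = 1` in the `k = 0` term. -/
theorem series_bound_continuity (a : ℕ → ℝ) (ha : ∀ k, 0 ≤ a k) (c : ℝ) (hc : 0 ≤ c)
    (θ : ℝ) :
    ∑' n : ℕ, ENNReal.ofReal (Real.exp (n * θ) * Real.sqrt (n.factorial : ℝ) *
        ∑ j ∈ Finset.Icc 1 n, a (n - j) * c ^ j / (j.factorial : ℝ)) ≤
      (∑' n : ℕ, ENNReal.ofReal ((Real.exp (θ + 1 / 2) * c) ^ (n + 1) /
          Real.sqrt ((n + 1).factorial : ℝ))) *
        ∑' k : ℕ, ENNReal.ofReal (Real.exp (k * θ) * (k : ℝ) ^ ((k : ℝ) / 2) * a k) := by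
  let F (k j : ℕ) : ℝ := exp ((k + j : ℕ) * θ) * √((k + j)! : ℝ) * (a k * c ^ j / j !)
  let u (j : ℕ) : ℝ := (exp (θ + 1 / 2) * c) ^ j / √(j ! : ℝ)
  let v (k : ℕ) : ℝ := exp (k * θ) * (k : ℝ) ^ ((k : ℝ) / 2) * a k
  have hF (k j : ℕ) : 0 ≤ F k j := by have := ha k; positivity
  have hle (k j : ℕ) : F k j ≤ u j * v k := by
    have := mul_le_mul_of_nonneg_right (exp_mul_sqrt_factorial_add_mul_le hc θ k j) (ha k)
    simp only [F, u, v]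
    linear_combination this
  calc _ = ∑' n, ∑ j ∈ Finset.Icc 1 n, ENNReal.ofReal (F (n - j) j) := by
        refine tsum_congr fun n => ?_
        rw [← ENNReal.ofReal_sum_of_nonneg fun j _ => hF (n - j) j, Finset.mul_sum]
        refine congrArg _ (Finset.sum_congr rfl fun j hj => ?_)
        simp only [F, Nat.sub_add_cancel (Finset.mem_Icc.mp hj).2]
    _ = ∑' k, ∑' j, ENNReal.ofReal (F k (j + 1)) :=
        ennreal_tsum_sum_Icc (fun k j => ENNReal.ofReal (F k j)) 1
    _ ≤ ∑' k, ∑' j, ENNReal.ofReal (u (j + 1)) * ENNReal.ofReal (v k) := by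
        gcongr with k j
        rw [← ENNReal.ofReal_mul (by positivity)]
        exact ENNReal.ofReal_le_ofReal (hle k (j + 1))
    _ = (∑' j, ENNReal.ofReal (u (j + 1))) * ∑' k, ENNReal.ofReal (v k) := by
        simp only [ENNReal.tsum_mul_right, ENNReal.tsum_mul_left]
end

section
/- Let α ∈ (0,1/2), p ∈ (2, 1/α), and let b ∈ Λ^α_T with representative φ_b ∈ L^p([0,T]). For t ∈ [0,T] let φ_t ∈ L²([0,T]) denote the representative of b·1_{[0,t]} ∈ Λ^α_T. Then for every δ with 0 < δ < min( (p-2)/(2p), α, (1-αp)/p ) there exists a constant C_δ, depending only on α, p, δ and T, such that ‖φ_t − φ_s‖_{L²([0,T])} ≤ C_δ ‖φ_b‖_{L^p([0,T])} (t-s)^{δ} for all 0 ≤ s ≤ t ≤ T. -/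
open MeasureTheory Real Set

/-!
On `(0, t)` the functions `b·1_{[0,t]}` and `b` agree, so the densities `u^{-α} φ_t` and
`u^{-α} φ_b` have the same fractional integrals there; since the former vanishes beyond `t`, it is
the latter on `(0, t)` plus the Riesz balayage of its tail on `(t, T)`. A density with these
fractional integrals is unique: composing with the integral of order `1 - α` turns them into
ordinary integrals (Abel inversion).

The balayage kernel is `(v - t)^α (t - r)^{-α} / (v - r)` up to a constant, a weighted Hilbert
kernel, and Schur's test bounds it on `L^q` whenever `α q < 1`. Since `φ_s` is obtained from `φ_t`
as `φ_t` is from `φ_b`, the case `q = 2` gives `‖φ_t - φ_s‖₂ ≤ C ‖φ_t‖_{L²(s,t)}`, Hölder's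
inequality on `(s, t)` passes to the `L^p` norm of `φ_t`, and the case `q = p` to that of `φ_b`.
-/

open ProbabilityTheory (beta beta_pos)

section BetaIntegrals

lemma beta_symm (a b : ℝ) : beta a b = beta b a := by
  simp only [beta, mul_comm, add_comm]

lemma lintegral_Ioo_rpow_mul_one_sub_rpow {a b : ℝ} (ha : 0 < a) (hb : 0 < b) :
    ∫⁻ y in Ioo (0 : ℝ) 1, ENNReal.ofReal (y ^ (a - 1) * (1 - y) ^ (b - 1)) =
      ENNReal.ofReal (beta a b) := by
  have hB := beta_pos ha hb
  have h := ProbabilityTheory.lintegral_betaPDF_eq_one ha hb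
  simp only [ProbabilityTheory.lintegral_betaPDF, one_div, mul_assoc,
    ENNReal.ofReal_mul (inv_pos.2 hB).le] at h
  rw [lintegral_const_mul' _ _ ENNReal.ofReal_ne_top, ENNReal.ofReal_inv_of_pos hB] at h
  simpa using ENNReal.eq_inv_of_mul_eq_one_left ((mul_comm _ _).trans h)

lemma lintegral_Ioi_rpow_mul_add_mul_rpow {a b c d : ℝ} (ha : 0 < a) (hb : 0 < b) (hc : 0 < c)
    (hd : 0 < d) :
    ∫⁻ z in Ioi (0 : ℝ), ENNReal.ofReal (z ^ (a - 1) * (c + d * z) ^ (-(a + b))) =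
      ENNReal.ofReal (c ^ (-b) * d ^ (-a) * beta a b) := by
  have himage : (fun z => d * z / (c + d * z)) '' Ioi 0 = Ioo 0 1 := by
    refine Subset.antisymm ?_ fun y ⟨hy0, hy1⟩ => ⟨c * y / (d * (1 - y)), ?_, ?_⟩
    · rintro _ ⟨z, hz : 0 < z, rfl⟩
      exact ⟨by positivity, (div_lt_one (by positivity)).2 (by linarith)⟩
    · have : 0 < 1 - y := by linarith
      exact mem_Ioi.2 (by positivity)
    · have : 1 - y ≠ 0 := by linarith
      field_simp
      ring
  have hderiv : ∀ z ∈ Ioi (0 : ℝ), HasDerivWithinAt (fun z => d * z / (c + d * z))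
      (c * d / (c + d * z) ^ 2) (Ioi 0) z := fun z (hz : 0 < z) => by
    have hden : c + d * z ≠ 0 := by positivity
    have hlin := (hasDerivAt_id z).const_mul d
    refine ((hlin.div (hlin.const_add c) hden).congr_deriv ?_).hasDerivWithinAt
    simp only [id_eq]
    ring
  have hinj : InjOn (fun z => d * z / (c + d * z)) (Ioi 0) := by
    intro z (hz : 0 < z) w (hw : 0 < w) h
    rw [div_eq_div_iff (by positivity) (by positivity)] at h
    exact mul_left_cancel₀ (mul_pos hc hd).ne' (by linarith)
  have hbeta := lintegral_Ioo_rpow_mul_one_sub_rpow ha hb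
  rw [← himage, lintegral_image_eq_lintegral_abs_deriv_mul measurableSet_Ioi hderiv hinj] at hbeta
  rw [ENNReal.ofReal_mul (by positivity), ← hbeta,
    ← lintegral_const_mul' _ _ ENNReal.ofReal_ne_top]
  refine setLIntegral_congr_fun measurableSet_Ioi fun z (hz : 0 < z) => ?_
  have hden : 0 < c + d * z := by positivity
  have hone : 1 - d * z / (c + d * z) = c / (c + d * z) := by field_simp; ring
  rw [← ENNReal.ofReal_mul (abs_nonneg _), ← ENNReal.ofReal_mul (by positivity),
    abs_of_pos (by positivity), hone, div_rpow (by positivity) hden.le, div_rpow hc.le hden.le,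
    mul_rpow hd.le hz.le, neg_add, rpow_add hden]
  simp only [rpow_sub_one hden.ne', rpow_sub_one hc.ne', rpow_sub_one hd.ne', rpow_neg hden.le,
    rpow_neg hc.le, rpow_neg hd.le]
  congr 1
  field_simp

lemma lintegral_Ioo_rpow_mul_rpow_mul_add_rpow {a b c d x t : ℝ} (ha : 0 < a) (hb : 0 < b)
    (hc : 0 < c) (hd : 0 < d) (hxt : x < t) :
    ∫⁻ r in Ioo x t, ENNReal.ofReal
        ((r - x) ^ (a - 1) * (t - r) ^ (b - 1) * (c * (t - r) + d * (r - x)) ^ (-(a + b))) =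
      ENNReal.ofReal (c ^ (-b) * d ^ (-a) * beta a b / (t - x)) := by
  have hlen : 0 < t - x := sub_pos.2 hxt
  have himage : (fun r => (r - x) / (t - r)) '' Ioo x t = Ioi 0 := by
    refine Subset.antisymm ?_ fun z (hz : 0 < z) => ⟨x + z * (t - x) / (1 + z), ⟨?_, ?_⟩, ?_⟩
    · rintro _ ⟨r, ⟨hxr, hrt⟩, rfl⟩
      exact div_pos (sub_pos.2 hxr) (sub_pos.2 hrt)
    · exact lt_add_of_pos_right x (by positivity)
    · rw [← lt_sub_iff_add_lt', div_lt_iff₀ (by positivity)]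
      linarith
    · have : t - (x + z * (t - x) / (1 + z)) = (t - x) / (1 + z) := by field_simp; ring
      simp only [this]
      field_simp
      ring
  have hderiv : ∀ r ∈ Ioo x t, HasDerivWithinAt (fun r => (r - x) / (t - r))
      ((t - x) / (t - r) ^ 2) (Ioo x t) r := fun r hr => by
    refine ((((hasDerivAt_id r).sub_const x).div ((hasDerivAt_id r).const_sub t)
      (sub_pos.2 hr.2).ne').congr_deriv ?_).hasDerivWithinAt
    simp only [id_eq]
    ring
  have hinj : InjOn (fun r => (r - x) / (t - r)) (Ioo x t) := fun r hr w hw h => by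
    rw [div_eq_div_iff (sub_pos.2 hr.2).ne' (sub_pos.2 hw.2).ne'] at h
    exact mul_left_cancel₀ hlen.ne' (by linarith)
  have hbeta := lintegral_Ioi_rpow_mul_add_mul_rpow ha hb hc hd
  rw [← himage, lintegral_image_eq_lintegral_abs_deriv_mul measurableSet_Ioo hderiv hinj] at hbeta
  rw [div_eq_inv_mul, ENNReal.ofReal_mul (by positivity), ← hbeta,
    ← lintegral_const_mul' _ _ ENNReal.ofReal_ne_top]
  refine setLIntegral_congr_fun measurableSet_Ioo fun r hr => ?_
  have hxr : 0 < r - x := sub_pos.2 hr.1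
  have hrt : 0 < t - r := sub_pos.2 hr.2
  have hsum : c + d * ((r - x) / (t - r)) = (c * (t - r) + d * (r - x)) / (t - r) := by field_simp
  rw [← ENNReal.ofReal_mul (abs_nonneg _), ← ENNReal.ofReal_mul (by positivity),
    abs_of_pos (by positivity), hsum, div_rpow hxr.le hrt.le, div_rpow (by positivity) hrt.le,
    neg_add, rpow_add hrt]
  simp only [rpow_sub_one hxr.ne', rpow_sub_one hrt.ne', rpow_neg hrt.le]
  congr 1
  field_simp

lemma lintegral_Ioo_rpow_mul_rpow {a b x t : ℝ} (ha : 0 < a) (hb : 0 < b) (hxt : x < t) :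
    ∫⁻ r in Ioo x t, ENNReal.ofReal ((r - x) ^ (a - 1) * (t - r) ^ (b - 1)) =
      ENNReal.ofReal (beta a b * (t - x) ^ (a + b - 1)) := by
  have hlen : 0 < t - x := sub_pos.2 hxt
  calc ∫⁻ r in Ioo x t, ENNReal.ofReal ((r - x) ^ (a - 1) * (t - r) ^ (b - 1))
      = ∫⁻ r in Ioo x t, ENNReal.ofReal ((t - x) ^ (a + b)) * ENNReal.ofReal
          ((r - x) ^ (a - 1) * (t - r) ^ (b - 1) * (1 * (t - r) + 1 * (r - x)) ^ (-(a + b))) := by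
        refine setLIntegral_congr_fun measurableSet_Ioo fun r _ => ?_
        rw [← ENNReal.ofReal_mul (by positivity), one_mul, one_mul, sub_add_sub_cancel,
          rpow_neg hlen.le, mul_left_comm, mul_inv_cancel₀ (by positivity), mul_one]
    _ = ENNReal.ofReal (beta a b * (t - x) ^ (a + b - 1)) := by
        rw [lintegral_const_mul' _ _ ENNReal.ofReal_ne_top,
          lintegral_Ioo_rpow_mul_rpow_mul_add_rpow ha hb one_pos one_pos hxt,
          ← ENNReal.ofReal_mul (by positivity), one_rpow, one_rpow, rpow_sub_one hlen.ne']
        congr 1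
        ring

end BetaIntegrals

section HilbertKernel

/-- The kernel `(y / x) ^ α / (x + y)` on `(0, ∞)²`, a weighted form of Hilbert's kernel. It is
homogeneous of degree `-1`, which is what makes it bounded on `L^q`. -/
noncomputable def hilbertKernel (α x y : ℝ) : ℝ := x ^ (-α) * y ^ α / (x + y)

lemma measurable_hilbertKernel (α : ℝ) : Measurable (Function.uncurry (hilbertKernel α)) := by
  unfold hilbertKernel Function.uncurry
  fun_prop

lemma hilbertKernel_nonneg (α : ℝ) {x y : ℝ} (hx : 0 ≤ x) (hy : 0 ≤ y) :
    0 ≤ hilbertKernel α x y := by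
  unfold hilbertKernel
  positivity

lemma hilbertKernel_swap (α x y : ℝ) : hilbertKernel α x y = hilbertKernel (-α) y x := by
  simp only [hilbertKernel, neg_neg, add_comm x y, mul_comm (x ^ (-α))]

lemma lintegral_hilbertKernel_mul_rpow {α s x : ℝ} (hs : α < s) (hs' : s < α + 1) (hx : 0 < x) :
    ∫⁻ y in Ioi 0, ENNReal.ofReal (hilbertKernel α x y) * ENNReal.ofReal y ^ (-s) =
      ENNReal.ofReal (beta (s - α) (α + 1 - s)) * ENNReal.ofReal x ^ (-s) := by
  calc ∫⁻ y in Ioi 0, ENNReal.ofReal (hilbertKernel α x y) * ENNReal.ofReal y ^ (-s)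
      = ∫⁻ y in Ioi 0, ENNReal.ofReal (x ^ (-α)) * ENNReal.ofReal
          (y ^ ((α + 1 - s) - 1) * (x + 1 * y) ^ (-((α + 1 - s) + (s - α)))) := by
        refine setLIntegral_congr_fun measurableSet_Ioi fun y (hy : 0 < y) => ?_
        have hexp : α + 1 - s - 1 = α + -s := by ring
        have hexp' : -(α + 1 - s + (s - α)) = -1 := by ring
        have hkernel := hilbertKernel_nonneg α hx.le hy.le
        rw [ENNReal.ofReal_rpow_of_pos hy, ← ENNReal.ofReal_mul hkernel,
          ← ENNReal.ofReal_mul (by positivity), hilbertKernel, hexp, hexp', rpow_add hy, one_mul,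
          rpow_neg_one]
        congr 1
        ring
    _ = ENNReal.ofReal (beta (s - α) (α + 1 - s)) * ENNReal.ofReal x ^ (-s) := by
        have hbeta : 0 < beta (s - α) (α + 1 - s) := beta_pos (by linarith) (by linarith)
        rw [lintegral_const_mul' _ _ ENNReal.ofReal_ne_top,
          lintegral_Ioi_rpow_mul_add_mul_rpow (by linarith) (by linarith) hx one_pos,
          ENNReal.ofReal_rpow_of_pos hx, ← ENNReal.ofReal_mul (by positivity),
          ← ENNReal.ofReal_mul hbeta.le, one_rpow, mul_one, ← mul_assoc, ← rpow_add hx,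
          beta_symm, mul_comm]
        congr 3
        ring

lemma rpow_lintegral_mul_le_of_weight {Y : Type*} [MeasurableSpace Y] {ν : Measure Y}
    {k w f : Y → ENNReal} {p q : ℝ} (hpq : p.HolderConjugate q) (hk : AEMeasurable k ν)
    (hw : AEMeasurable w ν) (hf : AEMeasurable f ν) (hw0 : ∀ᵐ y ∂ν, w y ≠ 0)
    (hw_top : ∀ᵐ y ∂ν, w y ≠ ⊤) :
    (∫⁻ y, k y * f y ∂ν) ^ q ≤
      (∫⁻ y, k y * w y ^ p ∂ν) ^ (q / p) * ∫⁻ y, k y * ((w y)⁻¹ * f y) ^ q ∂ν := by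
  have hp0 : 0 < p := hpq.pos
  have hq0 : 0 < q := hpq.symm.pos
  have hsplit : ∫⁻ y, k y * f y ∂ν =
      ∫⁻ y, (k y ^ (1 / p) * w y) * (k y ^ (1 / q) * ((w y)⁻¹ * f y)) ∂ν := by
    refine lintegral_congr_ae ?_
    filter_upwards [hw0, hw_top] with y hy0 hy
    rw [mul_mul_mul_comm, ← mul_assoc (w y), ENNReal.mul_inv_cancel hy0 hy, one_mul,
      ← ENNReal.rpow_add_of_nonneg _ _ (by positivity) (by positivity), one_div, one_div,
      hpq.inv_add_inv_eq_one, ENNReal.rpow_one]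
  calc (∫⁻ y, k y * f y ∂ν) ^ q
      ≤ ((∫⁻ y, (k y ^ (1 / p) * w y) ^ p ∂ν) ^ (1 / p) *
          (∫⁻ y, (k y ^ (1 / q) * ((w y)⁻¹ * f y)) ^ q ∂ν) ^ (1 / q)) ^ q := by
        rw [hsplit]
        gcongr
        exact ENNReal.lintegral_mul_le_Lp_mul_Lq ν hpq ((hk.pow_const _).mul hw)
          ((hk.pow_const _).mul (hw.inv.mul hf))
    _ = (∫⁻ y, k y * w y ^ p ∂ν) ^ (q / p) * ∫⁻ y, k y * ((w y)⁻¹ * f y) ^ q ∂ν := by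
        simp only [ENNReal.mul_rpow_of_nonneg _ _ hp0.le, ENNReal.mul_rpow_of_nonneg _ _ hq0.le,
          ← ENNReal.rpow_mul, one_div_mul_cancel hp0.ne', one_div_mul_cancel hq0.ne',
          ENNReal.rpow_one, one_div_mul_eq_div]

lemma rpow_lintegral_mul_le_of_weight_le {Y : Type*} [MeasurableSpace Y] {ν : Measure Y}
    {k w f : Y → ENNReal} {p q : ℝ} {A z : ENNReal} (hpq : p.HolderConjugate q)
    (hk : AEMeasurable k ν) (hw : AEMeasurable w ν) (hf : AEMeasurable f ν)
    (hw0 : ∀ᵐ y ∂ν, w y ≠ 0) (hw_top : ∀ᵐ y ∂ν, w y ≠ ⊤)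
    (hkw : ∫⁻ y, k y * w y ^ p ∂ν ≤ A * z ^ p) :
    (∫⁻ y, k y * f y ∂ν) ^ q ≤
      A ^ (q / p) * ∫⁻ y, z ^ q * (k y * ((w y)⁻¹ * f y) ^ q) ∂ν := by
  have hp0 : 0 < p := hpq.pos
  have hq0 : 0 < q := hpq.symm.pos
  have hpow : (∫⁻ y, k y * w y ^ p ∂ν) ^ (q / p) ≤ A ^ (q / p) * z ^ q :=
    calc (∫⁻ y, k y * w y ^ p ∂ν) ^ (q / p) ≤ (A * z ^ p) ^ (q / p) := by gcongr
      _ = A ^ (q / p) * z ^ q := by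
          rw [ENNReal.mul_rpow_of_nonneg _ _ (by positivity), ← ENNReal.rpow_mul,
            mul_div_cancel₀ _ hp0.ne']
  have hmeas : AEMeasurable (fun y => k y * ((w y)⁻¹ * f y) ^ q) ν :=
    hk.mul ((hw.inv.mul hf).pow_const _)
  rw [lintegral_const_mul'' _ hmeas, ← mul_assoc]
  exact (rpow_lintegral_mul_le_of_weight hpq hk hw hf hw0 hw_top).trans (by gcongr)

lemma lintegral_lintegral_mul_rpow_le_of_schur {X Y : Type*} [MeasurableSpace X] [MeasurableSpace Y]
    {μ : Measure X} {ν : Measure Y} [SFinite μ] [SFinite ν] {k : X → Y → ENNReal}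
    {z : X → ENNReal} {w f : Y → ENNReal} {p q : ℝ} {A B : ENNReal} (hpq : p.HolderConjugate q)
    (hk : Measurable (Function.uncurry k)) (hz : Measurable z) (hw : Measurable w)
    (hf : AEMeasurable f ν) (hA : A ≠ ⊤) (hw0 : ∀ᵐ y ∂ν, w y ≠ 0) (hw_top : ∀ᵐ y ∂ν, w y ≠ ⊤)
    (hkw : ∀ᵐ x ∂μ, ∫⁻ y, k x y * w y ^ p ∂ν ≤ A * z x ^ p)
    (hkz : ∀ᵐ y ∂ν, ∫⁻ x, k x y * z x ^ q ∂μ ≤ B * w y ^ q) :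
    ∫⁻ x, (∫⁻ y, k x y * f y ∂ν) ^ q ∂μ ≤ A ^ (q / p) * B * ∫⁻ y, f y ^ q ∂ν := by
  have hp0 : 0 < p := hpq.pos
  have hq0 : 0 < q := hpq.symm.pos
  have hkx : ∀ x, Measurable (k x) := fun x => hk.of_uncurry_left
  have hky : ∀ y, Measurable fun x => k x y := fun y => hk.of_uncurry_right
  have hholder : ∀ᵐ x ∂μ, (∫⁻ y, k x y * f y ∂ν) ^ q ≤
      A ^ (q / p) * ∫⁻ y, z x ^ q * (k x y * ((w y)⁻¹ * f y) ^ q) ∂ν := by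
    filter_upwards [hkw] with x hx
    exact rpow_lintegral_mul_le_of_weight_le hpq (hkx x).aemeasurable hw.aemeasurable hf hw0
      hw_top hx
  calc ∫⁻ x, (∫⁻ y, k x y * f y ∂ν) ^ q ∂μ
      ≤ ∫⁻ x, A ^ (q / p) * ∫⁻ y, z x ^ q * (k x y * ((w y)⁻¹ * f y) ^ q) ∂ν ∂μ :=
        lintegral_mono_ae hholder
    _ = A ^ (q / p) * ∫⁻ y, ∫⁻ x, z x ^ q * (k x y * ((w y)⁻¹ * f y) ^ q) ∂μ ∂ν := by
        rw [lintegral_const_mul' _ _ (ENNReal.rpow_ne_top_of_nonneg (by positivity) hA),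
          lintegral_lintegral_swap]
        exact ((hz.comp measurable_fst).pow_const _).aemeasurable.mul (hk.aemeasurable.mul
          (((hw.inv.comp measurable_snd).aemeasurable.mul hf.comp_snd).pow_const _))
    _ ≤ A ^ (q / p) * ∫⁻ y, B * f y ^ q ∂ν := by
        refine mul_le_mul_right (lintegral_mono_ae ?_) _
        filter_upwards [hkz, hw0, hw_top] with y hy hy0 hy_top
        calc ∫⁻ x, z x ^ q * (k x y * ((w y)⁻¹ * f y) ^ q) ∂μ
            = ∫⁻ x, k x y * z x ^ q * ((w y)⁻¹ * f y) ^ q ∂μ :=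
              lintegral_congr fun x => by ring
          _ = (∫⁻ x, k x y * z x ^ q ∂μ) * ((w y)⁻¹ * f y) ^ q :=
              lintegral_mul_const _ ((hky y).mul (hz.pow_const _))
          _ ≤ B * w y ^ q * ((w y)⁻¹ * f y) ^ q := by gcongr
          _ = B * f y ^ q := by
              rw [mul_assoc, ← ENNReal.mul_rpow_of_nonneg _ _ hq0.le, ← mul_assoc (w y),
                ENNReal.mul_inv_cancel hy0 hy_top, one_mul]
    _ = A ^ (q / p) * B * ∫⁻ y, f y ^ q ∂ν := by
        rw [lintegral_const_mul'' _ (hf.pow_const _), mul_assoc]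

lemma lintegral_hilbertKernel_mul_rpow_le {α q : ℝ} {f : ℝ → ENNReal} (hq : 1 < q)
    (hα : q⁻¹ - 1 < α) (hαq : α < q⁻¹) (hf : AEMeasurable f (volume.restrict (Ioi 0))) :
    ∫⁻ x in Ioi 0, (∫⁻ y in Ioi 0, ENNReal.ofReal (hilbertKernel α x y) * f y) ^ q ≤
      ENNReal.ofReal (beta (q⁻¹ - α) (α + 1 - q⁻¹)) ^ q * ∫⁻ y in Ioi 0, f y ^ q := by
  set p := q.conjExponent
  have hpq : p.HolderConjugate q := (Real.HolderConjugate.conjExponent hq).symm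
  have hp0 : 0 < p := hpq.pos
  have hp : p⁻¹ = 1 - q⁻¹ := by linarith [hpq.inv_add_inv_eq_one]
  -- The weight `x ^ (-1 / (p * q))` is an extremal for Schur's test with a `-1`-homogeneous kernel.
  set w : ℝ → ENNReal := fun x => ENNReal.ofReal x ^ (-(p⁻¹ * q⁻¹))
  have hwp : ∀ x, w x ^ p = ENNReal.ofReal x ^ (-q⁻¹) := fun x => by
    rw [← ENNReal.rpow_mul]
    congr 1
    field_simp
  have hwq : ∀ x, w x ^ q = ENNReal.ofReal x ^ (-p⁻¹) := fun x => by
    rw [← ENNReal.rpow_mul]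
    congr 1
    field_simp
  have hw : Measurable w := by fun_prop
  set A := ENNReal.ofReal (beta (q⁻¹ - α) (α + 1 - q⁻¹))
  have hAA : A ^ (q / p) * A = A ^ q := by
    nth_rw 2 [← ENNReal.rpow_one A]
    rw [← ENNReal.rpow_add_of_nonneg _ _ (by positivity) zero_le_one, div_eq_mul_inv, hp]
    congr 1
    field_simp
    ring
  rw [← hAA]
  refine lintegral_lintegral_mul_rpow_le_of_schur (z := w) (w := w) hpq
    (measurable_hilbertKernel α).ennreal_ofReal hw hw hf ENNReal.ofReal_ne_top ?_ ?_ ?_ ?_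
  · filter_upwards [ae_restrict_mem measurableSet_Ioi] with y (hy : 0 < y)
    simp [w, hy, ENNReal.rpow_eq_zero_iff]
  · filter_upwards [ae_restrict_mem measurableSet_Ioi] with y (hy : 0 < y)
    simp [w, hy, ENNReal.rpow_eq_top_iff]
  · filter_upwards [ae_restrict_mem measurableSet_Ioi] with x (hx : 0 < x)
    simp only [hwp]
    exact (lintegral_hilbertKernel_mul_rpow hαq (by linarith) hx).le
  · filter_upwards [ae_restrict_mem measurableSet_Ioi] with y (hy : 0 < y)
    simp only [hwq, hilbertKernel_swap α]
    rw [lintegral_hilbertKernel_mul_rpow (by linarith) (by linarith) hy, beta_symm]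
    refine le_of_eq ?_
    congr 3 <;> rw [hp] <;> ring

lemma lintegral_hilbertKernel_sub_mul_rpow_le {α q : ℝ} {f : ℝ → ENNReal} (t : ℝ) (hq : 1 < q)
    (hα : q⁻¹ - 1 < α) (hαq : α < q⁻¹) (hf : AEMeasurable f (volume.restrict (Ioi t))) :
    ∫⁻ r in Iio t, (∫⁻ v in Ioi t, ENNReal.ofReal (hilbertKernel α (t - r) (v - t)) * f v) ^ q ≤
      ENNReal.ofReal (beta (q⁻¹ - α) (α + 1 - q⁻¹)) ^ q * ∫⁻ v in Ioi t, f v ^ q := by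
  have htranslate : ∀ g : ℝ → ENNReal, ∫⁻ y in Ioi 0, g (y + t) = ∫⁻ v in Ioi t, g v := fun g => by
    simpa using (measurePreserving_add_right volume t).setLIntegral_comp_preimage_emb
      (measurableEmbedding_addRight t) g (Ioi t)
  have hreflect : ∀ g : ℝ → ENNReal, ∫⁻ x in Ioi 0, g (t - x) = ∫⁻ r in Iio t, g r := fun g => by
    simpa using (Measure.measurePreserving_sub_left volume t).setLIntegral_comp_preimage_emb
      (Homeomorph.subLeft t).measurableEmbedding g (Iio t)
  have hft : AEMeasurable (fun y => f (y + t)) (volume.restrict (Ioi 0)) := by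
    have := (measurePreserving_add_right volume t).restrict_preimage (measurableSet_Ioi (a := t))
    rw [preimage_add_const_Ioi, sub_self] at this
    exact hf.comp_quasiMeasurePreserving this.quasiMeasurePreserving
  simpa only [← hreflect, ← htranslate, sub_sub_cancel, add_sub_cancel_right] using
    lintegral_hilbertKernel_mul_rpow_le hq hα hαq hft

lemma lintegral_Ioo_hilbertKernel_sub_mul_rpow_le {α q a t b : ℝ} {f : ℝ → ENNReal} (hq : 1 < q)
    (hα : q⁻¹ - 1 < α) (hαq : α < q⁻¹) (hf : AEMeasurable f (volume.restrict (Ioo t b))) :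
    ∫⁻ r in Ioo a t,
        (∫⁻ v in Ioo t b, ENNReal.ofReal (hilbertKernel α (t - r) (v - t)) * f v) ^ q ≤
      ENNReal.ofReal (beta (q⁻¹ - α) (α + 1 - q⁻¹)) ^ q * ∫⁻ v in Ioo t b, f v ^ q := by
  have hind : ∀ g : ℝ → ENNReal, ∫⁻ v in Ioi t, (Ioo t b).indicator g v = ∫⁻ v in Ioo t b, g v :=
    fun g => by
      rw [setLIntegral_indicator measurableSet_Ioo, inter_eq_left.2 Ioo_subset_Ioi_self]
  have hF : AEMeasurable ((Ioo t b).indicator f) (volume.restrict (Ioi t)) :=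
    ((aemeasurable_indicator_iff measurableSet_Ioo).2 hf).restrict
  refine (lintegral_mono_set Ioo_subset_Iio_self).trans ?_
  have hinner : ∀ r, ∫⁻ v in Ioi t, ENNReal.ofReal (hilbertKernel α (t - r) (v - t)) *
      (Ioo t b).indicator f v =
      ∫⁻ v in Ioo t b, ENNReal.ofReal (hilbertKernel α (t - r) (v - t)) * f v := fun r => by
    simp only [← hind, indicator_mul_right]
  have hnorm : ∫⁻ v in Ioi t, (Ioo t b).indicator f v ^ q = ∫⁻ v in Ioo t b, f v ^ q := by
    rw [← hind]
    congr with v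
    by_cases hv : v ∈ Ioo t b <;> simp [hv, one_pos.trans hq]
  simpa only [hinner, hnorm] using lintegral_hilbertKernel_sub_mul_rpow_le t hq hα hαq hF

end HilbertKernel

section KernelIntegrals

variable {X Y : Type*} [MeasurableSpace X] [MeasurableSpace Y] {μ : Measure X} {ν : Measure Y}
  [SFinite μ] [SFinite ν] {k : X → Y → ℝ} {m h : Y → ℝ}

lemma integrable_prod_mul_of_lintegral_eq (hk : Measurable (Function.uncurry k))
    (hk0 : ∀ᵐ y ∂ν, ∀ᵐ x ∂μ, 0 ≤ k x y)
    (hkm : ∀ᵐ y ∂ν, ∫⁻ x, ENNReal.ofReal (k x y) ∂μ = ENNReal.ofReal (m y))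
    (hh : AEStronglyMeasurable h ν) (hhm : Integrable (fun y => h y * m y) ν) :
    Integrable (Function.uncurry fun x y => h y * k x y) (μ.prod ν) := by
  have hmeas : AEStronglyMeasurable (Function.uncurry fun x y => h y * k x y) (μ.prod ν) :=
    hh.comp_snd.mul hk.aestronglyMeasurable
  refine ⟨hmeas, ?_⟩
  rw [HasFiniteIntegral, lintegral_prod_symm _ hmeas.enorm]
  refine (lintegral_mono_ae ?_).trans_lt hhm.2
  filter_upwards [hk0, hkm] with y hy0 hym
  calc ∫⁻ x, ‖h y * k x y‖ₑ ∂μ = ‖h y‖ₑ * ∫⁻ x, ENNReal.ofReal (k x y) ∂μ := by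
        rw [← lintegral_const_mul' _ _ enorm_ne_top]
        refine lintegral_congr_ae ?_
        filter_upwards [hy0] with x hx
        rw [enorm_mul, Real.enorm_of_nonneg hx]
    _ ≤ ‖h y * m y‖ₑ := by
        rw [hym, enorm_mul]
        gcongr
        exact Real.ofReal_le_enorm _

lemma integral_integral_mul_of_lintegral_eq (hk : Measurable (Function.uncurry k))
    (hk0 : ∀ᵐ y ∂ν, ∀ᵐ x ∂μ, 0 ≤ k x y) (hm0 : ∀ᵐ y ∂ν, 0 ≤ m y)
    (hkm : ∀ᵐ y ∂ν, ∫⁻ x, ENNReal.ofReal (k x y) ∂μ = ENNReal.ofReal (m y))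
    (hh : AEStronglyMeasurable h ν) (hhm : Integrable (fun y => h y * m y) ν) :
    ∫ x, ∫ y, h y * k x y ∂ν ∂μ = ∫ y, h y * m y ∂ν := by
  rw [integral_integral_swap (integrable_prod_mul_of_lintegral_eq hk hk0 hkm hh hhm)]
  refine integral_congr_ae ?_
  filter_upwards [hk0, hm0, hkm] with y hy0 hm hy
  rw [integral_const_mul, integral_eq_lintegral_of_nonneg_ae hy0
    hk.of_uncurry_right.aestronglyMeasurable, hy, ENNReal.toReal_ofReal hm]

end KernelIntegrals

section FractionalIntegral

/-- The kernel `(u - x)^(β - 1) (v - u)^(α - 1)` on `u < v` whose integrals in `u` and in `v` give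
the two sides of the semigroup law for fractional integrals. -/
noncomputable def abelKernel (α β x u v : ℝ) : ℝ :=
  if u < v then (u - x) ^ (β - 1) * (v - u) ^ (α - 1) else 0

lemma measurable_abelKernel (α β x : ℝ) : Measurable (Function.uncurry (abelKernel α β x)) := by
  unfold abelKernel Function.uncurry
  exact Measurable.ite (measurableSet_lt measurable_fst measurable_snd) (by fun_prop) (by fun_prop)

lemma abelKernel_nonneg {α β x u v : ℝ} (hx : x ≤ u) : 0 ≤ abelKernel α β x u v := by
  unfold abelKernel
  split_ifs with h
  · exact mul_nonneg (rpow_nonneg (sub_nonneg.2 hx) _) (rpow_nonneg (sub_nonneg.2 h.le) _)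
  · rfl

lemma lintegral_abelKernel {α β x v T : ℝ} (hα : 0 < α) (hβ : 0 < β) (hv : v ∈ Ioo x T) :
    ∫⁻ u in Ioo x T, ENNReal.ofReal (abelKernel α β x u v) =
      ENNReal.ofReal (beta β α * (v - x) ^ (β + α - 1)) := by
  have hind : ∀ u, ENNReal.ofReal (abelKernel α β x u v) = (Iio v).indicator
      (fun u => ENNReal.ofReal ((u - x) ^ (β - 1) * (v - u) ^ (α - 1))) u := fun u => by
    by_cases h : u < v <;> simp [abelKernel, h]
  simp only [hind]
  rw [setLIntegral_indicator measurableSet_Iio, ← lintegral_Ioo_rpow_mul_rpow hβ hα hv.1,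
    inter_comm, Ioo_inter_Iio, min_eq_right hv.2.le]

lemma setIntegral_mul_abelKernel {α β x u T : ℝ} (h : ℝ → ℝ) (hu : x ≤ u) :
    ∫ v in Ioo x T, h v * abelKernel α β x u v =
      (∫ v in Ioo u T, h v * (v - u) ^ (α - 1)) * (u - x) ^ (β - 1) := by
  have hind : ∀ v, h v * abelKernel α β x u v = (Ioi u).indicator
      (fun v => h v * (v - u) ^ (α - 1) * (u - x) ^ (β - 1)) v := fun v => by
    by_cases huv : u < v <;> simp [abelKernel, huv] ; ring
  simp only [hind]
  rw [setIntegral_indicator measurableSet_Ioi, integral_mul_const, Ioo_inter_Ioi,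
    max_eq_right hu]

variable {T α β a x : ℝ} {g h : ℝ → ℝ}

lemma ae_integrableOn_mul_sub_rpow (hα : 0 < α) (hh : IntegrableOn h (Ioo a T)) :
    ∀ᵐ u ∂volume.restrict (Ioo a T), IntegrableOn (fun v => h v * (v - u) ^ (α - 1)) (Ioo u T) := by
  have hbounded : IntegrableOn (fun v => h v * (beta 1 α * (v - a) ^ (1 + α - 1))) (Ioo a T) := by
    refine hh.mul_continuousOn_of_subset (K := Icc a T) ?_ measurableSet_Ioo isCompact_Icc
      Ioo_subset_Icc_self
    refine continuousOn_const.mul (ContinuousOn.rpow_const (by fun_prop) fun _ _ => Or.inr ?_)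
    linarith
  have hprod := integrable_prod_mul_of_lintegral_eq (μ := volume.restrict (Ioo a T))
    (measurable_abelKernel α 1 a)
    (.of_forall fun v => (ae_restrict_mem measurableSet_Ioo).mono
      fun u hu => abelKernel_nonneg hu.1.le)
    ((ae_restrict_mem measurableSet_Ioo).mono fun v hv => lintegral_abelKernel hα one_pos hv)
    hh.aestronglyMeasurable hbounded
  filter_upwards [hprod.prod_right_ae, ae_restrict_mem measurableSet_Ioo] with u hint hu
  refine (IntegrableOn.mono_set hint (Ioo_subset_Ioo_left hu.1.le)).congr_fun (fun v hv => ?_)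
    measurableSet_Ioo
  simp [abelKernel, hv.1]

lemma fracInt_fracInt (hα : 0 < α) (hβ : 0 < β)
    (hh : AEStronglyMeasurable h (volume.restrict (Ioo x T)))
    (hint : IntegrableOn (fun v => h v * (v - x) ^ (β + α - 1)) (Ioo x T)) :
    fracInt T β (fracInt T α h) x = fracInt T (β + α) h x := by
  have hfubini := integral_integral_mul_of_lintegral_eq (μ := volume.restrict (Ioo x T))
    (measurable_abelKernel α β x)
    (.of_forall fun v => (ae_restrict_mem measurableSet_Ioo).mono
      fun u hu => abelKernel_nonneg hu.1.le)
    ((ae_restrict_mem measurableSet_Ioo).mono fun v hv =>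
      mul_nonneg (beta_pos hβ hα).le (rpow_nonneg (sub_nonneg.2 hv.1.le) _))
    ((ae_restrict_mem measurableSet_Ioo).mono fun v hv => lintegral_abelKernel hα hβ hv)
    hh (by simpa only [mul_left_comm] using hint.const_mul (beta β α))
  rw [setIntegral_congr_fun measurableSet_Ioo fun u hu =>
    setIntegral_mul_abelKernel h (mem_Ioo.1 hu).1.le] at hfubini
  have hΓα := (Gamma_pos_of_pos hα).ne'
  have hΓβ := (Gamma_pos_of_pos hβ).ne'
  simp only [fracInt, mul_assoc, integral_const_mul]
  simp_rw [hfubini, mul_left_comm (h _), integral_const_mul, beta]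
  field_simp [hΓα, hΓβ]

lemma ae_eq_zero_of_setIntegral_Ioo_eq_zero {b : ℝ} {f : ℝ → ℝ} (hf : IntegrableOn f (Ioo a b))
    (hzero : ∀ x ∈ Ioo a b, ∫ v in Ioo x b, f v = 0) : f =ᵐ[volume.restrict (Ioo a b)] 0 := by
  rcases le_or_gt b a with hab | hab
  · simp [Filter.EventuallyEq, Ioo_eq_empty hab.not_gt]
  have hI : IntervalIntegrable f volume a b :=
    (intervalIntegrable_iff_integrableOn_Ioo_of_le hab.le).2 hf
  rw [Filter.EventuallyEq, ae_restrict_iff' measurableSet_Ioo]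
  filter_upwards [hI.ae_hasDerivAt_integral] with x hx hxab
  rw [uIcc_of_le hab.le] at hx
  have hderiv := hx (Ioo_subset_Icc_self hxab) b (right_mem_Icc.2 hab.le)
  have hconst : (fun y => ∫ v in b..y, f v) =ᶠ[nhds x] fun _ => 0 := by
    filter_upwards [Ioo_mem_nhds hxab.1 hxab.2] with y hy
    rw [intervalIntegral.integral_symm, intervalIntegral.integral_of_le hy.2.le,
      integral_Ioc_eq_integral_Ioo, hzero y hy, neg_zero]
  exact (hderiv.congr_of_eventuallyEq hconst.symm).unique (hasDerivAt_const x 0)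

lemma ae_eq_zero_of_fracInt_ae_eq_zero (hα : 0 < α) (hα1 : α < 1) (hg : IntegrableOn g (Ioo a T))
    (hzero : fracInt T α g =ᵐ[volume.restrict (Ioo a T)] 0) :
    g =ᵐ[volume.restrict (Ioo a T)] 0 := by
  refine ae_eq_zero_of_setIntegral_Ioo_eq_zero hg fun x hx => ?_
  have hsub : Ioo x T ⊆ Ioo a T := Ioo_subset_Ioo_left hx.1.le
  have hgx : IntegrableOn g (Ioo x T) := hg.mono_set hsub
  calc ∫ v in Ioo x T, g v = fracInt T (1 - α + α) g x := by simp [fracInt]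
    _ = fracInt T (1 - α) (fracInt T α g) x :=
        (fracInt_fracInt hα (sub_pos.2 hα1) hgx.aestronglyMeasurable (by simpa using hgx)).symm
    _ = 0 := by
        rw [fracInt, integral_eq_zero_of_ae, mul_zero]
        filter_upwards [ae_restrict_of_ae_restrict_of_subset hsub hzero] with u hu
        rw [hu, Pi.zero_apply, zero_mul]

lemma fracInt_sub (hg : IntegrableOn (fun v => g v * (v - x) ^ (α - 1)) (Ioo x T))
    (hh : IntegrableOn (fun v => h v * (v - x) ^ (α - 1)) (Ioo x T)) :
    fracInt T α (fun v => g v - h v) x = fracInt T α g x - fracInt T α h x := by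
  simp only [fracInt, sub_mul]
  rw [integral_sub hg hh, mul_sub]

lemma ae_eq_of_fracInt_ae_eq (hα : 0 < α) (hα1 : α < 1) (hg : IntegrableOn g (Ioo a T))
    (hh : IntegrableOn h (Ioo a T))
    (heq : fracInt T α g =ᵐ[volume.restrict (Ioo a T)] fracInt T α h) :
    g =ᵐ[volume.restrict (Ioo a T)] h := by
  refine (ae_eq_zero_of_fracInt_ae_eq_zero hα hα1 (hg.sub hh) ?_).mono fun v => sub_eq_zero.1
  filter_upwards [heq, ae_integrableOn_mul_sub_rpow hα hg, ae_integrableOn_mul_sub_rpow hα hh]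
    with u hu hgu hhu
  exact (fracInt_sub hgu hhu).trans (sub_eq_zero.2 hu)

end FractionalIntegral

section Balayage

/-- The Riesz balayage of the density `h` on `(t, T)` to `(-∞, t)`: the density there whose
fractional integral of order `α` agrees on `(-∞, t)` with that of `h`. -/
noncomputable def balayage (T α t : ℝ) (h : ℝ → ℝ) (r : ℝ) : ℝ :=
  (beta α (1 - α))⁻¹ * ∫ v in Ioo t T, h v * hilbertKernel α (t - r) (v - t)

variable {T α t x : ℝ} {h : ℝ → ℝ}

lemma lintegral_rpow_mul_hilbertKernel {v : ℝ} (hα : 0 < α) (hα1 : α < 1) (hxt : x < t)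
    (htv : t < v) :
    ∫⁻ r in Ioo x t, ENNReal.ofReal ((r - x) ^ (α - 1) * hilbertKernel α (t - r) (v - t)) =
      ENNReal.ofReal (beta α (1 - α) * (v - x) ^ (α - 1)) := by
  have hlen : 0 < t - x := sub_pos.2 hxt
  have hd : 0 < v - t := sub_pos.2 htv
  have hc : 0 < v - x := sub_pos.2 (hxt.trans htv)
  calc ∫⁻ r in Ioo x t, ENNReal.ofReal ((r - x) ^ (α - 1) * hilbertKernel α (t - r) (v - t))
      = ∫⁻ r in Ioo x t, ENNReal.ofReal ((v - t) ^ α * (t - x)) *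
          ENNReal.ofReal ((r - x) ^ (α - 1) * (t - r) ^ ((1 - α) - 1) *
            ((v - x) * (t - r) + (v - t) * (r - x)) ^ (-(α + (1 - α)))) := by
        refine setLIntegral_congr_fun measurableSet_Ioo fun r hr => ?_
        have hvr : v - r ≠ 0 := by linarith [hr.2]
        have hfactor : (v - x) * (t - r) + (v - t) * (r - x) = (t - x) * (v - r) := by ring
        have hsum : t - r + (v - t) = v - r := by ring
        rw [← ENNReal.ofReal_mul (by positivity), hilbertKernel, hfactor, hsum,
          add_sub_cancel, rpow_neg_one, sub_sub_cancel_left]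
        congr 1
        field_simp
    _ = ENNReal.ofReal (beta α (1 - α) * (v - x) ^ (α - 1)) := by
        rw [lintegral_const_mul' _ _ ENNReal.ofReal_ne_top,
          lintegral_Ioo_rpow_mul_rpow_mul_add_rpow hα (sub_pos.2 hα1) hc hd hxt,
          ← ENNReal.ofReal_mul (by positivity), rpow_neg hd.le, neg_sub]
        congr 1
        field_simp

lemma aestronglyMeasurable_balayage (hh : AEStronglyMeasurable h (volume.restrict (Ioo t T)))
    (μ : Measure ℝ) [SFinite μ] : AEStronglyMeasurable (balayage T α t h) μ := by
  have hkernel : Measurable fun z : ℝ × ℝ => hilbertKernel α (t - z.1) (z.2 - t) :=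
    (measurable_hilbertKernel α).comp (by fun_prop : Measurable fun z : ℝ × ℝ => (t - z.1, z.2 - t))
  exact (hh.comp_snd.mul hkernel.aestronglyMeasurable).integral_prod_right'.const_mul _

lemma aestronglyMeasurable_rpow_mul_balayage {φ : ℝ → ℝ}
    (hφ : AEStronglyMeasurable φ (volume.restrict (Ioo t T))) (μ : Measure ℝ) [SFinite μ] :
    AEStronglyMeasurable (fun r => r ^ α * balayage T α t (fun v => v ^ (-α) * φ v) r) μ := by
  have hpow : ∀ β : ℝ, Measurable fun r : ℝ => r ^ β := by fun_prop
  exact (hpow α).aestronglyMeasurable.mul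
    (aestronglyMeasurable_balayage ((hpow (-α)).aestronglyMeasurable.mul hφ) μ)

lemma integrableOn_balayage_mul_rpow_and_integral_eq (hα : 0 < α) (hα1 : α < 1) (hxt : x < t)
    (hh : AEStronglyMeasurable h (volume.restrict (Ioo t T)))
    (hint : IntegrableOn (fun v => h v * (v - x) ^ (α - 1)) (Ioo t T)) :
    IntegrableOn (fun r => balayage T α t h r * (r - x) ^ (α - 1)) (Ioo x t) ∧
      ∫ r in Ioo x t, balayage T α t h r * (r - x) ^ (α - 1) =
        ∫ v in Ioo t T, h v * (v - x) ^ (α - 1) := by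
  have hbeta := beta_pos hα (sub_pos.2 hα1)
  set k : ℝ → ℝ → ℝ := fun r v => (r - x) ^ (α - 1) * hilbertKernel α (t - r) (v - t)
  set m : ℝ → ℝ := fun v => beta α (1 - α) * (v - x) ^ (α - 1)
  have hk : Measurable (Function.uncurry k) := by
    refine Measurable.mul (by fun_prop) ((measurable_hilbertKernel α).comp
      (by fun_prop : Measurable fun z : ℝ × ℝ => (t - z.1, z.2 - t)))
  have hk0 : ∀ᵐ v ∂volume.restrict (Ioo t T), ∀ᵐ r ∂volume.restrict (Ioo x t), 0 ≤ k r v := by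
    filter_upwards [ae_restrict_mem measurableSet_Ioo] with v hv
    filter_upwards [ae_restrict_mem measurableSet_Ioo] with r hr
    exact mul_nonneg (rpow_nonneg (sub_nonneg.2 hr.1.le) _)
      (hilbertKernel_nonneg α (sub_nonneg.2 hr.2.le) (sub_nonneg.2 hv.1.le))
  have hm0 : ∀ᵐ v ∂volume.restrict (Ioo t T), 0 ≤ m v := by
    filter_upwards [ae_restrict_mem measurableSet_Ioo] with v hv
    exact mul_nonneg hbeta.le (rpow_nonneg (sub_nonneg.2 (hxt.trans hv.1).le) _)
  have hkm : ∀ᵐ v ∂volume.restrict (Ioo t T),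
      ∫⁻ r in Ioo x t, ENNReal.ofReal (k r v) = ENNReal.ofReal (m v) := by
    filter_upwards [ae_restrict_mem measurableSet_Ioo] with v hv
    exact lintegral_rpow_mul_hilbertKernel hα hα1 hxt hv.1
  have hhm : IntegrableOn (fun v => h v * m v) (Ioo t T) :=
    (hint.const_mul (beta α (1 - α))).congr (.of_forall fun v => mul_left_comm _ _ _)
  have hbal : ∀ r, balayage T α t h r * (r - x) ^ (α - 1) =
      (beta α (1 - α))⁻¹ * ∫ v in Ioo t T, h v * k r v := fun r => by
    simp_rw [k, balayage, mul_left_comm (h _), integral_const_mul]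
    ring
  simp_rw [hbal]
  have hprod := integrable_prod_mul_of_lintegral_eq hk hk0 hkm hh hhm
  refine ⟨hprod.integral_prod_left.const_mul _, ?_⟩
  rw [integral_const_mul, integral_integral_mul_of_lintegral_eq hk hk0 hm0 hkm hh hhm]
  simp_rw [m, mul_left_comm (h _), integral_const_mul]
  field_simp

lemma fracInt_indicator_add_balayage (hα : 0 < α) (hα1 : α < 1) (hxt : x < t) (htT : t ≤ T)
    (hh : AEStronglyMeasurable h (volume.restrict (Ioo t T)))
    (hint : IntegrableOn (fun v => h v * (v - x) ^ (α - 1)) (Ioo x T)) :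
    fracInt T α ((Iio t).indicator (h + balayage T α t h)) x = fracInt T α h x := by
  have hsplit : ∫ v in Ioo x T, h v * (v - x) ^ (α - 1) =
      (∫ v in Ioo x t, h v * (v - x) ^ (α - 1)) + ∫ v in Ioo t T, h v * (v - x) ^ (α - 1) := by
    rw [← Ioo_union_Ico_eq_Ioo hxt htT] at hint ⊢
    rw [setIntegral_union (disjoint_left.2 fun v hv hv' => hv.2.not_ge hv'.1) measurableSet_Ico
      hint.left_of_union hint.right_of_union, integral_Ico_eq_integral_Ioo]
  have hhead := hint.mono_set (Ioo_subset_Ioo_right htT)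
  have htail := hint.mono_set (Ioo_subset_Ioo_left hxt.le)
  obtain ⟨hbal, hbal_eq⟩ := integrableOn_balayage_mul_rpow_and_integral_eq hα hα1 hxt hh htail
  have hind : ∀ v, (Iio t).indicator (h + balayage T α t h) v * (v - x) ^ (α - 1) =
      (Iio t).indicator (fun v => h v * (v - x) ^ (α - 1) +
        balayage T α t h v * (v - x) ^ (α - 1)) v := fun v => by
    by_cases hv : v < t <;> simp [hv, add_mul]
  simp_rw [fracInt, hind]
  rw [setIntegral_indicator measurableSet_Iio, Ioo_inter_Iio, min_eq_right htT,
    integral_add hhead hbal, hbal_eq, ← hsplit]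

lemma fracInt_indicator_Iio_of_le {f : ℝ → ℝ} (htx : t ≤ x) :
    fracInt T α ((Iio t).indicator f) x = 0 := by
  rw [fracInt, setIntegral_eq_zero_of_forall_eq_zero, mul_zero]
  intro v hv
  rw [indicator_of_notMem (notMem_Iio.2 (htx.trans hv.1.le)), zero_mul]

/-- The constant of the weighted `L^q` bound for `balayage`: the norm of the Hilbert kernel divided
by the normalisation of `balayage`. -/
noncomputable def balayageConst (α q : ℝ) : ℝ :=
  beta (q⁻¹ - α) (α + 1 - q⁻¹) / beta α (1 - α)

lemma balayageConst_nonneg {q : ℝ} (hα : 0 < α) (hq : 1 < q) (hαq : α < q⁻¹) :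
    0 ≤ balayageConst α q := by
  have hq1 : q⁻¹ < 1 := inv_lt_one_of_one_lt₀ hq
  exact div_nonneg (beta_pos (by linarith) (by linarith)).le (beta_pos hα (by linarith)).le

lemma enorm_rpow_mul_balayage_le {φ : ℝ → ℝ} {r : ℝ} (hα : 0 < α) (hα1 : α < 1)
    (hr : r ∈ Ioo 0 t) :
    ‖r ^ α * balayage T α t (fun v => v ^ (-α) * φ v) r‖ₑ ≤
      ENNReal.ofReal (beta α (1 - α))⁻¹ *
        ∫⁻ v in Ioo t T, ENNReal.ofReal (hilbertKernel α (t - r) (v - t)) * ‖φ v‖ₑ := by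
  have hbeta := beta_pos hα (sub_pos.2 hα1)
  rw [balayage, mul_left_comm, enorm_mul, Real.enorm_of_nonneg (inv_nonneg.2 hbeta.le),
    ← integral_const_mul]
  refine mul_le_mul_right ((enorm_integral_le_lintegral_enorm _).trans
    (setLIntegral_mono' measurableSet_Ioo fun v hv => ?_)) _
  have hv0 : 0 < v := (hr.1.trans hr.2).trans hv.1
  have hweight : r ^ α * v ^ (-α) ≤ 1 := by
    rw [rpow_neg hv0.le, ← div_eq_mul_inv, div_le_one (by positivity)]
    exact rpow_le_rpow hr.1.le (hr.2.trans hv.1).le hα.le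
  have hweight0 : 0 ≤ r ^ α * v ^ (-α) := mul_nonneg (rpow_nonneg hr.1.le _) (rpow_nonneg hv0.le _)
  have hkernel := hilbertKernel_nonneg α (sub_nonneg.2 hr.2.le) (sub_nonneg.2 hv.1.le)
  calc ‖r ^ α * (v ^ (-α) * φ v * hilbertKernel α (t - r) (v - t))‖ₑ
      = ENNReal.ofReal (r ^ α * v ^ (-α)) *
          (ENNReal.ofReal (hilbertKernel α (t - r) (v - t)) * ‖φ v‖ₑ) := by
        rw [← Real.enorm_of_nonneg hweight0, ← Real.enorm_of_nonneg hkernel, ← enorm_mul,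
          ← enorm_mul]
        congr 1
        ring
    _ ≤ ENNReal.ofReal (hilbertKernel α (t - r) (v - t)) * ‖φ v‖ₑ :=
        mul_le_of_le_one_left' (ENNReal.ofReal_le_one.2 hweight)

lemma eLpNorm_rpow_mul_balayage_le {φ : ℝ → ℝ} {q : ℝ} (hα : 0 < α) (hq : 1 < q) (hαq : α < q⁻¹)
    (hφ : AEStronglyMeasurable φ (volume.restrict (Ioo t T))) :
    eLpNorm (fun r => r ^ α * balayage T α t (fun v => v ^ (-α) * φ v) r) (ENNReal.ofReal q)
        (volume.restrict (Ioo 0 t)) ≤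
      ENNReal.ofReal (balayageConst α q) *
        eLpNorm φ (ENNReal.ofReal q) (volume.restrict (Ioo t T)) := by
  have hq0 : 0 < q := one_pos.trans hq
  have hq1 : q⁻¹ < 1 := inv_lt_one_of_one_lt₀ hq
  have hα1 : α < 1 := hαq.trans hq1
  have hbeta := beta_pos hα (sub_pos.2 hα1)
  rw [eLpNorm_eq_lintegral_rpow_enorm_toReal (by simpa using hq0) ENNReal.ofReal_ne_top,
    eLpNorm_eq_lintegral_rpow_enorm_toReal (by simpa using hq0) ENNReal.ofReal_ne_top,
    ENNReal.toReal_ofReal hq0.le, one_div, ENNReal.rpow_inv_le_iff hq0,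
    ENNReal.mul_rpow_of_nonneg _ _ hq0.le, ENNReal.rpow_inv_rpow hq0.ne']
  calc ∫⁻ r in Ioo 0 t, ‖r ^ α * balayage T α t (fun v => v ^ (-α) * φ v) r‖ₑ ^ q
      ≤ ∫⁻ r in Ioo 0 t, ENNReal.ofReal (beta α (1 - α))⁻¹ ^ q *
          (∫⁻ v in Ioo t T, ENNReal.ofReal (hilbertKernel α (t - r) (v - t)) * ‖φ v‖ₑ) ^ q := by
        refine setLIntegral_mono' measurableSet_Ioo fun r hr => ?_
        rw [← ENNReal.mul_rpow_of_nonneg _ _ hq0.le]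
        gcongr
        exact enorm_rpow_mul_balayage_le hα hα1 hr
    _ ≤ ENNReal.ofReal (beta α (1 - α))⁻¹ ^ q *
          (ENNReal.ofReal (beta (q⁻¹ - α) (α + 1 - q⁻¹)) ^ q * ∫⁻ v in Ioo t T, ‖φ v‖ₑ ^ q) := by
        rw [lintegral_const_mul' _ _ (ENNReal.rpow_ne_top_of_nonneg hq0.le ENNReal.ofReal_ne_top)]
        gcongr
        exact lintegral_Ioo_hilbertKernel_sub_mul_rpow_le hq (by linarith) hαq hφ.enorm
    _ = ENNReal.ofReal (balayageConst α q) ^ q * ∫⁻ v in Ioo t T, ‖φ v‖ₑ ^ q := by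
        rw [balayageConst, div_eq_inv_mul, ENNReal.ofReal_mul (inv_nonneg.2 hbeta.le),
          ENNReal.mul_rpow_of_nonneg _ _ hq0.le, mul_assoc]

end Balayage

section Representative

lemma restrict_Icc_restrict_Iio {μ : Measure ℝ} [NullSingletonClass μ] {a b t : ℝ} (htb : t ≤ b) :
    (μ.restrict (Icc a b)).restrict (Iio t) = μ.restrict (Ioo a t) := by
  have hinter : Iio t ∩ Icc a b = Ico a t := by
    ext u
    exact ⟨fun hu => ⟨hu.2.1, hu.1⟩, fun hu => ⟨hu.2, hu.1, hu.2.le.trans htb⟩⟩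
  rw [Measure.restrict_restrict measurableSet_Iio, hinter, restrict_Ioo_eq_restrict_Ico]

lemma restrict_Icc_restrict_Ici {μ : Measure ℝ} [NullSingletonClass μ] {a b t : ℝ} (hat : a ≤ t) :
    (μ.restrict (Icc a b)).restrict (Ici t) = μ.restrict (Ioo t b) := by
  have hinter : Ici t ∩ Icc a b = Icc t b := by
    ext u
    exact ⟨fun hu => ⟨hu.1, hu.2.2⟩, fun hu => ⟨hu.1, hat.trans hu.1, hu.2⟩⟩
  rw [Measure.restrict_restrict measurableSet_Ici, hinter, restrict_Ioo_eq_restrict_Icc]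

variable {T α q t : ℝ} {b φ ψ : ℝ → ℝ}

lemma integrableOn_rpow_neg_mul_of_memLp_two (hα : α < 1 / 2)
    (hφ : MemLp φ 2 (volume.restrict (Icc 0 T))) :
    IntegrableOn (fun s => s ^ (-α) * φ s) (Ioo 0 T) := by
  rcases le_or_gt T 0 with hT | hT
  · simp [Ioo_eq_empty hT.not_gt]
  have hpow : MemLp (fun s : ℝ => s ^ (-α)) 2 (volume.restrict (Ioo 0 T)) := by
    rw [memLp_two_iff_integrable_sq (by fun_prop)]
    refine ((intervalIntegral.integrableOn_Ioo_rpow_iff hT).2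
      (by linarith : -1 < -α * 2)).congr_fun (fun s hs => ?_) measurableSet_Ioo
    exact_mod_cast rpow_mul_natCast hs.1.le (-α) 2
  rw [← restrict_Ioo_eq_restrict_Icc] at hφ
  exact hpow.integrable_mul hφ

lemma fracInt_congr {x : ℝ} {f g : ℝ → ℝ} (h : EqOn f g (Ioo x T)) :
    fracInt T α f x = fracInt T α g x := by
  rw [fracInt, fracInt, setIntegral_congr_fun measurableSet_Ioo fun u hu => by rw [h hu]]

lemma memLambda.ae_eq (hα : 0 < α) (hα2 : α < 1 / 2) (hφ : memLambda T α b φ)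
    (hψ : memLambda T α b ψ) : φ =ᵐ[volume.restrict (Icc 0 T)] ψ := by
  have hfrac : fracInt T α (fun s => s ^ (-α) * φ s) =ᵐ[volume.restrict (Ioo 0 T)]
      fracInt T α (fun s => s ^ (-α) * ψ s) := by
    rw [restrict_Ioo_eq_restrict_Icc]
    filter_upwards [hφ.2, hψ.2, ae_restrict_mem measurableSet_Icc,
      ae_restrict_of_ae (Measure.ae_ne volume 0)] with u huφ huψ huT hu0
    exact mul_left_cancel₀ (rpow_pos_of_pos (huT.1.lt_of_ne' hu0) _).ne' (huφ.symm.trans huψ)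
  have heq := ae_eq_of_fracInt_ae_eq hα (by linarith)
    (integrableOn_rpow_neg_mul_of_memLp_two hα2 hφ.1)
    (integrableOn_rpow_neg_mul_of_memLp_two hα2 hψ.1) hfrac
  rw [← restrict_Ioo_eq_restrict_Icc]
  filter_upwards [heq, ae_restrict_mem measurableSet_Ioo] with s hs hs0
  exact mul_left_cancel₀ (rpow_pos_of_pos hs0.1 _).ne' hs

/-- The representative of `b·1_{[0,t]}`, when `φ` is that of `b`: the closed form of the paper's
`φ_t` obtained by inserting `b(u) = u^α I^α_{T-}(s^{-α} φ)(u)` into its defining integral. -/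
noncomputable def cutoffRep (T α t : ℝ) (φ : ℝ → ℝ) : ℝ → ℝ :=
  (Iio t).indicator fun r => φ r + r ^ α * balayage T α t (fun v => v ^ (-α) * φ v) r

lemma rpow_neg_mul_cutoffRep {r : ℝ} (hr : 0 < r) :
    r ^ (-α) * cutoffRep T α t φ r = (Iio t).indicator
      ((fun v => v ^ (-α) * φ v) + balayage T α t fun v => v ^ (-α) * φ v) r := by
  by_cases hrt : r < t
  · simp [cutoffRep, hrt, mul_add, rpow_neg hr.le, (rpow_pos_of_pos hr α).ne']
  · simp [cutoffRep, hrt]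

lemma memLp_cutoffRep (hα : 0 < α) (hα2 : α < 1 / 2) (ht : 0 ≤ t) (htT : t ≤ T)
    (hφ : MemLp φ 2 (volume.restrict (Icc 0 T))) :
    MemLp (cutoffRep T α t φ) 2 (volume.restrict (Icc 0 T)) := by
  rw [← restrict_Ioo_eq_restrict_Icc] at hφ
  have hhead := hφ.mono_measure (Measure.restrict_mono_set volume (Ioo_subset_Ioo_right htT))
  have htail := hφ.mono_measure (Measure.restrict_mono_set volume (Ioo_subset_Ioo_left ht))
  have hbal := eLpNorm_rpow_mul_balayage_le hα one_lt_two (by simpa using hα2)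
    htail.aestronglyMeasurable
  rw [ENNReal.ofReal_ofNat] at hbal
  rw [cutoffRep, memLp_indicator_iff_restrict measurableSet_Iio, restrict_Icc_restrict_Iio htT]
  exact hhead.add ⟨aestronglyMeasurable_rpow_mul_balayage htail.aestronglyMeasurable _,
    hbal.trans_lt (ENNReal.mul_lt_top ENNReal.ofReal_lt_top htail.2)⟩

lemma memLambda.cutoff (hα : 0 < α) (hα2 : α < 1 / 2) (ht : 0 ≤ t) (htT : t ≤ T)
    (hφ : memLambda T α b φ) :
    memLambda T α (indicator (Icc 0 t) b) (cutoffRep T α t φ) := by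
  refine ⟨memLp_cutoffRep hα hα2 ht htT hφ.1, ?_⟩
  have hint := integrableOn_rpow_neg_mul_of_memLp_two hα2 hφ.1
  have hfrac := hφ.2
  rw [← restrict_Ioo_eq_restrict_Icc] at hfrac ⊢
  filter_upwards [hfrac, ae_integrableOn_mul_sub_rpow hα hint, ae_restrict_mem measurableSet_Ioo,
    ae_restrict_of_ae (Measure.ae_ne volume t)] with u hu hintu huT hut
  rw [fracInt_congr fun r hr => rpow_neg_mul_cutoffRep (huT.1.trans hr.1)]
  rcases lt_or_gt_of_ne hut with hut | htu
  · rw [indicator_of_mem (show u ∈ Icc 0 t from ⟨huT.1.le, hut.le⟩), hu,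
      fracInt_indicator_add_balayage hα (by linarith)
      hut htT (hint.mono_set (Ioo_subset_Ioo_left ht)).aestronglyMeasurable hintu]
  · rw [indicator_of_notMem fun hmem : u ∈ Icc 0 t => hmem.2.not_gt htu,
      fracInt_indicator_Iio_of_le htu.le, mul_zero]

lemma memLambda.ae_eq_cutoffRep (hα : 0 < α) (hα2 : α < 1 / 2) (ht : 0 ≤ t) (htT : t ≤ T)
    (hφ : memLambda T α b φ) (hψ : memLambda T α (indicator (Icc 0 t) b) ψ) :
    ψ =ᵐ[volume.restrict (Icc 0 T)] cutoffRep T α t φ :=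
  hψ.ae_eq hα hα2 (hφ.cutoff hα hα2 ht htT)

lemma memLambda.cutoff_ae_eq_zero (hα : 0 < α) (hα2 : α < 1 / 2) (ht : 0 ≤ t) (htT : t ≤ T)
    (hφ : memLambda T α b φ) (hψ : memLambda T α (indicator (Icc 0 t) b) ψ) :
    ∀ᵐ r ∂volume.restrict (Icc 0 T), t ≤ r → ψ r = 0 := by
  filter_upwards [hφ.ae_eq_cutoffRep hα hα2 ht htT hψ] with r hr htr
  rw [hr, cutoffRep, indicator_of_notMem (notMem_Iio.2 htr)]

lemma memLambda.eLpNorm_sub_cutoff_le (hα : 0 < α) (hα2 : α < 1 / 2) (hq : 1 < q) (hαq : α < q⁻¹)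
    (ht : 0 ≤ t) (htT : t ≤ T) (hφ : memLambda T α b φ)
    (hψ : memLambda T α (indicator (Icc 0 t) b) ψ) :
    eLpNorm (φ - ψ) (ENNReal.ofReal q) (volume.restrict (Icc 0 T)) ≤
      ENNReal.ofReal (1 + balayageConst α q) *
        eLpNorm φ (ENNReal.ofReal q) (volume.restrict (Ioo t T)) := by
  have hφm := hφ.1.aestronglyMeasurable
  have htail : AEStronglyMeasurable φ (volume.restrict (Ioo t T)) := hφm.mono_measure
    (Measure.restrict_mono_set volume ((Ioo_subset_Ioo_left ht).trans Ioo_subset_Icc_self))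
  set g : ℝ → ℝ := fun r => r ^ α * balayage T α t (fun v => v ^ (-α) * φ v) r
  have hdiff : φ - cutoffRep T α t φ = (Ici t).indicator φ - (Iio t).indicator g := by
    ext r
    rcases lt_or_ge r t with hrt | hrt
    · simp [cutoffRep, g, hrt, hrt.not_ge]
    · simp [cutoffRep, hrt, hrt.not_gt]
  calc eLpNorm (φ - ψ) (ENNReal.ofReal q) (volume.restrict (Icc 0 T))
      = eLpNorm ((Ici t).indicator φ - (Iio t).indicator g) (ENNReal.ofReal q)
          (volume.restrict (Icc 0 T)) := by
        rw [← hdiff]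
        exact eLpNorm_congr_ae (.sub (.refl _ _) (hφ.ae_eq_cutoffRep hα hα2 ht htT hψ))
    _ ≤ eLpNorm φ (ENNReal.ofReal q) (volume.restrict (Ioo t T)) +
          eLpNorm g (ENNReal.ofReal q) (volume.restrict (Ioo 0 t)) := by
        rw [← restrict_Icc_restrict_Ici ht, ← restrict_Icc_restrict_Iio htT,
          ← eLpNorm_indicator_eq_eLpNorm_restrict measurableSet_Ici,
          ← eLpNorm_indicator_eq_eLpNorm_restrict measurableSet_Iio]
        exact eLpNorm_sub_le (hφm.indicator measurableSet_Ici)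
          ((aestronglyMeasurable_rpow_mul_balayage htail _).indicator measurableSet_Iio)
          (ENNReal.one_le_ofReal.2 hq.le)
    _ ≤ ENNReal.ofReal (1 + balayageConst α q) *
          eLpNorm φ (ENNReal.ofReal q) (volume.restrict (Ioo t T)) := by
        rw [ENNReal.ofReal_add zero_le_one (balayageConst_nonneg hα hq hαq), ENNReal.ofReal_one,
          add_mul, one_mul]
        gcongr
        exact eLpNorm_rpow_mul_balayage_le hα hq hαq htail

lemma memLambda.eLpNorm_cutoff_le (hα : 0 < α) (hα2 : α < 1 / 2) (hq : 1 < q) (hαq : α < q⁻¹)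
    (ht : 0 ≤ t) (htT : t ≤ T) (hφ : memLambda T α b φ)
    (hψ : memLambda T α (indicator (Icc 0 t) b) ψ) :
    eLpNorm ψ (ENNReal.ofReal q) (volume.restrict (Icc 0 T)) ≤
      ENNReal.ofReal (2 + balayageConst α q) *
        eLpNorm φ (ENNReal.ofReal q) (volume.restrict (Icc 0 T)) := by
  have hφm := hφ.1.aestronglyMeasurable
  have hK := balayageConst_nonneg hα hq hαq
  calc eLpNorm ψ (ENNReal.ofReal q) (volume.restrict (Icc 0 T))
      = eLpNorm (φ - (φ - ψ)) (ENNReal.ofReal q) (volume.restrict (Icc 0 T)) := by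
        rw [sub_sub_cancel]
    _ ≤ eLpNorm φ (ENNReal.ofReal q) (volume.restrict (Icc 0 T)) +
          eLpNorm (φ - ψ) (ENNReal.ofReal q) (volume.restrict (Icc 0 T)) :=
        eLpNorm_sub_le hφm (hφm.sub hψ.1.aestronglyMeasurable)
          (ENNReal.one_le_ofReal.2 hq.le)
    _ ≤ eLpNorm φ (ENNReal.ofReal q) (volume.restrict (Icc 0 T)) +
          ENNReal.ofReal (1 + balayageConst α q) *
            eLpNorm φ (ENNReal.ofReal q) (volume.restrict (Icc 0 T)) := by
        refine add_le_add_right ((hφ.eLpNorm_sub_cutoff_le hα hα2 hq hαq ht htT hψ).trans ?_) _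
        gcongr
        exact (Ioo_subset_Ioo_left ht).trans Ioo_subset_Icc_self
    _ = ENNReal.ofReal (2 + balayageConst α q) *
          eLpNorm φ (ENNReal.ofReal q) (volume.restrict (Icc 0 T)) := by
        have hsum : 2 + balayageConst α q = 1 + (1 + balayageConst α q) := by ring
        rw [hsum, ENNReal.ofReal_add zero_le_one (add_nonneg zero_le_one hK), ENNReal.ofReal_one,
          add_mul, one_mul]

lemma eLpNorm_le_eLpNorm_mul_rpow_measure_of_ae_eq_zero {X E : Type*} [MeasurableSpace X]
    [NormedAddCommGroup E] {μ : Measure X} {f : X → E} {A : Set X} {p q : ENNReal} (hpq : p ≤ q)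
    (hA : MeasurableSet A) (hf : AEStronglyMeasurable f μ) (hzero : ∀ᵐ x ∂μ, x ∉ A → f x = 0) :
    eLpNorm f p μ ≤ eLpNorm f q μ * μ A ^ (1 / p.toReal - 1 / q.toReal) := by
  rw [← eLpNorm_congr_ae (indicator_ae_eq_of_restrict_compl_ae_eq_zero hA
    ((ae_restrict_iff' hA.compl).2 hzero)), eLpNorm_indicator_eq_eLpNorm_restrict hA]
  refine (eLpNorm_le_eLpNorm_mul_rpow_measure_univ hpq hf.restrict).trans ?_
  rw [Measure.restrict_apply_univ]
  gcongr
  exact Measure.restrict_le_self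

lemma eLpNorm_Ioo_le_eLpNorm_mul_rpow_of_ae_eq_zero {E : Type*} [NormedAddCommGroup E] {f : ℝ → E}
    {a b t : ℝ} {p q : ENNReal} (hpq : p ≤ q) (htb : t ≤ b)
    (hf : AEStronglyMeasurable f (volume.restrict (Ioo a b)))
    (hzero : ∀ᵐ r ∂volume.restrict (Ioo a b), t ≤ r → f r = 0) :
    eLpNorm f p (volume.restrict (Ioo a b)) ≤ eLpNorm f q (volume.restrict (Ioo a b)) *
      ENNReal.ofReal (t - a) ^ (1 / p.toReal - 1 / q.toReal) := by
  have hmass : volume.restrict (Ioo a b) (Iio t) = ENNReal.ofReal (t - a) := by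
    rw [Measure.restrict_apply measurableSet_Iio, inter_comm, Ioo_inter_Iio, min_eq_right htb,
      Real.volume_Ioo]
  rw [← hmass]
  refine eLpNorm_le_eLpNorm_mul_rpow_measure_of_ae_eq_zero hpq measurableSet_Iio hf ?_
  simpa only [notMem_Iio] using hzero

lemma rpow_le_rpow_sub_mul_rpow {x y γ δ : ℝ} (hx : 0 ≤ x) (hxy : x ≤ y) (hδ : 0 ≤ δ)
    (hδγ : δ ≤ γ) : x ^ γ ≤ y ^ (γ - δ) * x ^ δ :=
  calc x ^ γ = x ^ (γ - δ) * x ^ δ := by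
        rw [← rpow_add_of_nonneg hx (sub_nonneg.2 hδγ) hδ, sub_add_cancel]
    _ ≤ y ^ (γ - δ) * x ^ δ := by gcongr

lemma memLambda.eLpNorm_cutoff_sub_cutoff_le {p s : ℝ} {φs φt : ℝ → ℝ} (hα : 0 < α) (hp : 2 ≤ p)
    (hαp : α < p⁻¹) (hs : 0 ≤ s) (hst : s ≤ t) (htT : t ≤ T) (hφ : memLambda T α b φ)
    (hφs : memLambda T α (indicator (Icc 0 s) b) φs)
    (hφt : memLambda T α (indicator (Icc 0 t) b) φt) :
    eLpNorm (φt - φs) 2 (volume.restrict (Icc 0 T)) ≤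
      ENNReal.ofReal (1 + balayageConst α 2) * (ENNReal.ofReal (2 + balayageConst α p) *
        eLpNorm φ (ENNReal.ofReal p) (volume.restrict (Icc 0 T)) *
          ENNReal.ofReal ((t - s) ^ (1 / 2 - 1 / p))) := by
  have hα2 : α < 2⁻¹ := hαp.trans_le (inv_anti₀ two_pos hp)
  have hα2' : α < 1 / 2 := by rwa [one_div]
  have ht : 0 ≤ t := hs.trans hst
  have hcutoff : memLambda T α (indicator (Icc 0 s) (indicator (Icc 0 t) b)) φs := by
    rwa [indicator_indicator, inter_eq_left.2 (Icc_subset_Icc_right hst)]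
  have hsub : Ioo s T ⊆ Icc 0 T := (Ioo_subset_Ioo_left hs).trans Ioo_subset_Icc_self
  have hzero := ae_restrict_of_ae_restrict_of_subset hsub (hφ.cutoff_ae_eq_zero hα hα2' ht htT hφt)
  have hholder : eLpNorm φt 2 (volume.restrict (Ioo s T)) ≤
      eLpNorm φt (ENNReal.ofReal p) (volume.restrict (Icc 0 T)) *
        ENNReal.ofReal ((t - s) ^ (1 / 2 - 1 / p)) := by
    have h := eLpNorm_Ioo_le_eLpNorm_mul_rpow_of_ae_eq_zero (p := 2) (q := ENNReal.ofReal p)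
      (by simpa using ENNReal.ofReal_le_ofReal hp) htT
      (hφt.1.aestronglyMeasurable.mono_measure (Measure.restrict_mono_set volume hsub)) hzero
    rw [ENNReal.toReal_ofReal (by linarith), ENNReal.toReal_ofNat,
      ENNReal.ofReal_rpow_of_nonneg (sub_nonneg.2 hst)
        (sub_nonneg.2 (one_div_le_one_div_of_le two_pos hp))] at h
    refine h.trans ?_
    gcongr
  calc eLpNorm (φt - φs) 2 (volume.restrict (Icc 0 T))
      ≤ ENNReal.ofReal (1 + balayageConst α 2) * eLpNorm φt 2 (volume.restrict (Ioo s T)) := by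
        simpa only [ENNReal.ofReal_ofNat] using
          hφt.eLpNorm_sub_cutoff_le hα hα2' one_lt_two hα2 hs (hst.trans htT) hcutoff
    _ ≤ _ := by
        gcongr
        refine hholder.trans ?_
        gcongr
        exact hφ.eLpNorm_cutoff_le hα hα2' (by linarith) hαp ht htT hφt

end Representative

theorem rep_holder_bound_general (T α p : ℝ) (hT : 0 < T) (hα : 0 < α)
    (hp : p ∈ Set.Ico 2 (1 / α)) (δ : ℝ) (hδ0 : 0 ≤ δ) (hδ : δ ≤ (p - 2) / (2 * p)) :
    ∃ C : ℝ, 0 < C ∧ ∀ b φb : ℝ → ℝ, memLambda T α b φb →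
      MemLp φb (ENNReal.ofReal p) (volume.restrict (Set.Icc 0 T)) →
      ∀ s t : ℝ, 0 ≤ s → s ≤ t → t ≤ T →
      ∀ φs φt : ℝ → ℝ,
        memLambda T α (Set.indicator (Set.Icc 0 s) b) φs →
        memLambda T α (Set.indicator (Set.Icc 0 t) b) φt →
        eLpNorm (fun x => φt x - φs x) 2 (volume.restrict (Set.Icc 0 T)) ≤
          ENNReal.ofReal (C *
            (eLpNorm φb (ENNReal.ofReal p) (volume.restrict (Set.Icc 0 T))).toReal *
            (t - s) ^ δ) := by
  obtain ⟨hp2, hpα⟩ := hp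
  have hp0 : 0 < p := by linarith
  have hαp : α < p⁻¹ := by simpa using (lt_one_div hp0 hα).1 hpα
  have hα2 : α < 2⁻¹ := hαp.trans_le (inv_anti₀ two_pos hp2)
  have hγ : (p - 2) / (2 * p) = 1 / 2 - 1 / p := by field_simp
  rw [hγ] at hδ
  have hK₂ := balayageConst_nonneg hα one_lt_two hα2
  have hKp := balayageConst_nonneg hα (by linarith) hαp
  refine ⟨(1 + balayageConst α 2) * (2 + balayageConst α p) * T ^ (1 / 2 - 1 / p - δ),
    by positivity, fun b φb hb hbp s t hs hst htT φs φt hφs hφt => ?_⟩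
  refine (hb.eLpNorm_cutoff_sub_cutoff_le hα hp2 hαp hs hst htT hφs hφt).trans ?_
  rw [← ENNReal.ofReal_toReal hbp.eLpNorm_ne_top, ENNReal.toReal_ofReal ENNReal.toReal_nonneg,
    ← ENNReal.ofReal_mul (by positivity), ← ENNReal.ofReal_mul (by positivity),
    ← ENNReal.ofReal_mul (by positivity)]
  refine ENNReal.ofReal_le_ofReal ?_
  have hpow := rpow_le_rpow_sub_mul_rpow (sub_nonneg.2 hst) (by linarith : t - s ≤ T) hδ0 hδ
  set N := (eLpNorm φb (ENNReal.ofReal p) (volume.restrict (Icc 0 T))).toReal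
  calc (1 + balayageConst α 2) * ((2 + balayageConst α p) * N * (t - s) ^ (1 / 2 - 1 / p))
      ≤ (1 + balayageConst α 2) *
          ((2 + balayageConst α p) * N * (T ^ (1 / 2 - 1 / p - δ) * (t - s) ^ δ)) :=
        mul_le_mul_of_nonneg_left (mul_le_mul_of_nonneg_left hpow
          (mul_nonneg (by positivity) ENNReal.toReal_nonneg)) (by positivity)
    _ = _ := by ring

/-- Lemma 4.9.1 (case `n = 1`): Hölder estimate for the representatives of
`b·1_{[0,t]}`.  For every `δ < min((p-2)/(2p), α, (1-αp)/p)` there is a constant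
`C_δ = C(α,p,δ,T)` with `‖φ_t − φ_s‖_{L²} ≤ C_δ ‖φ_b‖_{L^p} (t-s)^δ` for `0 ≤ s ≤ t ≤ T`. -/
theorem rep_holder_bound (T α p : ℝ) (hT : 0 < T) (hα : α ∈ Set.Ioo (0 : ℝ) (1 / 2))
    (hp : p ∈ Set.Ioo 2 (1 / α)) (δ : ℝ) (hδ0 : 0 < δ)
    (hδ : δ < min (min ((p - 2) / (2 * p)) α) ((1 - α * p) / p)) :
    ∃ C : ℝ, 0 < C ∧ ∀ b φb : ℝ → ℝ, memLambda T α b φb →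
      MemLp φb (ENNReal.ofReal p) (volume.restrict (Set.Icc 0 T)) →
      ∀ s t : ℝ, 0 ≤ s → s ≤ t → t ≤ T →
      ∀ φs φt : ℝ → ℝ,
        memLambda T α (Set.indicator (Set.Icc 0 s) b) φs →
        memLambda T α (Set.indicator (Set.Icc 0 t) b) φt →
        eLpNorm (fun x => φt x - φs x) 2 (volume.restrict (Set.Icc 0 T)) ≤
          ENNReal.ofReal (C *
            (eLpNorm φb (ENNReal.ofReal p) (volume.restrict (Set.Icc 0 T))).toReal *
            (t - s) ^ δ) := by
  exact rep_holder_bound_general T α p hT hα.1 (Ioo_subset_Ico_self hp) δ hδ0.le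
    (hδ.le.trans ((min_le_left _ _).trans (min_le_left _ _)))
end
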